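/- arXiv:1903.03197 — 4 statements merged into one kernel-verified Lean document; each statement's English description precedes it below -/
import Mathlib

section
/- Let T be a reduced well-indumatched tree with at least 5 vertices. Then the set of all good pendant edges of T forms a maximal induced matching of T. -/
open SimpleGraph

/-- `M` is an induced matching of `G`: a set of edges of `G` such that no two distinct
edges of `M` share an endpoint or have endpoints joined by an edge of `G`. -/
def IsInducedMatching {V : Type*} (G : SimpleGraph V) (M : Set (Sym2 V)) : Prop :=
  M ⊆ G.edgeSet ∧
    ∀ e ∈ M, ∀ f ∈ M, e ≠ f → ∀ u ∈ e, ∀ v ∈ f, u ≠ v ∧ ¬ G.Adj u v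

/-- `M` is a maximal induced matching of `G`. -/
def IsMaximalInducedMatching {V : Type*} (G : SimpleGraph V) (M : Set (Sym2 V)) : Prop :=
  IsInducedMatching G M ∧
    ∀ N : Set (Sym2 V), IsInducedMatching G N → M ⊆ N → N = M

/-- `G` is well-indumatched: all of its maximal induced matchings have the same size. -/
def WellIndumatched {V : Type*} (G : SimpleGraph V) : Prop :=
  ∀ M N : Set (Sym2 V), IsMaximalInducedMatching G M → IsMaximalInducedMatching G N →
    M.ncard = N.ncard

/-- A graph is reduced if no two distinct vertices have the same open neighborhood. -/
def Reduced {V : Type*} (G : SimpleGraph V) : Prop :=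
  ∀ x y : V, G.neighborSet x = G.neighborSet y → x = y

/-- The set of good pendant edges of `G`: edges joining a vertex of degree `1` to a
vertex of degree `2`. -/
def goodPendantEdges {V : Type*} [Fintype V] (G : SimpleGraph V) [DecidableRel G.Adj] :
    Set (Sym2 V) :=
  {e | e ∈ G.edgeSet ∧ ∃ x y : V, e = s(x, y) ∧ G.degree x = 1 ∧ G.degree y = 2}


section helpers

variable {V : Type*} {G : SimpleGraph V}

lemma aux_closed (hc : G.Connected) (S : Set V) (a : V) (ha : a ∈ S)
    (hS : ∀ u ∈ S, ∀ v, G.Adj u v → v ∈ S) (b : V) : b ∈ S := by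
  obtain ⟨p⟩ := hc a b
  induction p with
  | nil => exact ha
  | cons h p ih => exact ih (hS _ ha _ h)

lemma aux_parent_unique (hT : G.IsTree) (r : V) {a b b' : V} (h : G.Adj b a) (h' : G.Adj b' a)
    (hd : G.dist r a = G.dist r b + 1) (hd' : G.dist r a = G.dist r b' + 1) : b = b' := by
  obtain ⟨p, hp⟩ := hT.connected.exists_walk_length_eq_dist r b
  obtain ⟨p', hp'⟩ := hT.connected.exists_walk_length_eq_dist r b'
  have h1 : (p.concat h).IsPath := Walk.isPath_of_length_eq_dist _ (by simp [hp, hd])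
  have h2 : (p'.concat h').IsPath := Walk.isPath_of_length_eq_dist _ (by simp [hp', hd'])
  have := (hT.existsUnique_path r a).unique h1 h2
  have h3 := congrArg Walk.penultimate this
  simpa using h3

lemma aux_parent_exists (hT : G.IsTree) (r : V) {a : V} (ha : a ≠ r) :
    ∃ b, G.Adj b a ∧ G.dist r a = G.dist r b + 1 := by
  obtain ⟨p, hp⟩ := hT.connected.exists_walk_length_eq_dist r a
  have hn : ¬ p.Nil := fun h => ha h.eq.symm
  refine ⟨p.penultimate, p.adj_penultimate hn, ?_⟩
  have hadj := p.adj_penultimate hn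
  rcases hT.dist_eq_dist_add_one_of_adj r hadj with h | h
  · have h1 := dist_le p.dropLast
    have h2 : p.dropLast.length + 1 = p.length := Walk.length_dropLast_add_one hn
    omega
  · exact h


lemma aux_orient (hT : G.IsTree) (r : V) {e : Sym2 V} (he : e ∈ G.edgeSet) :
    ∃ x y, e = s(x, y) ∧ G.Adj x y ∧ G.dist r x = G.dist r y + 1 := by
  induction e with
  | h a b =>
    rcases hT.dist_eq_dist_add_one_of_adj r he with h | h
    · exact ⟨a, b, rfl, he, h⟩
    · exact ⟨b, a, Sym2.eq_swap, SimpleGraph.Adj.symm he, h⟩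

lemma aux_cover [Finite V] (hT : G.IsTree) (r : V) :
    ∀ n : ℕ, ∀ R : Set (Sym2 V), R.ncard = n → R ⊆ G.edgeSet →
    ∃ (I : Set (Sym2 V)) (k : Sym2 V → V × V), I ⊆ R ∧ IsInducedMatching G I ∧
      (∀ i ∈ I, G.Adj (k i).1 (k i).2) ∧
      ∀ f ∈ R, ∃ i ∈ I, (k i).1 ∈ f ∨ (k i).2 ∈ f := by
  classical
  intro n
  induction n using Nat.strong_induction_on with
  | _ n ih =>
  intro R hn hR
  rcases R.eq_empty_or_nonempty with rfl | hne
  · exact ⟨∅, fun _ => (r, r), by simp, ⟨by simp, by simp⟩, by simp, by simp⟩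
  have hdef : ∀ e : Sym2 V, ∃ d : ℕ, e ∈ G.edgeSet → ∃ x y, e = s(x, y) ∧ G.Adj x y ∧
      G.dist r x = G.dist r y + 1 ∧ d = G.dist r x := by
    intro e
    by_cases he : e ∈ G.edgeSet
    · obtain ⟨x, y, h1, h2, h3⟩ := aux_orient hT r he
      exact ⟨_, fun _ => ⟨x, y, h1, h2, h3, rfl⟩⟩
    · exact ⟨0, fun h => absurd h he⟩
  choose d hd using hdef
  obtain ⟨e, heR, hmax⟩ := Set.exists_max_image R d R.toFinite hne
  obtain ⟨x, y, rfl, hxy, hdxy, hde⟩ := hd e (hR heR)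

  obtain ⟨z, hyz, hz⟩ : ∃ z, G.Adj y z ∧ ∀ c, G.Adj c y → G.dist r y = G.dist r c + 1 → c = z := by
    by_cases hyr : y = r
    · subst hyr
      refine ⟨x, hxy.symm, fun c _ hc => ?_⟩
      simp at hc
    · obtain ⟨z, hz1, hz2⟩ := aux_parent_exists hT r hyr
      exact ⟨z, hz1.symm, fun c hc1 hc2 => aux_parent_unique hT r hc1 hz1 hc2 hz2⟩
  set R' : Set (Sym2 V) := {f ∈ R | y ∉ f ∧ z ∉ f} with hR'
  have hlt : R'.ncard < n := by
    rw [← hn]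
    refine Set.ncard_lt_ncard ⟨fun f hf => hf.1, fun h => ?_⟩ R.toFinite
    have := (h heR).2.1
    simp at this
  obtain ⟨I, k, hI1, hI2, hI3, hI4⟩ := ih _ hlt R' rfl (fun f hf => hR hf.1)
  have hkey : ∀ f ∈ R', ∀ u ∈ f, ∀ v ∈ s(x, y), u ≠ v ∧ ¬ G.Adj u v := by
    intro f hf u hu v hv
    obtain ⟨a, b, rfl, hab, hdab, hdf⟩ := hd f (hR hf.1)
    have hle := hmax _ hf.1
    have hfy := hf.2.1
    have hfz := hf.2.2
    have hny : ∀ u ∈ s(a, b), ¬ G.Adj u y := by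
      intro u hu huy
      rcases hT.dist_eq_dist_add_one_of_adj r huy with h | h
      · have hu' : u = a ∨ u = b := by simpa using hu
        rcases hu' with rfl | rfl
        · have := aux_parent_unique hT r hab.symm huy.symm hdab h
          subst this; simp at hfy
        · omega
      · have := hz u huy h
        subst this; exact hfz hu
    have hv' : v = x ∨ v = y := by simpa using hv
    rcases hv' with rfl | rfl
    · refine ⟨?_, ?_⟩
      · rintro rfl; exact hny _ hu hxy
      · intro h
        have hu' : u = a ∨ u = b := by simpa using hu
        rcases hT.dist_eq_dist_add_one_of_adj r h with h1 | h1
        · rcases hu' with rfl | rfl <;> omega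
        · have := aux_parent_unique hT r h hxy.symm h1 hdxy
          subst this; exact hfy hu
    · exact ⟨by rintro rfl; exact hfy hu, hny _ hu⟩
  have hnot : s(x, y) ∉ I := fun h => by
    have := (hI1 h).2.1
    simp at this
  refine ⟨insert s(x, y) I, Function.update k s(x, y) (y, z), ?_, ⟨?_, ?_⟩, ?_, ?_⟩
  · exact Set.insert_subset heR (fun f hf => (hI1 hf).1)
  · exact Set.insert_subset (hR heR) hI2.1
  · rintro f (rfl | hf) g (rfl | hg) hfg u hu v hv
    · exact absurd rfl hfg
    · have := hkey g (hI1 hg) v hv u hu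
      exact ⟨this.1.symm, fun h => this.2 h.symm⟩
    · exact hkey f (hI1 hf) u hu v hv
    · exact hI2.2 f hf g hg hfg u hu v hv
  · rintro i (rfl | hi)
    · simpa using hyz
    · rw [Function.update_of_ne (by rintro rfl; exact hnot hi)]
      exact hI3 i hi
  · intro f hf
    by_cases h : y ∈ f ∨ z ∈ f
    · exact ⟨s(x, y), by simp, by simpa using h⟩
    · push Not at h
      obtain ⟨i, hi, hi'⟩ := hI4 f ⟨hf, h⟩
      refine ⟨i, Or.inr hi, ?_⟩
      rw [Function.update_of_ne (by rintro rfl; exact hnot hi)]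
      exact hi'


lemma aux_touch {M : Set (Sym2 V)} (hM : IsInducedMatching G M) {y z : V} (hyz : G.Adj y z)
    {e f : Sym2 V} (he : e ∈ M) (hf : f ∈ M) (h1 : y ∈ e ∨ z ∈ e) (h2 : y ∈ f ∨ z ∈ f) :
    e = f := by
  by_contra hne
  have := hM.2 e he f hf hne
  rcases h1 with h1 | h1 <;> rcases h2 with h2 | h2
  · exact (this _ h1 _ h2).1 rfl
  · exact (this _ h1 _ h2).2 hyz
  · exact (this _ h1 _ h2).2 hyz.symm
  · exact (this _ h1 _ h2).1 rfl

lemma aux_extend [Finite V] {M : Set (Sym2 V)} (hM : IsInducedMatching G M) :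
    ∃ N, M ⊆ N ∧ IsMaximalInducedMatching G N := by
  obtain ⟨N, hMN, hN⟩ := Finite.exists_le_maximal (p := fun N => IsInducedMatching G N) hM
  exact ⟨N, hMN, hN.1, fun N' h1 h2 => (Set.Subset.antisymm h2 (hN.2 h1 h2)).symm⟩


lemma aux_strong [Finite V] (hT : G.IsTree) (hW : WellIndumatched G) {e : Sym2 V}
    (he : e ∈ G.edgeSet) :
    ∃ y z, G.Adj y z ∧ (y ∈ e ∨ z ∈ e) ∧
      ∀ M, IsMaximalInducedMatching G M → ∃ g ∈ M, y ∈ g ∨ z ∈ g := by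
  obtain ⟨r⟩ := hT.connected.nonempty
  obtain ⟨I, k, -, hI, hk, hcov⟩ := aux_cover hT r _ G.edgeSet rfl subset_rfl
  have hφ : ∀ f : Sym2 V, ∃ i, f ∈ G.edgeSet → i ∈ I ∧ ((k i).1 ∈ f ∨ (k i).2 ∈ f) := by
    intro f
    by_cases hf : f ∈ G.edgeSet
    · obtain ⟨i, h⟩ := hcov f hf
      exact ⟨i, fun _ => h⟩
    · exact ⟨f, fun h => absurd h hf⟩
  choose φ hφ using hφ
  have hinj : ∀ M, IsInducedMatching G M → Set.InjOn φ M := by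
    intro M hM a ha b hb hab
    have h1 := hφ a (hM.1 ha)
    have h2 := hφ b (hM.1 hb)
    rw [← hab] at h2
    exact aux_touch hM (hk _ h1.1) ha hb h1.2 h2.2
  have hsub : ∀ M, IsInducedMatching G M → φ '' M ⊆ I := by
    rintro M hM _ ⟨a, ha, rfl⟩
    exact (hφ a (hM.1 ha)).1
  have hle : ∀ M, IsInducedMatching G M → M.ncard ≤ I.ncard := by
    intro M hM
    rw [← Set.InjOn.ncard_image (hinj M hM)]
    exact Set.ncard_le_ncard (hsub M hM) I.toFinite
  have hImax : IsMaximalInducedMatching G I :=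
    ⟨hI, fun N hN hIN => (Set.eq_of_subset_of_ncard_le hIN (hle N hN) N.toFinite).symm⟩
  refine ⟨(k (φ e)).1, (k (φ e)).2, hk _ (hφ e he).1, (hφ e he).2, fun M hM => ?_⟩
  have hEq : φ '' M = I := by
    refine Set.eq_of_subset_of_ncard_le (hsub M hM.1) ?_ I.toFinite
    rw [Set.InjOn.ncard_image (hinj M hM.1), hW M I hM hImax]
  obtain ⟨g, hg, hgi⟩ : φ e ∈ φ '' M := hEq ▸ (hφ e he).1
  exact ⟨g, hg, hgi ▸ (hφ g (hM.1.1 hg)).2⟩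

lemma aux_pair (hT : G.IsTree) {y z p w q w' : V} (hyz : G.Adj y z)
    (hp : G.Adj y p) (hpz : p ≠ z) (hw : G.Adj p w) (hwy : w ≠ y)
    (hq : G.Adj z q) (hqy : q ≠ y) (hw' : G.Adj q w') (hwz' : w' ≠ z) :
    w ≠ z ∧ w' ≠ y ∧ ∀ u ∈ s(p, w), ∀ v ∈ s(q, w'), u ≠ v ∧ ¬ G.Adj u v := by
  have hb := isBridge_iff.1 (isAcyclic_iff_forall_adj_isBridge.1 hT.isAcyclic hyz)
  set H := G.deleteEdges {s(y, z)} with hH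
  have hadj : ∀ {a b}, G.Adj a b → s(a, b) ≠ s(y, z) → H.Adj a b := by
    intro a b h1 h2
    simp [hH, deleteEdges_adj, h1]
    simpa using h2
  have r1 : H.Reachable y p := (hadj hp (by grind [hp.ne, hyz.ne])).reachable
  have r2 : H.Reachable y w := r1.trans (hadj hw (by grind [hp.ne, hyz.ne])).reachable
  have r3 : H.Reachable z q := (hadj hq (by grind [hq.ne, hyz.ne])).reachable
  have r4 : H.Reachable z w' := r3.trans (hadj hw' (by grind [hq.ne, hyz.ne])).reachable
  refine ⟨by rintro rfl; exact hb r2, by rintro rfl; exact hb r4.symm, ?_⟩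
  intro u hu v hv
  have hu1 : H.Reachable y u ∧ u ≠ y := by
    rcases (by simpa using hu : u = p ∨ u = w) with rfl | rfl
    · exact ⟨r1, hp.ne.symm⟩
    · exact ⟨r2, hwy⟩
  have hv1 : H.Reachable z v := by
    rcases (by simpa using hv : v = q ∨ v = w') with rfl | rfl
    · exact r3
    · exact r4
  refine ⟨by rintro rfl; exact hb (hu1.1.trans hv1.symm), fun h => ?_⟩
  by_cases hs : s(u, v) = s(y, z)
  · rcases Sym2.eq_iff.1 hs with ⟨h1, -⟩ | ⟨h1, -⟩
    · exact hu1.2 h1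
    · exact hb (h1 ▸ hu1.1)
  · exact hb ((hu1.1.trans (hadj h hs).reachable).trans hv1.symm)

lemma aux_isIM_singleton {a b : V} (h : G.Adj a b) : IsInducedMatching G {s(a, b)} := by
  refine ⟨by simpa using h, ?_⟩
  rintro e rfl f rfl hne
  exact absurd rfl hne


lemma aux_nonleaf [Fintype V] (hred : Reduced G) (hT : G.IsTree) (hcard : 5 ≤ Fintype.card V)
    {y z : V} (hyz : G.Adj y z)
    (hst : ∀ M, IsMaximalInducedMatching G M → ∃ g ∈ M, y ∈ g ∨ z ∈ g) :
    ∃ p, G.Adj y p ∧ p ≠ z := by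
  classical
  by_contra hno
  push Not at hno
  have hq : ∃ q, G.Adj z q ∧ q ≠ y := by
    by_contra h
    push Not at h
    have : ∀ b, b ∈ ({y, z} : Finset V) := by
      intro b
      have := aux_closed hT.connected {y, z} y (by simp) (by
        rintro u (rfl | rfl) v huv
        · exact Or.inr (hno v huv)
        · exact Or.inl (h v huv)) b
      simpa using this
    have h1 : Fintype.card V ≤ ({y, z} : Finset V).card := by
      rw [← Finset.card_univ]; exact Finset.card_le_card fun b _ => this b
    have h2 : ({y, z} : Finset V).card ≤ 2 := Finset.card_le_two
    omega
  obtain ⟨q, hzq, hqy⟩ := hq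
  have hw : ∃ w, G.Adj q w ∧ w ≠ z := by
    by_contra h
    push Not at h
    refine hqy (hred q y ?_)
    ext v
    simp only [mem_neighborSet]
    refine ⟨fun hv => ?_, fun hv => ?_⟩
    · rw [h v hv]; exact hyz
    · rw [hno v hv]; exact hzq.symm
  obtain ⟨w, hqw, hwz⟩ := hw
  obtain ⟨M, hSM, hM⟩ := aux_extend (aux_isIM_singleton hqw)
  obtain ⟨g, hg, hyg⟩ := hst M hM
  have hzg : z ∈ g := by
    rcases hyg with h | h
    · have hge := hM.1.1 hg
      obtain ⟨c, rfl⟩ := h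
      have := hno c hge
      subst this; simp
    · exact h
  have := aux_touch hM.1 hzq hg (hSM rfl) (Or.inl hzg) (Or.inr (by simp))
  subst this
  rcases (by simpa using hzg : z = q ∨ z = w) with h | h
  · exact hzq.ne h
  · exact hwz h.symm

lemma aux_good [Fintype V] [DecidableRel G.Adj] (hred : Reduced G) {y z p : V}
    (hyz : G.Adj y z) (hp : G.Adj y p) (hpz : p ≠ z)
    (h : ∀ p, G.Adj y p → p ≠ z → ∀ w, G.Adj p w → w = y) : s(p, y) ∈ goodPendantEdges G := by
  classical
  refine ⟨hp.symm, p, y, rfl, ?_, ?_⟩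
  · rw [degree_eq_one_iff_existsUnique_adj]
    exact ⟨y, hp.symm, fun w hw => h p hp hpz w hw⟩
  · rw [← card_neighborFinset_eq_degree, Finset.card_eq_two]
    refine ⟨p, z, hpz, ?_⟩
    ext v
    simp only [mem_neighborFinset, Finset.mem_insert, Finset.mem_singleton]
    refine ⟨fun hv => ?_, ?_⟩
    · by_contra hcon
      push Not at hcon
      refine hcon.1 (hred v p ?_)
      ext w
      simp only [mem_neighborSet]
      refine ⟨fun hw => ?_, fun hw => ?_⟩
      · rw [h v hv hcon.2 w hw]; exact hp.symm
      · rw [h p hp hpz w hw]; exact hv.symm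
    · rintro (rfl | rfl)
      · exact hp
      · exact hyz

lemma aux_strong_good [Fintype V] [DecidableRel G.Adj] (hred : Reduced G) (hT : G.IsTree)
    (hcard : 5 ≤ Fintype.card V) {y z : V} (hyz : G.Adj y z)
    (hst : ∀ M, IsMaximalInducedMatching G M → ∃ g ∈ M, y ∈ g ∨ z ∈ g) :
    ∃ f ∈ goodPendantEdges G, y ∈ f ∨ z ∈ f := by
  obtain ⟨p0, hp0, hp0z⟩ := aux_nonleaf hred hT hcard hyz hst
  obtain ⟨q0, hq0, hq0y⟩ := aux_nonleaf hred hT hcard hyz.symm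
    (fun M hM => by obtain ⟨g, hg, h⟩ := hst M hM; exact ⟨g, hg, h.symm⟩)
  by_cases h1 : ∀ p, G.Adj y p → p ≠ z → ∀ w, G.Adj p w → w = y
  · exact ⟨_, aux_good hred hyz hp0 hp0z h1, Or.inl (by simp)⟩
  by_cases h2 : ∀ p, G.Adj z p → p ≠ y → ∀ w, G.Adj p w → w = z
  · exact ⟨_, aux_good hred hyz.symm hq0 hq0y h2, Or.inr (by simp)⟩
  exfalso
  push Not at h1 h2
  obtain ⟨p, hp, hpz, w, hw, hwy⟩ := h1
  obtain ⟨q, hq, hqy, w', hw', hwz'⟩ := h2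
  obtain ⟨a1, a2, a3⟩ := aux_pair hT hyz hp hpz hw hwy hq hqy hw' hwz'
  have hS : IsInducedMatching G {s(p, w), s(q, w')} := by
    refine ⟨?_, ?_⟩
    · rintro e (rfl | rfl)
      · exact hw
      · exact hw'
    · rintro e (rfl | rfl) f (rfl | rfl) hne u hu v hv
      · exact absurd rfl hne
      · exact a3 u hu v hv
      · have := a3 v hv u hu
        exact ⟨this.1.symm, fun h => this.2 h.symm⟩
      · exact absurd rfl hne
  obtain ⟨M, hSM, hM⟩ := aux_extend hS
  obtain ⟨g, hg, hyg⟩ := hst M hM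
  rcases hyg with hyg | hzg
  · have := aux_touch hM.1 hp hg (hSM (Or.inl rfl)) (Or.inl hyg) (Or.inr (by simp))
    subst this
    rcases (by simpa using hyg : y = p ∨ y = w) with h | h
    · exact hp.ne h
    · exact hwy h.symm
  · have := aux_touch hM.1 hq hg (hSM (Or.inr rfl)) (Or.inl hzg) (Or.inr (by simp))
    subst this
    rcases (by simpa using hzg : z = q ∨ z = w') with h | h
    · exact hq.ne h
    · exact hwz' h.symm

lemma aux_good_data [Fintype V] [DecidableRel G.Adj] {e : Sym2 V}
    (he : e ∈ goodPendantEdges G) : ∃ x y c, e = s(x, y) ∧ G.Adj x y ∧ x ≠ c ∧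
      (∀ v, G.Adj x v → v = y) ∧ ∀ v, G.Adj y v ↔ v = x ∨ v = c := by
  classical
  obtain ⟨hE, x, y, rfl, hx, hy⟩ := he
  have hxy : G.Adj x y := hE
  rw [degree_eq_one_iff_existsUnique_adj] at hx
  rw [← card_neighborFinset_eq_degree, Finset.card_eq_two] at hy
  obtain ⟨a, b, hab, hN⟩ := hy
  have hN' : ∀ v, G.Adj y v ↔ v = a ∨ v = b := by
    intro v
    rw [← mem_neighborFinset, hN]; simp
  have hx' : ∀ v, G.Adj x v → v = y := fun v hv => hx.unique hv hxy
  rcases (hN' x).1 hxy.symm with rfl | rfl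
  · exact ⟨x, y, b, rfl, hxy, hab, hx', hN'⟩
  · exact ⟨x, y, a, rfl, hxy, hab.symm, hx', fun v => (hN' v).trans or_comm⟩

lemma aux_good_IM [Fintype V] [DecidableRel G.Adj] (hred : Reduced G) (hT : G.IsTree)
    (hcard : 5 ≤ Fintype.card V) : IsInducedMatching G (goodPendantEdges G) := by
  classical
  refine ⟨fun e he => he.1, ?_⟩
  intro e he f hf hne
  obtain ⟨x, y, c, rfl, hxy, hxc, hx, hy⟩ := aux_good_data he
  obtain ⟨x', y', c', rfl, hxy', hxc', hx', hy'⟩ := aux_good_data hf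
  have hyc : G.Adj y c := (hy c).2 (Or.inr rfl)
  have hyc' : G.Adj y' c' := (hy' c').2 (Or.inr rfl)
  have hyy : y ≠ y' := by
    rintro rfl
    have : x = x' := hred x x' (by
      ext v
      simp only [mem_neighborSet]
      refine ⟨fun h => ?_, fun h => ?_⟩
      · rw [hx v h]; exact hxy'
      · rw [hx' v h]; exact hxy)
    subst this
    exact hne rfl
  have hxx : x ≠ x' := by
    rintro rfl
    exact hyy (hx' y hxy)
  have hxy2 : x ≠ y' := by
    rintro rfl
    have h1 := hx _ hyc'
    have h2 := hx _ hxy'.symm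
    exact hxc' (h2.trans h1.symm)
  have hxy3 : x' ≠ y := by
    rintro rfl
    have h1 := hx' _ hyc
    have h2 := hx' _ hxy.symm
    exact hxc (h2.trans h1.symm)
  have hnyy : ¬ G.Adj y y' := by
    intro h
    have hall : ∀ b, b ∈ ({x, y, x', y'} : Finset V) := by
      intro b
      have hc : c = y' := by
        rcases (hy y').1 h with h1 | h1
        · exact absurd h1.symm hxy2
        · exact h1.symm
      have hc' : c' = y := by
        rcases (hy' y).1 h.symm with h1 | h1
        · exact absurd h1.symm hxy3
        · exact h1.symm
      have := aux_closed hT.connected {x, y, x', y'} x (by simp) (by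
        rintro u (rfl | rfl | rfl | rfl) v huv
        · simp [hx v huv]
        · rcases (hy v).1 huv with rfl | rfl <;> simp [hc]
        · simp [hx' v huv]
        · rcases (hy' v).1 huv with rfl | rfl <;> simp [hc']) b
      simpa using this
    have h1 : Fintype.card V ≤ ({x, y, x', y'} : Finset V).card := by
      rw [← Finset.card_univ]; exact Finset.card_le_card fun b _ => hall b
    have h2 : ({x, y, x', y'} : Finset V).card ≤ 4 := Finset.card_le_four
    omega
  intro u hu v hv
  rcases (by simpa using hu : u = x ∨ u = y) with rfl | rfl <;>
    rcases (by simpa using hv : v = x' ∨ v = y') with rfl | rfl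
  · exact ⟨hxx, fun h => hxy3 (hx _ h)⟩
  · exact ⟨hxy2, fun h => hyy (hx _ h).symm⟩
  · exact ⟨hxy3.symm, fun h => hyy (hx' _ h.symm)⟩
  · exact ⟨hyy, hnyy⟩

end helpers

/-- In a reduced well-indumatched tree on at least `5` vertices, the set of good pendant
edges forms a maximal induced matching. -/
theorem stmt_8 {V : Type*} [Fintype V] (G : SimpleGraph V) [DecidableRel G.Adj]
    (hred : Reduced G) (hWIM : WellIndumatched G) (htree : G.IsTree)
    (hcard : 5 ≤ Fintype.card V) :
    IsMaximalInducedMatching G (goodPendantEdges G) := by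
  refine ⟨aux_good_IM hred htree hcard, fun N hN hsub => Set.Subset.antisymm ?_ hsub⟩
  intro e he
  obtain ⟨y, z, hyz, hye, hst⟩ := aux_strong htree hWIM (hN.1 he)
  obtain ⟨f, hf, hyf⟩ := aux_strong_good hred htree hcard hyz hst
  rw [aux_touch hN hyz he (hsub hf) hye hyf]
  exact hf
end

section
/- Let g ≥ 9 and let G be a minimal well-indumatched graph of girth g, i.e., G is well-indumatched of girth g and no proper subgraph of G is a well-indumatched graph of girth g. Then G is a reduced unicyclic graph, and if C = v1 v2 ... vg v1 is the unique cycle of G, then for every i the rooted tree T_{v_i} is of Type (i) or of Type (ii). -/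
open SimpleGraph

/-- The component of `v` in `H` is of Type (i): it consists of the single vertex `v`. -/
def TypeI {V : Type*} (H : SimpleGraph V) (v : V) : Prop :=
  (H.connectedComponentMk v).supp = {v}

/-- The component of `v` in `H` is of Type (ii): it is a path of length `2` having `v`
as an endpoint. -/
def TypeII {V : Type*} (H : SimpleGraph V) (v : V) : Prop :=
  ∃ x y : V, x ≠ y ∧ v ≠ x ∧ v ≠ y ∧
    (H.connectedComponentMk v).supp = {v, x, y} ∧
    H.Adj v x ∧ H.Adj x y ∧ ¬ H.Adj v y


namespace Stmt11

/-- two edges at distance at least two -/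
def Far {V : Type*} (G : SimpleGraph V) (e f : Sym2 V) : Prop :=
  ∀ u ∈ e, ∀ v ∈ f, u ≠ v ∧ ¬ G.Adj u v

lemma Far.symm {V : Type*} {G : SimpleGraph V} {e f : Sym2 V} (h : Far G e f) : Far G f e :=
  fun u hu v hv => ⟨(h v hv u hu).1.symm, fun h' => (h v hv u hu).2 h'.symm⟩

lemma not_far_self {V : Type*} {G : SimpleGraph V} (e : Sym2 V) : ¬ Far G e e := by
  intro h
  exact (h _ e.out_fst_mem _ e.out_fst_mem).1 rfl

lemma far_mk {V : Type*} {G : SimpleGraph V} {a b c d : V} :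
    Far G s(a, b) s(c, d) ↔ (a ≠ c ∧ ¬ G.Adj a c) ∧ (a ≠ d ∧ ¬ G.Adj a d) ∧
      (b ≠ c ∧ ¬ G.Adj b c) ∧ (b ≠ d ∧ ¬ G.Adj b d) := by
  simp only [Far, Sym2.mem_iff, forall_eq_or_imp, forall_eq]
  tauto

lemma ind_iff {V : Type*} {G : SimpleGraph V} {M : Set (Sym2 V)} :
    IsInducedMatching G M ↔ M ⊆ G.edgeSet ∧ ∀ e ∈ M, ∀ f ∈ M, e ≠ f → Far G e f := Iff.rfl

lemma ind_insert {V : Type*} {G : SimpleGraph V} {M : Set (Sym2 V)} (hM : IsInducedMatching G M)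
    {k : Sym2 V} (hk : k ∈ G.edgeSet) (hf : ∀ m ∈ M, Far G k m) :
    IsInducedMatching G (insert k M) := by
  rw [ind_iff] at *
  refine ⟨Set.insert_subset hk hM.1, ?_⟩
  rintro e (rfl | he) f (rfl | hf') hne
  · exact absurd rfl hne
  · exact hf _ hf'
  · exact (hf _ he).symm
  · exact hM.2 e he f hf' hne

lemma max_iff {V : Type*} {G : SimpleGraph V} {M : Set (Sym2 V)} :
    IsMaximalInducedMatching G M ↔
      IsInducedMatching G M ∧ ∀ k ∈ G.edgeSet, ∃ m ∈ M, ¬ Far G k m := by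
  constructor
  · rintro ⟨h1, h2⟩
    refine ⟨h1, fun k hk => ?_⟩
    by_contra! hc
    have := h2 _ (ind_insert h1 hk hc) (Set.subset_insert _ _)
    have hkM : k ∈ M := this ▸ Set.mem_insert _ _
    exact not_far_self k (hc k hkM)
  · rintro ⟨h1, h2⟩
    refine ⟨h1, fun N hN hMN => Set.Subset.antisymm (fun k hk => ?_) hMN⟩
    obtain ⟨m, hm, hf⟩ := h2 k (hN.1 hk)
    by_contra hkM
    exact hf (hN.2 k hk m (hMN hm) (fun h => hkM (h ▸ hm)))

lemma exists_max {V : Type*} [Finite V] {G : SimpleGraph V} {M : Set (Sym2 V)}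
    (hM : IsInducedMatching G M) : ∃ N, M ⊆ N ∧ IsMaximalInducedMatching G N := by
  have : Finite (Sym2 V) := inferInstance
  obtain ⟨N, hN, hmax⟩ := (Set.toFinite {N : Set (Sym2 V) | IsInducedMatching G N}).exists_le_maximal hM
  exact ⟨N, hN, hmax.1, fun N' hN' hs => Set.Subset.antisymm (hmax.2 hN' hs) hs⟩

/-- the exchange argument -/
lemma swap {V : Type*} [Finite V] {G : SimpleGraph V} (hW : WellIndumatched G)
    (e : Sym2 V) (he : e ∈ G.edgeSet) (K : Set (Sym2 V)) (hK : IsInducedMatching G K)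
    (heK : ∀ k ∈ K, Far G e k) (f₁ f₂ : Sym2 V) (h₁ : f₁ ∈ G.edgeSet) (h₂ : f₂ ∈ G.edgeSet)
    (h12 : Far G f₁ f₂)
    (h : ∀ k ∈ G.edgeSet, Far G k e → (∀ c ∈ K, k = c ∨ Far G k c) → Far G f₁ k ∧ Far G f₂ k) :
    False := by
  obtain ⟨M, hM, hmax⟩ := exists_max (ind_insert hK he heK)
  have heM : e ∈ M := hM (Set.mem_insert _ _)
  have hfar : ∀ k ∈ M \ {e}, Far G f₁ k ∧ Far G f₂ k := by
    rintro k ⟨hk, hke⟩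
    refine h k (hmax.1.1 hk) (hmax.1.2 k hk e heM hke) fun c hc => ?_
    by_cases hkc : k = c
    · exact Or.inl hkc
    · exact Or.inr (hmax.1.2 k hk c (hM (Set.mem_insert_of_mem _ hc)) hkc)
  have hI : IsInducedMatching G (M \ {e}) :=
    ⟨fun k hk => hmax.1.1 hk.1, fun a ha b hb => hmax.1.2 a ha.1 b hb.1⟩
  have hI2 := ind_insert hI h₂ (fun k hk => (hfar k hk).2)
  have hf1 : ∀ k ∈ insert f₂ (M \ {e}), Far G f₁ k := by
    rintro k (rfl | hk)
    · exact h12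
    · exact (hfar k hk).1
  have hI3 := ind_insert hI2 h₁ hf1
  obtain ⟨N, hN, hNmax⟩ := exists_max hI3
  have hcard := hW M N hmax hNmax
  have hle := Set.ncard_le_ncard hN (Set.toFinite N)
  rw [Set.ncard_insert_of_notMem (fun hm => not_far_self _ (hf1 _ hm)) (Set.toFinite _),
    Set.ncard_insert_of_notMem (fun hm => not_far_self _ (hfar _ hm).2) (Set.toFinite _)] at hle
  have := Set.ncard_sdiff_singleton_add_one heM (Set.toFinite M)
  omega

lemma wim_induce {V : Type*} [Finite V] {G : SimpleGraph V} (hW : WellIndumatched G)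
    (s : Set V) (K : Set (Sym2 V)) (hK : IsInducedMatching G K)
    (hKs : ∀ k ∈ K, ∀ f ∈ G.edgeSet, (∀ u ∈ f, u ∈ s) → Far G k f)
    (hmax : ∀ M, IsInducedMatching G M → (∀ m ∈ M, ∀ u ∈ m, u ∈ s) →
      (∀ k ∈ G.edgeSet, (∀ u ∈ k, u ∈ s) → ∃ m ∈ M, ¬ Far G k m) →
      ∀ k ∈ G.edgeSet, (∀ m ∈ K, Far G k m) → ∃ m ∈ M, ¬ Far G k m) :
    WellIndumatched (G.induce s) := by
  have hinj : Function.Injective (Sym2.map (Subtype.val : s → V)) :=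
    Sym2.map.injective Subtype.val_injective
  have hfar : ∀ e f : Sym2 s, Far (G.induce s) e f ↔
      Far G (Sym2.map Subtype.val e) (Sym2.map Subtype.val f) := by
    intro e f
    induction e with | _ a b
    induction f with | _ c d
    simp [far_mk, Subtype.ext_iff]
  have hedge : ∀ e : Sym2 s, e ∈ (G.induce s).edgeSet ↔ Sym2.map Subtype.val e ∈ G.edgeSet := by
    intro e
    induction e with | _ a b
    simp
  have hs : ∀ e : Sym2 s, ∀ u ∈ Sym2.map Subtype.val e, u ∈ s := by
    intro e u hu
    simp only [Sym2.mem_map] at hu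
    obtain ⟨a, _, rfl⟩ := hu
    exact a.2
  have hlift : ∀ e : Sym2 V, (∀ u ∈ e, u ∈ s) → ∃ e' : Sym2 s, Sym2.map Subtype.val e' = e := by
    intro e he
    induction e with | _ a b
    exact ⟨s(⟨a, he a (by simp)⟩, ⟨b, he b (by simp)⟩), by simp⟩
  have key : ∀ M, IsMaximalInducedMatching (G.induce s) M →
      IsMaximalInducedMatching G (Sym2.map Subtype.val '' M ∪ K) ∧
      (Sym2.map Subtype.val '' M ∪ K).ncard = M.ncard + K.ncard := by
    intro M hM
    rw [max_iff] at hM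
    obtain ⟨hM1, hM2⟩ := hM
    have hI : IsInducedMatching G (Sym2.map Subtype.val '' M) := by
      rw [ind_iff]
      constructor
      · rintro _ ⟨e, he, rfl⟩
        exact (hedge e).1 (hM1.1 he)
      · rintro _ ⟨e, he, rfl⟩ _ ⟨f, hf, rfl⟩ hne
        exact (hfar e f).1 (hM1.2 e he f hf (fun h => hne (h ▸ rfl)))
    have hKM : ∀ k ∈ K, ∀ m ∈ M, Far G k (Sym2.map Subtype.val m) := fun k hk m hm =>
      hKs k hk _ ((hedge m).1 (hM1.1 hm)) (hs m)
    refine ⟨?_, ?_⟩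
    · rw [max_iff]
      refine ⟨?_, ?_⟩
      · rw [ind_iff]
        refine ⟨Set.union_subset hI.1 hK.1, ?_⟩
        rintro e (he | he) f (hf | hf) hne
        · exact hI.2 e he f hf hne
        · obtain ⟨m, hm, rfl⟩ := he
          exact (hKM f hf m hm).symm
        · obtain ⟨m, hm, rfl⟩ := hf
          exact hKM e he m hm
        · exact hK.2 e he f hf hne
      · intro k hk
        by_cases hkK : ∀ m ∈ K, Far G k m
        · obtain ⟨m, hm, h⟩ := hmax _ hI (by rintro _ ⟨m, hm, rfl⟩; exact hs m) (by
            intro k hk hks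
            obtain ⟨k', rfl⟩ := hlift k hks
            obtain ⟨m, hm, h⟩ := hM2 k' ((hedge k').2 hk)
            exact ⟨_, ⟨m, hm, rfl⟩, fun h' => h ((hfar _ _).2 h')⟩) k hk hkK
          exact ⟨m, Or.inl hm, h⟩
        · push Not at hkK
          obtain ⟨m, hm, h⟩ := hkK
          exact ⟨m, Or.inr hm, h⟩
    · rw [Set.ncard_union_eq _ (Set.toFinite _) (Set.toFinite _), Set.ncard_image_of_injective _ hinj]
      rw [Set.disjoint_left]
      rintro _ ⟨m, hm, rfl⟩ hk
      exact not_far_self _ (hKM _ hk m hm)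
  intro M N hM hN
  obtain ⟨h1, h2⟩ := key M hM
  obtain ⟨h3, h4⟩ := key N hN
  have := hW _ _ h1 h3
  omega

/-- an induced proper subgraph containing a shortest cycle is not well-indumatched -/
lemma no_wim {V : Type*} (G : SimpleGraph V) (g : ℕ)
    (hgirth : G.girth = g)
    (hmin : ∀ H : G.Subgraph, H ≠ ⊤ → ¬ (WellIndumatched H.coe ∧ H.coe.girth = g))
    {v : V} (C : G.Walk v v) (hC : C.IsCycle) (hCl : C.length = g)
    (s : Set V) (hs : ∀ w ∈ C.support, w ∈ s) (z : V) (hz : z ∉ s)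
    (hW : WellIndumatched (G.induce s)) : False := by
  apply hmin ((⊤ : G.Subgraph).induce s)
  · intro h
    have : z ∈ ((⊤ : G.Subgraph).induce s).verts := by rw [h]; simp
    exact hz (by simpa using this)
  rw [← induce_eq_coe_induce_top]
  refine ⟨hW, ?_⟩
  set D := C.induce s hs with hD
  have hm : D.map (Embedding.induce s).toHom = C := Walk.map_induce C hs
  have hDC : D.IsCycle := by
    apply Walk.IsCycle.of_map (f := (Embedding.induce s).toHom)
    rw [hm]; exact hC
  have hDl : D.length = g := by
    have h := congrArg Walk.length hm
    rw [Walk.length_map] at h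
    exact h.trans hCl
  apply le_antisymm
  · rw [← hDl]; exact girth_le_length hDC
  · rw [← hgirth]
    exact IsContained.girth_le ⟨(Embedding.induce s).toCopy⟩ (fun h => h _ hDC)

/-- two distinct paths give a short cycle -/
lemma girth_le_paths {V : Type*} {G : SimpleGraph V} {u v : V} (p q : G.Walk u v)
    (hp : p.IsPath) (hq : q.IsPath) (hne : p ≠ q) : G.girth ≤ p.length + q.length := by
  classical
  set H : SimpleGraph V := SimpleGraph.fromEdgeSet {e | e ∈ p.edges ∨ e ∈ q.edges} with hH
  have hpe : ∀ e ∈ p.edges, e ∈ H.edgeSet := by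
    intro e he
    rw [hH, edgeSet_fromEdgeSet]
    exact ⟨Or.inl he, G.not_isDiag_of_mem_edgeSet (p.edges_subset_edgeSet he)⟩
  have hqe : ∀ e ∈ q.edges, e ∈ H.edgeSet := by
    intro e he
    rw [hH, edgeSet_fromEdgeSet]
    exact ⟨Or.inr he, G.not_isDiag_of_mem_edgeSet (q.edges_subset_edgeSet he)⟩
  have hHG : H ≤ G := by
    rw [← edgeSet_subset_edgeSet]
    intro e he
    rw [hH, edgeSet_fromEdgeSet] at he
    rcases he.1 with h | h
    · exact p.edges_subset_edgeSet h
    · exact q.edges_subset_edgeSet h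
  have hcyc : ¬ H.IsAcyclic := by
    intro hA
    have := (hA.subsingleton_path u v).elim ⟨p.transfer H hpe, hp.transfer hpe⟩
      ⟨q.transfer H hqe, hq.transfer hqe⟩
    have h2 : p.transfer H hpe = q.transfer H hqe := congrArg Subtype.val this
    apply hne
    have h3 : p.support = q.support := by
      rw [← p.support_transfer hpe, ← q.support_transfer hqe, h2]
    exact Walk.ext_support h3
  obtain ⟨a, w, hw, hl⟩ := exists_girth_eq_length.2 hcyc
  refine (girth_anti hHG hcyc).trans ?_
  rw [hl, ← w.length_edges, ← p.length_edges, ← q.length_edges, ← List.length_append,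
    ← List.toFinset_card_of_nodup hw.edges_nodup]
  refine le_trans (Finset.card_le_card ?_) (List.toFinset_card_le _)
  intro e he
  have := w.edges_subset_edgeSet (List.mem_toFinset.1 he)
  rw [hH, edgeSet_fromEdgeSet] at this
  simpa using this.1

/-- a vertex which cannot be covered by an edge compatible with `e` and `K` -/
def Blocked {V : Type*} (G : SimpleGraph V) (e : Sym2 V) (K : Set (Sym2 V)) (p : V) : Prop :=
  ∀ k ∈ G.edgeSet, p ∈ k → Far G k e → (∀ c ∈ K, k = c ∨ Far G k c) → False

lemma blocked_edge {V : Type*} {G : SimpleGraph V} {K : Set (Sym2 V)} {u w p : V}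
    (h : p = u ∨ p = w ∨ G.Adj p u ∨ G.Adj p w) : Blocked G s(u, w) K p := by
  intro k hk hp hf _
  have h1 := hf p hp u (by simp)
  have h2 := hf p hp w (by simp)
  tauto

lemma blocked_K {V : Type*} {G : SimpleGraph V} {e : Sym2 V} {K : Set (Sym2 V)} {u w p : V}
    (hK : s(u, w) ∈ K) (h : G.Adj p u) (hne : p ≠ w) : Blocked G e K p := by
  intro k hk hp _ hf
  rcases hf _ hK with rfl | hf
  · simp only [Sym2.mem_iff] at hp
    rcases hp with rfl | rfl
    · exact G.irrefl h
    · exact hne rfl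
  · exact (hf p hp u (by simp)).2 h

lemma blocked_nbr {V : Type*} {G : SimpleGraph V} {e : Sym2 V} {K : Set (Sym2 V)} {p : V}
    (h : ∀ q, G.Adj p q → Blocked G e K q) : Blocked G e K p := by
  intro k hk hp h1 h2
  induction k with | _ a b
  simp only [Sym2.mem_iff] at hp
  rcases hp with rfl | rfl
  · exact h b hk s(p, b) hk (by simp) h1 h2
  · exact h a (G.adj_symm hk) s(a, p) hk (by simp) h1 h2

lemma far_of_blocked {V : Type*} {G : SimpleGraph V} {e : Sym2 V} {K : Set (Sym2 V)} {a b : V}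
    (ha : Blocked G e K a) (hb : Blocked G e K b) (ha' : ∀ p, G.Adj a p → Blocked G e K p)
    (hb' : ∀ p, G.Adj b p → Blocked G e K p) (k : Sym2 V) (hk : k ∈ G.edgeSet)
    (h1 : Far G k e) (h2 : ∀ c ∈ K, k = c ∨ Far G k c) : Far G s(a, b) k := by
  intro u hu v hv
  simp only [Sym2.mem_iff] at hu
  rcases hu with rfl | rfl
  · exact ⟨fun h => ha k hk (h ▸ hv) h1 h2, fun h => ha' v h k hk hv h1 h2⟩
  · exact ⟨fun h => hb k hk (h ▸ hv) h1 h2, fun h => hb' v h k hk hv h1 h2⟩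

lemma swap' {V : Type*} [Finite V] {G : SimpleGraph V} (hW : WellIndumatched G)
    (u w : V) (he : G.Adj u w) (K : Set (Sym2 V)) (hK : IsInducedMatching G K)
    (heK : ∀ k ∈ K, Far G s(u, w) k) (a b a' b' : V) (h₁ : G.Adj a b) (h₂ : G.Adj a' b')
    (h12 : Far G s(a, b) s(a', b'))
    (hb : ∀ x, x = a ∨ x = b ∨ x = a' ∨ x = b' →
      Blocked G s(u, w) K x ∧ ∀ p, G.Adj x p → Blocked G s(u, w) K p) : False := by
  refine swap hW s(u, w) he K hK heK s(a, b) s(a', b') h₁ h₂ h12 ?_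
  intro k hk h1 h2
  have ha := hb a (by simp)
  have hb1 := hb b (by simp)
  have ha' := hb a' (by simp)
  have hb' := hb b' (by simp)
  exact ⟨far_of_blocked ha.1 hb1.1 ha.2 hb1.2 k hk h1 h2,
    far_of_blocked ha'.1 hb'.1 ha'.2 hb'.2 k hk h1 h2⟩

lemma ind_empty {V : Type*} (G : SimpleGraph V) : IsInducedMatching G ∅ := by
  simp [IsInducedMatching]

lemma ind_single {V : Type*} {G : SimpleGraph V} {u w : V} (h : G.Adj u w) :
    IsInducedMatching G {s(u, w)} := by
  have := ind_insert (ind_empty G) (k := s(u, w)) h (by simp)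
  simpa using this

/-- a cyclically indexed chordless cycle -/
structure Cyc {V : Type*} (G : SimpleGraph V) (g : ℕ) (c : ℤ → V) : Prop where
  mod : ∀ i j, c i = c j ↔ i ≡ j [ZMOD g]
  adj : ∀ i, G.Adj (c i) (c (i + 1))
  chord : ∀ i j, G.Adj (c i) (c j) → c j = c (i + 1) ∨ c j = c (i - 1)

lemma mod_ne {g : ℕ} {i j : ℤ} (h : i < j) (h' : j < i + g) : ¬ i ≡ j [ZMOD g] := by
  intro h1
  have := Int.le_of_dvd (by omega) h1.dvd
  omega

namespace Cyc
variable {V : Type*} {G : SimpleGraph V} {g : ℕ} {c : ℤ → V}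

lemma rev (hc : Cyc G g c) : Cyc G g (fun i => c (-i)) where
  mod i j := by
    rw [hc.mod]
    constructor
    · intro h; simpa using h.neg
    · intro h; exact h.neg
  adj i := by
    have := hc.adj (-i - 1)
    have e : -i - 1 + 1 = -i := by ring
    rw [e] at this
    have e' : -(i + 1) = -i - 1 := by ring
    show G.Adj (c (-i)) (c (-(i + 1)))
    rw [e']; exact this.symm
  chord i j h := by
    have e' : -(i + 1) = -i - 1 := by ring
    have e : -(i - 1) = -i + 1 := by ring
    simp only [e, e']
    exact (hc.chord _ _ h).symm

lemma ne (hc : Cyc G g c) (i j : ℤ) (h : i < j) (h' : j < i + g) : c i ≠ c j := by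
  rw [Ne, hc.mod]
  exact mod_ne h h'

lemma nadj (hc : Cyc G g c) (i j : ℤ) (h : i + 1 < j) (h' : j + 1 < i + g) :
    ¬ G.Adj (c i) (c j) := by
  intro h1
  rcases hc.chord _ _ h1 with h2 | h2
  · exact hc.ne (i + 1) j h (by omega) h2.symm
  · exact hc.ne (i - 1) j (by omega) (by omega) h2.symm

lemma far (hc : Cyc G g c) (i j i' j' : ℤ) (h : i + 1 < j) (h' : j + 1 < i + g)
    (h2 : i + 1 < j') (h2' : j' + 1 < i + g) (h3 : i' + 1 < j) (h3' : j + 1 < i' + g)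
    (h4 : i' + 1 < j') (h4' : j' + 1 < i' + g) :
    Far G s(c i, c i') s(c j, c j') := by
  rw [far_mk]
  exact ⟨⟨hc.ne _ _ (by omega) (by omega), hc.nadj _ _ h h'⟩,
    ⟨hc.ne _ _ (by omega) (by omega), hc.nadj _ _ h2 h2'⟩,
    ⟨hc.ne _ _ (by omega) (by omega), hc.nadj _ _ h3 h3'⟩,
    ⟨hc.ne _ _ (by omega) (by omega), hc.nadj _ _ h4 h4'⟩⟩

lemma adj' (hc : Cyc G g c) (i j : ℤ) (h : j = i + 1) : G.Adj (c i) (c j) := h ▸ hc.adj i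

end Cyc

/-- nothing attached -/
def T0 {V : Type*} (G : SimpleGraph V) (S : Set V) (v : V) : Prop :=
  ∀ w, G.Adj v w → w ∈ S

/-- a pendant leaf attached -/
def TL {V : Type*} (G : SimpleGraph V) (S : Set V) (v : V) : Prop :=
  ∃ b, b ∉ S ∧ G.Adj v b ∧ (∀ w, G.Adj b w → w = v) ∧ ∀ w, G.Adj v w → w ∈ S ∨ w = b

/-- a pendant path with two edges attached -/
def TP {V : Type*} (G : SimpleGraph V) (S : Set V) (v : V) : Prop :=
  ∃ x y, x ∉ S ∧ y ∉ S ∧ G.Adj v x ∧ G.Adj x y ∧ (∀ w, G.Adj x w → w = v ∨ w = y) ∧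
    (∀ w, G.Adj y w → w = x) ∧ ∀ w, G.Adj v w → w ∈ S ∨ w = x

/-- a vertex has at most one pendant path -/
lemma two_P {V : Type*} [Finite V] {G : SimpleGraph V} (hW : WellIndumatched G)
    {v x y x' y' : V} (hx : G.Adj v x) (hy : G.Adj x y) (hvy : y ≠ v) (hx' : G.Adj v x')
    (hy' : G.Adj x' y') (hvy' : y' ≠ v)
    (h1 : ∀ w, G.Adj x w → w = v ∨ w = y) (h2 : ∀ w, G.Adj y w → w = x)
    (h1' : ∀ w, G.Adj x' w → w = v ∨ w = y') (h2' : ∀ w, G.Adj y' w → w = x') (hne : x ≠ x') :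
    False := by
  have b2 : ∀ q, G.Adj v q → Blocked G s(v, x) ∅ q := fun q hq =>
    blocked_edge (Or.inr (Or.inr (Or.inl hq.symm)))
  have by1 : Blocked G s(v, x) ∅ y := blocked_nbr fun q hq => by rw [h2 q hq]; exact b2 x hx
  have by2 : Blocked G s(v, x) ∅ y' := blocked_nbr fun q hq => by rw [h2' q hq]; exact b2 x' hx'
  have bv : Blocked G s(v, x) ∅ v := blocked_edge (Or.inl rfl)
  refine swap' hW v x hx ∅ (ind_empty G) (by simp) x y x' y' hy hy' ?_ ?_
  · rw [far_mk]
    refine ⟨⟨hne, fun h => ?_⟩, ⟨?_, ?_⟩, ⟨?_, ?_⟩, ⟨?_, ?_⟩⟩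
    · rcases h1 _ h with h | h
      · exact G.ne_of_adj hx' h.symm
      · subst h; exact G.ne_of_adj hx (h2 v hx'.symm)
    · rintro rfl
      exact G.ne_of_adj hx' (h2' v hx.symm)
    · intro h; exact hne (h2' _ h.symm)
    · rintro rfl; exact G.ne_of_adj hx (h2 v hx'.symm)
    · intro h; exact hne (h2 _ h).symm
    · rintro rfl; exact hne (h2 _ hy'.symm).symm
    · intro h
      have := h2 _ h
      subst this
      exact G.ne_of_adj hx' (h2' v hx.symm)
  · rintro p (rfl | rfl | rfl | rfl)
    · refine ⟨b2 _ hx, fun q hq => ?_⟩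
      rcases h1 q hq with rfl | rfl <;> assumption
    · exact ⟨by1, fun q hq => by rw [h2 q hq]; exact b2 _ hx⟩
    · refine ⟨b2 _ hx', fun q hq => ?_⟩
      rcases h1' q hq with rfl | rfl <;> assumption
    · exact ⟨by2, fun q hq => by rw [h2' q hq]; exact b2 _ hx'⟩

section cases
variable {V : Type*} [Finite V] {G : SimpleGraph V} {g : ℕ} {c : ℤ → V}

lemma T0.nbr (hc : Cyc G g c) {i : ℤ} (h : T0 G (Set.range c) (c i)) {w : V}
    (hw : G.Adj (c i) w) : w = c (i + 1) ∨ w = c (i - 1) := by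
  obtain ⟨j, rfl⟩ := h w hw
  exact hc.chord _ _ hw

lemma nbr_of (hc : Cyc G g c) {i : ℤ} {b : V}
    (h : ∀ w, G.Adj (c i) w → w ∈ Set.range c ∨ w = b) {w : V}
    (hw : G.Adj (c i) w) : w = c (i + 1) ∨ w = c (i - 1) ∨ w = b := by
  rcases h w hw with ⟨j, rfl⟩ | rfl
  · have := hc.chord _ _ hw; tauto
  · simp

/-- L next to P -/
lemma case1 (hW : WellIndumatched G) (hc : Cyc G g c) (hg : 9 ≤ g) (i j : ℤ) (hj : j = i + 1)
    (hL : TL G (Set.range c) (c i)) (hP : TP G (Set.range c) (c j)) : False := by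
  obtain ⟨b, hbS, hb, hbn, hn⟩ := hL
  obtain ⟨x, y, hxS, hyS, hx, hy, hxn, hyn, hn'⟩ := hP
  have bi : ∀ q, G.Adj (c i) q → Blocked G s(c i, c j) ∅ q := fun q hq =>
    blocked_edge (Or.inr (Or.inr (Or.inl hq.symm)))
  have bj : ∀ q, G.Adj (c j) q → Blocked G s(c i, c j) ∅ q := fun q hq =>
    blocked_edge (Or.inr (Or.inr (Or.inr hq.symm)))
  have hij := hc.adj' i j hj
  refine swap' hW (c i) (c j) hij ∅ (ind_empty G) (by simp) b (c i) x y hb.symm hy ?_ ?_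
  · rw [far_mk]
    refine ⟨⟨?_, ?_⟩, ⟨?_, ?_⟩, ⟨?_, ?_⟩, ⟨?_, ?_⟩⟩
    · rintro rfl; exact G.ne_of_adj hij (hbn _ hx.symm).symm
    · intro h; exact hxS ⟨i, (hbn _ h).symm⟩
    · rintro rfl; exact hxS ⟨i, (hbn _ hy.symm).symm⟩
    · intro h; exact hyS ⟨i, (hbn _ h).symm⟩
    · rintro rfl; exact hxS ⟨i, rfl⟩
    · intro h
      rcases hxn _ h.symm with h | h
      · exact G.ne_of_adj hij h
      · exact hyS ⟨i, h⟩
    · rintro rfl; exact hyS ⟨i, rfl⟩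
    · intro h; exact hxS ⟨i, hyn _ h.symm⟩
  · rintro p (rfl | rfl | rfl | rfl)
    · exact ⟨bi _ hb, fun q hq => by rw [hbn q hq]; exact bj _ hij.symm⟩
    · exact ⟨bj _ hij.symm, bi⟩
    · refine ⟨bj _ hx, fun q hq => ?_⟩
      rcases hxn q hq with rfl | rfl
      · exact bi _ hij
      · exact blocked_nbr fun r hr => by rw [hyn r hr]; exact bj _ hx
    · exact ⟨blocked_nbr fun r hr => by rw [hyn r hr]; exact bj _ hx,
        fun q hq => by rw [hyn q hq]; exact bj _ hx⟩

/-- L at distance two of P -/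
lemma case2 (hW : WellIndumatched G) (hc : Cyc G g c) (hg : 9 ≤ g) (i j k : ℤ) (hj : j = i + 1)
    (hk : k = i + 2)
    (hL : TL G (Set.range c) (c i)) (hP : TP G (Set.range c) (c k)) : False := by
  obtain ⟨b, hbS, hb, hbn, hn⟩ := hL
  obtain ⟨x, y, hxS, hyS, hx, hy, hxn, hyn, hn'⟩ := hP
  set K : Set (Sym2 V) := {s(c (i - 2), c (i - 3))} with hK
  have bj : ∀ q, G.Adj (c j) q → Blocked G s(c j, c k) K q := fun q hq =>
    blocked_edge (Or.inr (Or.inr (Or.inl hq.symm)))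
  have bk : ∀ q, G.Adj (c k) q → Blocked G s(c j, c k) K q := fun q hq =>
    blocked_edge (Or.inr (Or.inr (Or.inr hq.symm)))
  have hij := hc.adj' i j hj
  have hjk := hc.adj' j k (by omega)
  have bi' : Blocked G s(c j, c k) K (c (i - 1)) :=
    blocked_K (u := c (i - 2)) (w := c (i - 3)) (by simp [hK])
      (hc.adj' _ _ (by omega)).symm (hc.ne (i - 3) (i - 1) (by omega) (by omega)).symm
  have bb : Blocked G s(c j, c k) K b :=
    blocked_nbr fun r hr => by rw [hbn r hr]; exact bj _ hij.symm
  have by1 : Blocked G s(c j, c k) K y :=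
    blocked_nbr fun r hr => by rw [hyn r hr]; exact bk _ hx
  refine swap' hW (c j) (c k) hjk K (ind_single (hc.adj' _ _ (by omega)).symm) ?_
    b (c i) x y hb.symm hy ?_ ?_
  · simp only [hK, Set.mem_singleton_iff, forall_eq]
    exact (hc.far _ _ _ _ (by omega) (by omega) (by omega) (by omega) (by omega) (by omega)
      (by omega) (by omega)).symm
  · rw [far_mk]
    refine ⟨⟨?_, ?_⟩, ⟨?_, ?_⟩, ⟨?_, ?_⟩, ⟨?_, ?_⟩⟩
    · rintro rfl
      exact hc.ne i k (by omega) (by omega) (hbn _ hx.symm).symm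
    · intro h; exact hxS ⟨i, (hbn _ h).symm⟩
    · rintro rfl; exact hxS ⟨i, (hbn _ hy.symm).symm⟩
    · intro h; exact hyS ⟨i, (hbn _ h).symm⟩
    · rintro rfl; exact hxS ⟨i, rfl⟩
    · intro h
      rcases hxn _ h.symm with h | h
      · exact hc.ne i k (by omega) (by omega) h
      · exact hyS ⟨i, h⟩
    · rintro rfl; exact hyS ⟨i, rfl⟩
    · intro h; exact hxS ⟨i, hyn _ h.symm⟩
  · rintro p (rfl | rfl | rfl | rfl)
    · exact ⟨bb, fun q hq => by rw [hbn q hq]; exact bj _ hij.symm⟩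
    · refine ⟨bj _ hij.symm, fun q hq => ?_⟩
      rcases nbr_of hc hn hq with rfl | rfl | rfl
      · exact bk _ (hj ▸ hjk.symm)
      · exact bi'
      · exact bb
    · refine ⟨bk _ hx, fun q hq => ?_⟩
      rcases hxn q hq with rfl | rfl
      · exact bj _ hjk
      · exact by1
    · exact ⟨by1, fun q hq => by rw [hyn q hq]; exact bk _ hx⟩

/-- L, then something, then not P, then nothing -/
lemma case3 (hW : WellIndumatched G) (hc : Cyc G g c) (hg : 9 ≤ g) (i i1 i2 i3 : ℤ)
    (h1 : i1 = i + 1) (h2 : i2 = i + 2) (h3 : i3 = i + 3)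
    (hL : TL G (Set.range c) (c i))
    (hT2 : T0 G (Set.range c) (c i2) ∨ TL G (Set.range c) (c i2))
    (hT3 : T0 G (Set.range c) (c i3)) : False := by
  obtain ⟨b, hbS, hb, hbn, hn⟩ := hL
  set K : Set (Sym2 V) := {s(c (i + 5), c (i + 6))} with hK
  have bi : ∀ q, G.Adj (c i) q → Blocked G s(c i, c i1) K q := fun q hq =>
    blocked_edge (Or.inr (Or.inr (Or.inl hq.symm)))
  have b1 : ∀ q, G.Adj (c i1) q → Blocked G s(c i, c i1) K q := fun q hq =>
    blocked_edge (Or.inr (Or.inr (Or.inr hq.symm)))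
  have a01 := hc.adj' i i1 h1
  have a12 := hc.adj' i1 i2 (by omega)
  have a23 := hc.adj' i2 i3 (by omega)
  have b4 : Blocked G s(c i, c i1) K (c (i + 4)) :=
    blocked_K (u := c (i + 5)) (w := c (i + 6)) (by simp [hK])
      (hc.adj' _ _ (by omega)) (hc.ne _ _ (by omega) (by omega))
  have n3 : ∀ q, G.Adj (c i3) q → Blocked G s(c i, c i1) K q := by
    intro q hq
    rcases hT3.nbr hc hq with rfl | rfl
    · have : i3 + 1 = i + 4 := by omega
      rw [this]; exact b4
    · have : i3 - 1 = i2 := by omega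
      rw [this]; exact b1 _ a12
  have b3 : Blocked G s(c i, c i1) K (c i3) := blocked_nbr n3
  have n2 : ∀ q, G.Adj (c i2) q → Blocked G s(c i, c i1) K q := by
    intro q hq
    rcases hT2 with hT2 | ⟨d, hdS, hd, hdn, hn2⟩
    · rcases hT2.nbr hc hq with rfl | rfl
      · have : i2 + 1 = i3 := by omega
        rw [this]; exact b3
      · have : i2 - 1 = i1 := by omega
        rw [this]; exact bi _ a01
    · rcases nbr_of hc hn2 hq with rfl | rfl | rfl
      · have : i2 + 1 = i3 := by omega
        rw [this]; exact b3
      · have : i2 - 1 = i1 := by omega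
        rw [this]; exact bi _ a01
      · exact blocked_nbr fun r hr => by rw [hdn r hr]; exact b1 _ a12
  refine swap' hW (c i) (c i1) a01 K (ind_single (hc.adj' _ _ (by omega))) ?_
    b (c i) (c i2) (c i3) hb.symm a23 ?_ ?_
  · simp only [hK, Set.mem_singleton_iff, forall_eq]
    exact hc.far _ _ _ _ (by omega) (by omega) (by omega) (by omega) (by omega) (by omega)
      (by omega) (by omega)
  · rw [far_mk]
    refine ⟨⟨?_, ?_⟩, ⟨?_, ?_⟩, ⟨?_, ?_⟩, ⟨?_, ?_⟩⟩
    · rintro rfl; exact hbS ⟨_, rfl⟩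
    · intro h; exact hc.ne i i2 (by omega) (by omega) (hbn _ h).symm
    · rintro rfl; exact hbS ⟨_, rfl⟩
    · intro h; exact hc.ne i i3 (by omega) (by omega) (hbn _ h).symm
    · exact hc.ne _ _ (by omega) (by omega)
    · exact hc.nadj _ _ (by omega) (by omega)
    · exact hc.ne _ _ (by omega) (by omega)
    · exact hc.nadj _ _ (by omega) (by omega)
  · rintro p (rfl | rfl | rfl | rfl)
    · exact ⟨bi _ hb, fun q hq => by rw [hbn q hq]; exact b1 _ a01.symm⟩
    · exact ⟨b1 _ a01.symm, bi⟩
    · exact ⟨b1 _ a12, n2⟩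
    · exact ⟨b3, n3⟩

/-- two L at distance two -/
lemma case4 (hW : WellIndumatched G) (hc : Cyc G g c) (hg : 9 ≤ g) (i i1 i2 : ℤ)
    (h1 : i1 = i + 1) (h2 : i2 = i + 2)
    (hL : TL G (Set.range c) (c i)) (hL2 : TL G (Set.range c) (c i2)) : False := by
  obtain ⟨b, hbS, hb, hbn, hn⟩ := hL
  obtain ⟨d, hdS, hd, hdn, hn2⟩ := hL2
  set K : Set (Sym2 V) := {s(c (i + 4), c (i + 5))} with hK
  have bi : ∀ q, G.Adj (c i) q → Blocked G s(c i, c i1) K q := fun q hq =>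
    blocked_edge (Or.inr (Or.inr (Or.inl hq.symm)))
  have b1 : ∀ q, G.Adj (c i1) q → Blocked G s(c i, c i1) K q := fun q hq =>
    blocked_edge (Or.inr (Or.inr (Or.inr hq.symm)))
  have a01 := hc.adj' i i1 h1
  have a12 := hc.adj' i1 i2 (by omega)
  have b3 : Blocked G s(c i, c i1) K (c (i + 3)) :=
    blocked_K (u := c (i + 4)) (w := c (i + 5)) (by simp [hK])
      (hc.adj' _ _ (by omega)) (hc.ne _ _ (by omega) (by omega))
  have bd : Blocked G s(c i, c i1) K d :=
    blocked_nbr fun r hr => by rw [hdn r hr]; exact b1 _ a12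
  refine swap' hW (c i) (c i1) a01 K (ind_single (hc.adj' _ _ (by omega))) ?_
    b (c i) d (c i2) hb.symm hd.symm ?_ ?_
  · simp only [hK, Set.mem_singleton_iff, forall_eq]
    exact hc.far _ _ _ _ (by omega) (by omega) (by omega) (by omega) (by omega) (by omega)
      (by omega) (by omega)
  · have hne := hc.ne i i2 (by omega) (by omega)
    rw [far_mk]
    refine ⟨⟨?_, ?_⟩, ⟨?_, ?_⟩, ⟨?_, ?_⟩, ⟨?_, ?_⟩⟩
    · rintro rfl; exact hne (hbn _ hd.symm).symm
    · intro h; exact hdS ⟨i, (hbn _ h).symm⟩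
    · rintro rfl; exact hbS ⟨_, rfl⟩
    · intro h; exact hne (hbn _ h).symm
    · rintro rfl; exact hdS ⟨_, rfl⟩
    · intro h; exact hne (hdn _ h.symm)
    · exact hne
    · exact hc.nadj _ _ (by omega) (by omega)
  · rintro p (rfl | rfl | rfl | rfl)
    · exact ⟨bi _ hb, fun q hq => by rw [hbn q hq]; exact b1 _ a01.symm⟩
    · exact ⟨b1 _ a01.symm, bi⟩
    · exact ⟨bd, fun q hq => by rw [hdn q hq]; exact b1 _ a12⟩
    · refine ⟨b1 _ a12, fun q hq => ?_⟩
      rcases nbr_of hc hn2 hq with rfl | rfl | rfl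
      · have : i2 + 1 = i + 3 := by omega
        rw [this]; exact b3
      · have : i2 - 1 = i1 := by omega
        rw [this]; exact bi _ a01
      · exact bd

/-- P followed by two empty vertices -/
lemma case5 (hW : WellIndumatched G) (hc : Cyc G g c) (hg : 9 ≤ g) (i i1 i2 : ℤ)
    (h1 : i1 = i + 1) (h2 : i2 = i + 2)
    (hP : TP G (Set.range c) (c i)) (hT1 : T0 G (Set.range c) (c i1))
    (hT2 : T0 G (Set.range c) (c i2)) : False := by
  obtain ⟨x, y, hxS, hyS, hx, hy, hxn, hyn, hn'⟩ := hP
  set K : Set (Sym2 V) := {s(c (i + 4), c (i + 5))} with hK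
  have bi : ∀ q, G.Adj (c i) q → Blocked G s(c i, c i1) K q := fun q hq =>
    blocked_edge (Or.inr (Or.inr (Or.inl hq.symm)))
  have b1 : ∀ q, G.Adj (c i1) q → Blocked G s(c i, c i1) K q := fun q hq =>
    blocked_edge (Or.inr (Or.inr (Or.inr hq.symm)))
  have a01 := hc.adj' i i1 h1
  have a12 := hc.adj' i1 i2 (by omega)
  have b3 : Blocked G s(c i, c i1) K (c (i + 3)) :=
    blocked_K (u := c (i + 4)) (w := c (i + 5)) (by simp [hK])
      (hc.adj' _ _ (by omega)) (hc.ne _ _ (by omega) (by omega))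
  have byy : Blocked G s(c i, c i1) K y :=
    blocked_nbr fun r hr => by rw [hyn r hr]; exact bi _ hx
  refine swap' hW (c i) (c i1) a01 K (ind_single (hc.adj' _ _ (by omega))) ?_
    x y (c i1) (c i2) hy a12 ?_ ?_
  · simp only [hK, Set.mem_singleton_iff, forall_eq]
    exact hc.far _ _ _ _ (by omega) (by omega) (by omega) (by omega) (by omega) (by omega)
      (by omega) (by omega)
  · have hS : ∀ j, c i ≠ c j → (x ≠ c j ∧ ¬ G.Adj x (c j)) ∧ y ≠ c j ∧ ¬ G.Adj y (c j) := by
      intro j hj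
      refine ⟨⟨?_, ?_⟩, ⟨?_, ?_⟩⟩
      · rintro rfl; exact hxS ⟨_, rfl⟩
      · intro h
        rcases hxn _ h with h | h
        · exact hj h.symm
        · exact hyS ⟨_, h⟩
      · rintro rfl; exact hyS ⟨_, rfl⟩
      · intro h; exact hxS ⟨_, hyn _ h⟩
    have e1 := hS i1 (hc.ne _ _ (by omega) (by omega))
    have e2 := hS i2 (hc.ne _ _ (by omega) (by omega))
    rw [far_mk]
    exact ⟨e1.1, e2.1, e1.2, e2.2⟩
  · rintro p (rfl | rfl | rfl | rfl)
    · refine ⟨bi _ hx, fun q hq => ?_⟩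
      rcases hxn q hq with rfl | rfl
      · exact b1 _ a01.symm
      · exact byy
    · exact ⟨byy, fun q hq => by rw [hyn q hq]; exact bi _ hx⟩
    · exact ⟨bi _ a01, b1⟩
    · refine ⟨b1 _ a12, fun q hq => ?_⟩
      rcases hT2.nbr hc hq with rfl | rfl
      · have : i2 + 1 = i + 3 := by omega
        rw [this]; exact b3
      · have : i2 - 1 = i1 := by omega
        rw [this]; exact bi _ a01

/-- the periodic pattern L00L00L00 -/
lemma case6 (hW : WellIndumatched G) (hc : Cyc G g c) (hg : 9 ≤ g) (hg10 : g ≠ 10) (i : ℤ)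
    (hL0 : TL G (Set.range c) (c i)) (hL3 : TL G (Set.range c) (c (i + 3)))
    (hL6 : TL G (Set.range c) (c (i + 6))) (hLm : TL G (Set.range c) (c (i - 3)))
    (hT4 : T0 G (Set.range c) (c (i + 4)))
    (hTm : T0 G (Set.range c) (c (i - 1))) : False := by
  obtain ⟨b, hbS, hb, hbn, hn⟩ := hL0
  obtain ⟨d, hdS, hd, hdn, hn3⟩ := hL3
  obtain ⟨p, hpS, hp, hpn, hn6⟩ := hL6
  obtain ⟨q, hqS, hq, hqn, hnm⟩ := hLm
  set K : Set (Sym2 V) := {s(c (i + 6), p), s(c (i - 3), q)} with hK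
  set e : Sym2 V := s(c (i + 1), c (i + 2)) with he
  have b1 : ∀ q, G.Adj (c (i + 1)) q → Blocked G e K q := fun q hq =>
    blocked_edge (Or.inr (Or.inr (Or.inl hq.symm)))
  have b2 : ∀ q, G.Adj (c (i + 2)) q → Blocked G e K q := fun q hq =>
    blocked_edge (Or.inr (Or.inr (Or.inr hq.symm)))
  have a01 := hc.adj i
  have a12 := hc.adj' (i + 1) (i + 2) (by omega)
  have a23 := hc.adj' (i + 2) (i + 3) (by omega)
  have b5 : Blocked G e K (c (i + 5)) :=
    blocked_K (u := c (i + 6)) (w := p) (by simp [hK])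
      (hc.adj' _ _ (by omega)) (by rintro rfl; exact hpS ⟨_, rfl⟩)
  have bm2 : Blocked G e K (c (i - 2)) :=
    blocked_K (u := c (i - 3)) (w := q) (by simp [hK])
      (hc.adj' _ _ (by omega)).symm (by rintro rfl; exact hqS ⟨_, rfl⟩)
  have b4 : Blocked G e K (c (i + 4)) := by
    refine blocked_nbr fun r hr => ?_
    rcases hT4.nbr hc hr with rfl | rfl
    · have : i + 4 + 1 = i + 5 := by omega
      rw [this]; exact b5
    · have : i + 4 - 1 = i + 3 := by omega
      rw [this]; exact b2 _ a23
  have bm1 : Blocked G e K (c (i - 1)) := by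
    refine blocked_nbr fun r hr => ?_
    rcases hTm.nbr hc hr with rfl | rfl
    · have : i - 1 + 1 = i := by omega
      rw [this]; exact b1 _ a01.symm
    · have : i - 1 - 1 = i - 2 := by omega
      rw [this]; exact bm2
  have bb : Blocked G e K b := blocked_nbr fun r hr => by rw [hbn r hr]; exact b1 _ a01.symm
  have bd : Blocked G e K d := blocked_nbr fun r hr => by rw [hdn r hr]; exact b2 _ a23
  -- distance between a cycle vertex and an edge of a leaf
  have fl : ∀ j k, ∀ z, z ∉ Set.range c → (∀ w, G.Adj z w → w = c k) → j + 1 < k → k + 1 < j + g →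
      (c j ≠ c k ∧ ¬ G.Adj (c j) (c k)) ∧ c j ≠ z ∧ ¬ G.Adj (c j) z := by
    intro j k z hz hzn h1 h2
    refine ⟨⟨hc.ne _ _ (by omega) (by omega), hc.nadj _ _ h1 h2⟩, ?_, ?_⟩
    · rintro rfl; exact hz ⟨_, rfl⟩
    · intro h; exact hc.ne j k (by omega) (by omega) (hzn _ h.symm)
  have fl2 : ∀ j k, ∀ y z, y ∉ Set.range c → z ∉ Set.range c → (∀ w, G.Adj y w → w = c j) →
      G.Adj z (c k) →
      (∀ w, G.Adj z w → w = c k) → j + 1 < k → k + 1 < j + g → Far G s(c j, y) s(c k, z) := by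
    intro j k y z hy hz hyn hzk hzn h1 h2
    have h3 := fl j k z hz hzn h1 h2
    rw [far_mk]
    refine ⟨h3.1, h3.2, ⟨?_, ?_⟩, ⟨?_, ?_⟩⟩
    · rintro rfl; exact hy ⟨_, rfl⟩
    · intro h; exact h3.1.1 (hyn _ h).symm
    · rintro rfl; exact h3.1.1 (hyn _ hzk).symm
    · intro h; exact hz ⟨_, (hyn _ h).symm⟩
  have hKi : IsInducedMatching G K := by
    by_cases h9 : g = 9
    · have h36 : c (i - 3) = c (i + 6) := by
        rw [hc.mod, h9]
        have : i + 6 = (i - 3) + 9 := by ring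
        rw [this]; simp [Int.ModEq]
      have hpq : q = p := by
        rcases hn6 q (h36 ▸ hq) with h | h
        · exact absurd h hqS
        · exact h
      have : K = {s(c (i + 6), p)} := by rw [hK, h36, hpq]; simp
      rw [this]; exact ind_single hp
    · refine ind_insert (ind_single hq) hp ?_
      simp only [Set.mem_singleton_iff, forall_eq]
      exact (fl2 (i - 3) (i + 6) q p hqS hpS hqn hp.symm hpn (by omega) (by omega)).symm
  refine swap' hW (c (i + 1)) (c (i + 2)) a12 K hKi ?_
    (c i) b (c (i + 3)) d hb hd ?_ ?_
  · rintro k (rfl | rfl)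
    · rw [far_mk]
      have h1 := fl (i + 1) (i + 6) p hpS hpn (by omega) (by omega)
      have h2 := fl (i + 2) (i + 6) p hpS hpn (by omega) (by omega)
      exact ⟨h1.1, h1.2, h2.1, h2.2⟩
    · have e1 : c (i - 3) = c (i - 3 + g) := by
        rw [hc.mod]; simp [Int.ModEq]
      rw [e1] at hqn ⊢
      rw [far_mk]
      have h1 := fl (i + 1) (i - 3 + g) q hqS hqn (by omega) (by omega)
      have h2 := fl (i + 2) (i - 3 + g) q hqS hqn (by omega) (by omega)
      exact ⟨h1.1, h1.2, h2.1, h2.2⟩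
  · exact fl2 i (i + 3) b d hbS hdS hbn hd.symm hdn (by omega) (by omega)
  · rintro r (rfl | rfl | rfl | rfl)
    · refine ⟨b1 _ a01.symm, fun s hs => ?_⟩
      rcases nbr_of hc hn hs with rfl | rfl | rfl
      · exact b2 _ a12.symm
      · exact bm1
      · exact bb
    · exact ⟨bb, fun s hs => by rw [hbn s hs]; exact b1 _ a01.symm⟩
    · refine ⟨b2 _ a23, fun s hs => ?_⟩
      rcases nbr_of hc hn3 hs with rfl | rfl | rfl
      · have : i + 3 + 1 = i + 4 := by omega
        rw [this]; exact b4
      · have : i + 3 - 1 = i + 2 := by omega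
        rw [this]; exact b1 _ a12
      · exact bd
    · exact ⟨bd, fun s hs => by rw [hdn s hs]; exact b2 _ a23⟩

lemma range_rev (c : ℤ → V) : Set.range (fun i => c (-i)) = Set.range c := by
  ext x
  constructor
  · rintro ⟨i, rfl⟩; exact ⟨-i, rfl⟩
  · rintro ⟨i, rfl⟩; exact ⟨-i, by simp⟩

lemma no_P_near (hW : WellIndumatched G) (hc : Cyc G g c) (hg : 9 ≤ g) (i : ℤ)
    (hL : TL G (Set.range c) (c i)) : ¬ TP G (Set.range c) (c (i + 1)) ∧
      ¬ TP G (Set.range c) (c (i + 2)) :=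
  ⟨fun h => case1 hW hc hg i (i + 1) rfl hL h, fun h => case2 hW hc hg i (i + 1) (i + 2) rfl rfl hL h⟩

lemma no_P_near' (hW : WellIndumatched G) (hc : Cyc G g c) (hg : 9 ≤ g) (i : ℤ)
    (hL : TL G (Set.range c) (c i)) : ¬ TP G (Set.range c) (c (i - 1)) ∧
      ¬ TP G (Set.range c) (c (i - 2)) := by
  have := no_P_near hW hc.rev hg (-i) (by rw [range_rev]; simpa using hL)
  rw [range_rev] at this
  have e1 : -(-i + 1) = i - 1 := by ring
  have e2 : -(-i + 2) = i - 2 := by ring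
  simpa only [e1, e2] using this

/-- L propagates by three steps -/
lemma step3 (hW : WellIndumatched G) (hc : Cyc G g c) (hg : 9 ≤ g)
    (hT : ∀ i, T0 G (Set.range c) (c i) ∨ TL G (Set.range c) (c i) ∨ TP G (Set.range c) (c i))
    (i : ℤ) (hL : TL G (Set.range c) (c i)) : TL G (Set.range c) (c (i + 3)) := by
  have hP := no_P_near hW hc hg i hL
  rcases hT (i + 3) with h | h | h
  · exfalso
    refine case3 hW hc hg i (i + 1) (i + 2) (i + 3) rfl rfl rfl hL ?_ h
    have := hT (i + 2)
    tauto
  · exact h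
  · exfalso
    have h1 : T0 G (Set.range c) (c (i + 1)) := by
      rcases hT (i + 1) with h1 | h1 | h1
      · exact h1
      · refine absurd h ?_
        have := (no_P_near hW hc hg _ h1).2
        rwa [show i + 1 + 2 = i + 3 by ring] at this
      · exact absurd h1 hP.1
    have h2 : T0 G (Set.range c) (c (i + 2)) := by
      rcases hT (i + 2) with h1 | h1 | h1
      · exact h1
      · refine absurd h ?_
        have := (no_P_near hW hc hg _ h1).1
        rwa [show i + 2 + 1 = i + 3 by ring] at this
      · exact absurd h1 hP.2
    refine case5 hW hc.rev hg (-(i + 3)) (-(i + 2)) (-(i + 1)) (by ring) (by ring) ?_ ?_ ?_ <;>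
    · rw [range_rev]; simpa only [neg_neg]

lemma step3' (hW : WellIndumatched G) (hc : Cyc G g c) (hg : 9 ≤ g)
    (hT : ∀ i, T0 G (Set.range c) (c i) ∨ TL G (Set.range c) (c i) ∨ TP G (Set.range c) (c i))
    (i : ℤ) (hL : TL G (Set.range c) (c i)) : TL G (Set.range c) (c (i - 3)) := by
  have := step3 hW hc.rev hg (fun i => by rw [range_rev]; exact hT (-i)) (-i)
    (by rw [range_rev]; simpa using hL)
  rw [range_rev] at this
  have e1 : -(-i + 3) = i - 3 := by ring
  simpa only [e1] using this

lemma no_L (hW : WellIndumatched G) (hc : Cyc G g c) (hg : 9 ≤ g)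
    (hT : ∀ i, T0 G (Set.range c) (c i) ∨ TL G (Set.range c) (c i) ∨ TP G (Set.range c) (c i))
    (i : ℤ) (hL : TL G (Set.range c) (c i)) : False := by
  have h3 := step3 hW hc hg hT _ hL
  have h6 := step3 hW hc hg hT _ h3
  have h9 := step3 hW hc hg hT _ h6
  have hm := step3' hW hc hg hT _ hL
  rw [show i + 3 + 3 = i + 6 by ring] at h6 h9
  rw [show i + 6 + 3 = i + 9 by ring] at h9
  by_cases h10 : g = 10
  · have e : c (i - 3) = c (i + 7) := by
      rw [hc.mod, h10]
      have : i + 7 = (i - 3) + 10 := by ring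
      rw [this]; simp [Int.ModEq]
    rw [e] at hm
    exact case4 hW hc hg (i + 7) (i + 8) (i + 9) (by ring) (by ring) hm h9
  refine case6 hW hc hg h10 i hL h3 h6 hm ?_ ?_
  · rcases hT (i + 4) with h | h | h
    · exact h
    · exact (case4 hW hc hg (i + 4) (i + 5) (i + 6) (by ring) (by ring) h h6).elim
    · exact (case1 hW hc hg (i + 3) (i + 4) (by ring) h3 h).elim
  · rcases hT (i - 1) with h | h | h
    · exact h
    · exact (case4 hW hc hg (i - 3) (i - 2) (i - 1) (by ring) (by ring) hm h).elim
    · exact absurd h (no_P_near' hW hc hg i hL).1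

end cases

section cyc
variable {V : Type*} {G : SimpleGraph V} {g : ℕ} {c : ℤ → V}

lemma exists_index {v : V} (C : G.Walk v v) (hC : C.IsCycle) (hCl : C.length = g) (hg : 9 ≤ g) :
    ∃ c : ℤ → V, (∀ i j, c i = c j ↔ i ≡ j [ZMOD g]) ∧ (∀ i, s(c i, c (i + 1)) ∈ C.edges) ∧
      ∀ w, w ∈ Set.range c ↔ w ∈ C.support := by
  have hpos : (0 : ℤ) < g := by omega
  refine ⟨fun i => C.getVert (i % g).toNat, ?_, ?_, ?_⟩
  · intro i j
    have hi := Int.emod_nonneg i hpos.ne'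
    have hi' := Int.emod_lt_of_pos i hpos
    have hj := Int.emod_nonneg j hpos.ne'
    have hj' := Int.emod_lt_of_pos j hpos
    constructor
    · intro h
      have := hC.getVert_injOn' (by simp only [Set.mem_ofPred_eq]; omega)
        (by simp only [Set.mem_ofPred_eq]; omega) h
      show i % g = j % g
      omega
    · intro h
      have h' : i % g = j % g := h
      simp only [h']
  · intro i
    have hi := Int.emod_nonneg i hpos.ne'
    have hi' := Int.emod_lt_of_pos i hpos
    have h1 := C.toSubgraph_adj_getVert (i := (i % g).toNat) (by omega)
    rw [Walk.adj_toSubgraph_iff_mem_edges] at h1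
    have h2 : C.getVert ((i % g).toNat + 1) = C.getVert ((i + 1) % g).toNat := by
      have e : (i + 1) % g = (i % g + 1) % g := by simp
      by_cases hlt : i % g + 1 < g
      · rw [e, Int.emod_eq_of_lt (by omega) hlt]
        congr 1
        omega
      · have h3 : i % g + 1 = g := by omega
        have h4 : (i % g).toNat + 1 = C.length := by omega
        rw [e, h3, h4]
        simp
    rw [h2] at h1
    exact h1
  · intro w
    constructor
    · rintro ⟨i, rfl⟩
      exact C.getVert_mem_support _
    · intro h
      obtain ⟨n, rfl, hn⟩ := Walk.mem_support_iff_exists_getVert.1 h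
      by_cases hlt : n < g
      · refine ⟨n, ?_⟩
        show C.getVert ((n : ℤ) % g).toNat = C.getVert n
        rw [Int.emod_eq_of_lt (by omega) (by omega)]
        simp
      · refine ⟨0, ?_⟩
        have : n = C.length := by omega
        rw [this]
        simp

lemma arc (hmod : ∀ i j, c i = c j ↔ i ≡ j [ZMOD g]) (hadj : ∀ i, G.Adj (c i) (c (i + 1)))
    (i : ℤ) (n : ℕ) (hn : n < g) : ∃ p : G.Walk (c i) (c (i + n)), p.IsPath ∧ p.length = n ∧
      (∀ w ∈ p.support, ∃ k, i ≤ k ∧ k ≤ i + n ∧ w = c k) ∧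
      ∀ e ∈ p.edges, ∃ k, e = s(c k, c (k + 1)) := by
  induction n with
  | zero =>
    have e : i + ((0 : ℕ) : ℤ) = i := by simp
    rw [e]
    refine ⟨Walk.nil, by simp, by simp, ?_, by simp⟩
    intro w hw
    exact ⟨i, le_rfl, le_rfl, by simpa using hw⟩
  | succ n ih =>
    obtain ⟨p, hp, hl, hs, he⟩ := ih (by omega)
    have e : i + ((n + 1 : ℕ) : ℤ) = i + n + 1 := by push_cast; ring
    rw [e]
    refine ⟨p.concat (hadj (i + n)), hp.concat ?_ _, ?_, ?_, ?_⟩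
    · intro h
      obtain ⟨k, h1, h2, h3⟩ := hs _ h
      exact mod_ne (g := g) (i := k) (j := i + n + 1) (by omega) (by omega) ((hmod _ _).1 h3.symm)
    · rw [Walk.length_concat, hl]
    · intro w hw
      rw [Walk.support_concat] at hw
      simp only [List.mem_append, List.mem_singleton, List.concat_eq_append] at hw
      rcases hw with hw | rfl
      · obtain ⟨k, h1, h2, h3⟩ := hs _ hw
        exact ⟨k, h1, by omega, h3⟩
      · exact ⟨_, by omega, le_rfl, rfl⟩
    · intro e he'
      rw [Walk.edges_concat] at he'
      simp only [List.mem_append, List.mem_singleton, List.concat_eq_append] at he'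
      rcases he' with he' | rfl
      · exact he _ he'
      · exact ⟨_, rfl⟩

lemma short_arc (hmod : ∀ i j, c i = c j ↔ i ≡ j [ZMOD g]) (hadj : ∀ i, G.Adj (c i) (c (i + 1)))
    (hg : 9 ≤ g) (i j : ℤ) : ∃ p : G.Walk (c i) (c j), p.IsPath ∧ 2 * p.length ≤ g ∧
      ∀ e ∈ p.edges, ∃ k, e = s(c k, c (k + 1)) := by
  have hpos : (0 : ℤ) < g := by omega
  have h0 := Int.emod_nonneg (j - i) hpos.ne'
  have h1 := Int.emod_lt_of_pos (j - i) hpos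
  by_cases h : 2 * ((j - i) % g) ≤ g
  · have e : c (i + (((j - i) % g).toNat : ℤ)) = c j := by
      rw [hmod, Int.toNat_of_nonneg h0]
      calc i + (j - i) % g ≡ i + (j - i) [ZMOD g] := (Int.mod_modEq _ _).add_left i
        _ = j := by ring
    have := arc hmod hadj i ((j - i) % g).toNat (by omega)
    rw [e] at this
    obtain ⟨p, hp, hl, -, he⟩ := this
    exact ⟨p, hp, by omega, he⟩
  · have e : c (j + ((g - (j - i) % g).toNat : ℤ)) = c i := by
      rw [hmod, Int.toNat_of_nonneg (by omega)]
      calc j + (g - (j - i) % g) ≡ j + (g - (j - i)) [ZMOD g] :=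
            ((Int.mod_modEq _ _).sub_left _).add_left j
        _ = i + g := by ring
        _ ≡ i [ZMOD g] := by simp [Int.ModEq]
    have := arc hmod hadj j (g - (j - i) % g).toNat (by omega)
    rw [e] at this
    obtain ⟨p, hp, hl, -, he⟩ := this
    exact ⟨p.reverse, hp.reverse, by rw [Walk.length_reverse]; omega, by simpa using he⟩

lemma no_detour (hmod : ∀ i j, c i = c j ↔ i ≡ j [ZMOD g]) (hadj : ∀ i, G.Adj (c i) (c (i + 1)))
    (hg : 9 ≤ g) (hgirth : G.girth = g) {i j : ℤ} (p : G.Walk (c i) (c j)) (hp : p.IsPath)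
    (hl : p.length ≤ 4) (e : Sym2 V) (he : e ∈ p.edges) : ∃ k, e = s(c k, c (k + 1)) := by
  obtain ⟨q, hq, hql, hqe⟩ := short_arc hmod hadj hg i j
  by_cases hpq : p = q
  · exact hqe e (hpq ▸ he)
  · have := girth_le_paths p q hp hq hpq
    omega

lemma chord (hmod : ∀ i j, c i = c j ↔ i ≡ j [ZMOD g]) (hadj : ∀ i, G.Adj (c i) (c (i + 1)))
    (hg : 9 ≤ g) (hgirth : G.girth = g) (i j : ℤ) (h : G.Adj (c i) (c j)) :
    c j = c (i + 1) ∨ c j = c (i - 1) := by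
  obtain ⟨k, hk⟩ := no_detour hmod hadj hg hgirth (Walk.cons h Walk.nil) (by simp [h.ne])
    (by simp) s(c i, c j) (by simp)
  rw [Sym2.eq_iff] at hk
  rcases hk with ⟨h1, h2⟩ | ⟨h1, h2⟩
  · left
    rw [h2, hmod]
    exact ((hmod _ _).1 h1.symm).add_right 1
  · right
    rw [h2, hmod]
    have := ((hmod _ _).1 h1.symm).sub_right 1
    simpa using this


lemma no_detour' (hc : Cyc G g c) (hg : 9 ≤ g) (hgirth : G.girth = g)
    {i j : ℤ} (p : G.Walk (c i) (c j)) (hp : p.IsPath)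
    (hl : p.length ≤ 4) (x y : V) (he : s(x, y) ∈ p.edges) (hx : x ∉ Set.range c) : False := by
  obtain ⟨k, hk⟩ := no_detour hc.mod hc.adj hg hgirth p hp hl _ he
  rw [Sym2.eq_iff] at hk
  rcases hk with ⟨h1, h2⟩ | ⟨h1, h2⟩ <;> exact hx ⟨_, h1.symm⟩

lemma g2 (hc : Cyc G g c) (hg : 9 ≤ g) (hgirth : G.girth = g)
    {x : V} (hx : x ∉ Set.range c) {i j : ℤ} (h1 : G.Adj x (c i)) (h2 : G.Adj x (c j)) :
    c i = c j := by
  by_contra hne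
  exact no_detour' hc hg hgirth (Walk.cons h1.symm (Walk.cons h2 Walk.nil))
    (by simp [h1.ne', h2.ne, hne]) (by simp) x (c j) (by simp) hx

lemma ne_c (hc : Cyc G g c) (hg : 9 ≤ g) (hgirth : G.girth = g)
    {x : V} (hx : x ∉ Set.range c) (i : ℤ) : x ≠ c i := fun h => hx ⟨i, h.symm⟩

lemma g3 (hc : Cyc G g c) (hg : 9 ≤ g) (hgirth : G.girth = g)
    {x x' : V} (hx : x ∉ Set.range c) (hx' : x' ∉ Set.range c) (h : G.Adj x x') {i j : ℤ}
    (h1 : G.Adj x (c i)) (h2 : G.Adj x' (c j)) : False := by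
  by_cases hne : c i = c j
  · rw [← hne] at h2
    have := girth_le_paths (Walk.cons h1.symm (Walk.cons h Walk.nil)) (Walk.cons h2.symm Walk.nil)
      (by simp [h1.ne', h2.ne', h.ne]) (by simp [h2.ne']) (by
        intro h; simpa using congrArg Walk.length h)
    simp at this
    omega
  · exact no_detour' hc hg hgirth (Walk.cons h1.symm (Walk.cons h (Walk.cons h2 Walk.nil)))
      (by simp [h1.ne', h1.ne, h2.ne, hne, h.ne, (ne_c hc hg hgirth hx _),
        (ne_c hc hg hgirth hx' _).symm]) (by simp) x x' (by simp) hx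

lemma g4 (hc : Cyc G g c) (hg : 9 ≤ g) (hgirth : G.girth = g)
    {x x' y : V} (hx : x ∉ Set.range c) (hx' : x' ∉ Set.range c) (hy : y ∉ Set.range c)
    (h : G.Adj y x) (h' : G.Adj y x') {i j : ℤ}
    (h1 : G.Adj x (c i)) (h2 : G.Adj x' (c j)) : x = x' := by
  by_contra hxx
  by_cases hne : c i = c j
  · rw [← hne] at h2
    have := girth_le_paths (Walk.cons h1.symm (Walk.cons h.symm Walk.nil))
      (Walk.cons h2.symm (Walk.cons h'.symm Walk.nil))
      (by simp [h1.ne', h.ne', (ne_c hc hg hgirth hy _).symm])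
      (by simp [h2.ne', h'.ne', (ne_c hc hg hgirth hy _).symm]) (by
        intro h; simpa [hxx] using congrArg Walk.support h)
    simp at this
    omega
  · exact no_detour' hc hg hgirth
      (Walk.cons h1.symm (Walk.cons h.symm (Walk.cons h' (Walk.cons h2 Walk.nil))))
      (by simp [h1.ne', h1.ne, h2.ne, hne, h.ne', h'.ne, hxx, (ne_c hc hg hgirth hx _),
        (ne_c hc hg hgirth hx' _).symm, ne_c hc hg hgirth hy _, (ne_c hc hg hgirth hy _).symm])
      (by simp) x y (by simp [Sym2.eq_swap]) hx

end cyc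

section red
variable {V : Type*} [Finite V] {G : SimpleGraph V} {g : ℕ} {c : ℤ → V}

lemma m1 (hW : WellIndumatched G)
    (hdel : ∀ s : Set V, Set.range c ⊆ s → ∀ z, z ∉ s → ¬ WellIndumatched (G.induce s))
    {u w : V} (h : G.Adj u w) : ∃ i, c i = u ∨ c i = w ∨ G.Adj u (c i) ∨ G.Adj w (c i) := by
  by_contra hcon
  push Not at hcon
  refine hdel {z | z ≠ u ∧ z ≠ w ∧ ¬ G.Adj u z ∧ ¬ G.Adj w z} ?_ u (by simp)
    (wim_induce hW _ {s(u, w)} (ind_single h) ?_ ?_)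
  · rintro _ ⟨i, rfl⟩
    exact hcon i
  · rintro k rfl f _ hf a ha b hb
    obtain ⟨h1, h2, h3, h4⟩ := hf b hb
    simp only [Sym2.mem_iff] at ha
    rcases ha with rfl | rfl
    · exact ⟨h1.symm, h3⟩
    · exact ⟨h2.symm, h4⟩
  · intro M _ _ hM k hk hK
    refine hM k hk fun a ha => ?_
    have h1 := hK _ rfl a ha u (by simp)
    have h2 := hK _ rfl a ha w (by simp)
    exact ⟨h1.1, h2.1, fun h => h1.2 h.symm, fun h => h2.2 h.symm⟩

/-- deleting a single vertex -/
lemma del_vertex (hW : WellIndumatched G)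
    (hdel : ∀ s : Set V, Set.range c ⊆ s → ∀ z, z ∉ s → ¬ WellIndumatched (G.induce s))
    {b : V} (hb : b ∉ Set.range c)
    (h : ∀ z, G.Adj b z → ∃ p q, p ≠ b ∧ q ≠ b ∧ G.Adj p q ∧
      ∀ m ∈ G.edgeSet, Far G s(b, z) m → Far G s(p, q) m) : False := by
  refine hdel {b}ᶜ ?_ b (by simp) (wim_induce hW _ ∅ (ind_empty G) (by simp) ?_)
  · rintro _ ⟨i, rfl⟩ h
    exact hb ⟨i, h⟩
  · intro M hI _ hM k hk _
    by_cases hbk : b ∈ k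
    · obtain ⟨z, rfl⟩ := hbk
      obtain ⟨p, q, hp, hq, hpq, hf⟩ := h z hk
      obtain ⟨m, hm, hm'⟩ := hM s(p, q) hpq (by simp [hp, hq])
      exact ⟨m, hm, fun h => hm' (hf m (hI.1 hm) h)⟩
    · refine hM k hk fun a ha hab => hbk ?_
      simp only [Set.mem_singleton_iff] at hab
      exact hab ▸ ha

lemma mem_edge {m : Sym2 V} (hm : m ∈ G.edgeSet) {x : V} (hx : x ∈ m) :
    ∃ t, G.Adj x t ∧ t ∈ m := by
  obtain ⟨t, rfl⟩ := hx
  exact ⟨t, hm, by simp⟩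

lemma reduced' (hW : WellIndumatched G)
    (hdel : ∀ s : Set V, Set.range c ⊆ s → ∀ z, z ∉ s → ¬ WellIndumatched (G.induce s))
    {x y : V} (hy : y ∉ Set.range c) (h : ∀ z, G.Adj x z ↔ G.Adj y z) : x = y := by
  by_contra hne
  refine del_vertex hW hdel hy fun z hz => ⟨x, z, hne, hz.ne', (h z).2 hz, ?_⟩
  intro m hm hf a ha v hv
  have hzv := hf z (by simp) v hv
  simp only [Sym2.mem_iff] at ha
  rcases ha with rfl | rfl
  · refine ⟨?_, fun hh => (hf y (by simp) v hv).2 ((h v).1 hh)⟩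
    rintro rfl
    obtain ⟨t, ht, htm⟩ := mem_edge hm hv
    exact (hf y (by simp) t htm).2 ((h t).1 ht)
  · exact hzv

lemma reduced (hc : Cyc G g c) (hg : 9 ≤ g) (hW : WellIndumatched G)
    (hdel : ∀ s : Set V, Set.range c ⊆ s → ∀ z, z ∉ s → ¬ WellIndumatched (G.induce s)) :
    Reduced G := by
  intro x y hxy
  have h : ∀ z, G.Adj x z ↔ G.Adj y z := fun z => by
    rw [← mem_neighborSet, hxy, mem_neighborSet]
  by_cases hy : y ∈ Set.range c
  · by_cases hx : x ∈ Set.range c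
    · obtain ⟨i, rfl⟩ := hx
      obtain ⟨j, rfl⟩ := hy
      have h1 := hc.chord _ _ ((h _).1 (hc.adj i)).symm
      have h3 : G.Adj (c i) (c (i - 1)) := by
        have := hc.adj (i - 1)
        rw [show i - 1 + 1 = i by ring] at this
        exact this.symm
      have h4 := hc.chord _ _ ((h _).1 h3).symm
      have e1 : i + 1 - 1 = i := by ring
      have e2 : i - 1 + 1 = i := by ring
      rw [e1] at h1
      rw [e2] at h4
      rcases h1 with h1 | h1
      · rcases h4 with h4 | h4
        · exact h4.symm
        · exfalso
          rw [h1, eq_comm, hc.mod] at h4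
          exact mod_ne (by omega) (by omega) h4
      · exact h1.symm
    · exact (reduced' hW hdel hx fun z => (h z).symm).symm
  · exact reduced' hW hdel hy h

lemma not_isolated (hW : WellIndumatched G)
    (hdel : ∀ s : Set V, Set.range c ⊆ s → ∀ z, z ∉ s → ¬ WellIndumatched (G.induce s))
    {b : V} (hb : b ∉ Set.range c) : ∃ z, G.Adj b z := by
  by_contra hcon
  push Not at hcon
  exact del_vertex hW hdel hb fun z hz => absurd hz (hcon z)

lemma no_leaf (hW : WellIndumatched G)
    (hdel : ∀ s : Set V, Set.range c ⊆ s → ∀ z, z ∉ s → ¬ WellIndumatched (G.induce s))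
    {v x y b : V} (hb : b ∉ Set.range c) (hx : G.Adj v x) (hy : G.Adj x y)
    (h1 : ∀ w, G.Adj x w → w = v ∨ w = y) (h2 : ∀ w, G.Adj y w → w = x)
    (hvb : G.Adj v b) (h3 : ∀ w, G.Adj b w → w = v) (hbx : b ≠ x) : False := by
  have hby : b ≠ y := by
    rintro rfl
    exact hx.ne (h2 v hvb.symm)
  refine del_vertex hW hdel hb fun z hz => ⟨x, y, hbx.symm, hby.symm, hy, ?_⟩
  obtain rfl := h3 z hz
  intro m hm hf a ha t ht
  have hv := hf z (by simp) t ht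
  have htx : t ≠ x := by
    rintro rfl
    exact hv.2 hx
  have hty : t ≠ y := by
    rintro rfl
    obtain ⟨s, hs, hsm⟩ := mem_edge hm ht
    obtain rfl := h2 s hs
    exact (hf z (by simp) s hsm).2 hx
  simp only [Sym2.mem_iff] at ha
  rcases ha with rfl | rfl
  · refine ⟨htx.symm, fun h => ?_⟩
    rcases h1 t h with h | h
    · exact hv.1 h.symm
    · exact hty h
  · exact ⟨hty.symm, fun h => htx (h2 t h)⟩


lemma l2 (hc : Cyc G g c) (hg : 9 ≤ g) (hgirth : G.girth = g) (hW : WellIndumatched G)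
    (hdel : ∀ s : Set V, Set.range c ⊆ s → ∀ z, z ∉ s → ¬ WellIndumatched (G.induce s))
    {x y : V} (hx : x ∉ Set.range c) {i : ℤ} (hi : G.Adj x (c i)) (hy : G.Adj x y)
    (hne : y ≠ c i) : y ∉ Set.range c ∧ ∀ w, G.Adj y w → w = x := by
  have hyS : y ∉ Set.range c := by
    rintro ⟨j, rfl⟩
    exact hne (g2 hc hg hgirth hx hy hi)
  have hyN : ∀ j, ¬ G.Adj y (c j) := fun j hj => g3 hc hg hgirth hx hyS hy hi hj
  refine ⟨hyS, fun w hw => ?_⟩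
  have hwS : w ∉ Set.range c := by
    rintro ⟨j, rfl⟩
    exact hyN j hw
  obtain ⟨k, hk | hk | hk | hk⟩ := m1 hW hdel hw
  · exact absurd ⟨k, hk⟩ hyS
  · exact absurd ⟨k, hk⟩ hwS
  · exact absurd hk (hyN k)
  · exact g4 hc hg hgirth hwS hx hyS hw hy.symm hk hi

lemma level1 (hc : Cyc G g c) (hg : 9 ≤ g) (hgirth : G.girth = g) (hW : WellIndumatched G)
    (hdel : ∀ s : Set V, Set.range c ⊆ s → ∀ z, z ∉ s → ¬ WellIndumatched (G.induce s))
    {x : V} (hx : x ∉ Set.range c) {i : ℤ} (hi : G.Adj x (c i)) :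
    (∀ w, G.Adj x w → w = c i) ∨ ∃ y, y ∉ Set.range c ∧ G.Adj x y ∧
      (∀ w, G.Adj x w → w = c i ∨ w = y) ∧ ∀ w, G.Adj y w → w = x := by
  by_cases h : ∀ w, G.Adj x w → w = c i
  · exact Or.inl h
  push Not at h
  obtain ⟨y, hy, hne⟩ := h
  obtain ⟨h1, h2⟩ := l2 hc hg hgirth hW hdel hx hi hy hne
  refine Or.inr ⟨y, h1, hy, fun w hw => ?_, h2⟩
  by_cases hwi : w = c i
  · exact Or.inl hwi
  · obtain ⟨h3, h4⟩ := l2 hc hg hgirth hW hdel hx hi hw hwi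
    refine Or.inr (reduced' hW hdel h1 fun z => ⟨fun h => ?_, fun h => ?_⟩)
    · rw [h4 z h]; exact hy.symm
    · rw [h2 z h]; exact hw.symm

lemma tri (hc : Cyc G g c) (hg : 9 ≤ g) (hgirth : G.girth = g) (hW : WellIndumatched G)
    (hdel : ∀ s : Set V, Set.range c ⊆ s → ∀ z, z ∉ s → ¬ WellIndumatched (G.induce s))
    (i : ℤ) : T0 G (Set.range c) (c i) ∨ TL G (Set.range c) (c i) ∨
    TP G (Set.range c) (c i) := by
  by_cases hP : ∃ x y, x ∉ Set.range c ∧ y ∉ Set.range c ∧ G.Adj x (c i) ∧ G.Adj x y ∧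
      (∀ w, G.Adj x w → w = c i ∨ w = y) ∧ ∀ w, G.Adj y w → w = x
  · obtain ⟨x, y, hx, hy, hxi, hxy, h1, h2⟩ := hP
    refine Or.inr (Or.inr ⟨x, y, hx, hy, hxi.symm, hxy, h1, h2, fun w hw => ?_⟩)
    by_contra hcon
    push Not at hcon
    obtain ⟨hwS, hwx⟩ := hcon
    rcases level1 hc hg hgirth hW hdel hwS hw.symm with h | ⟨y', hy', h3, h4, h5⟩
    · exact no_leaf hW hdel hwS hxi.symm hxy h1 h2 hw h hwx
    · exact two_P hW hxi.symm hxy (ne_c hc hg hgirth hy i) hw h3 (ne_c hc hg hgirth hy' i) h1 h2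
        h4 h5 (Ne.symm hwx)
  · by_cases h0 : T0 G (Set.range c) (c i)
    · exact Or.inl h0
    · refine Or.inr (Or.inl ?_)
      unfold T0 at h0
      push Not at h0
      have hleaf : ∀ b, G.Adj (c i) b → b ∉ Set.range c → ∀ w, G.Adj b w → w = c i := by
        intro b hb hbS
        rcases level1 hc hg hgirth hW hdel hbS hb.symm with h | ⟨y, hy, h3, h4, h5⟩
        · exact h
        · exact absurd ⟨b, y, hbS, hy, hb.symm, h3, h4, h5⟩ hP
      obtain ⟨b, hb, hbS⟩ := h0
      refine ⟨b, hbS, hb, hleaf b hb hbS, fun w hw => ?_⟩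
      by_cases hwS : w ∈ Set.range c
      · exact Or.inl hwS
      · refine Or.inr (reduced' hW hdel hbS fun z => ⟨fun h => ?_, fun h => ?_⟩)
        · rw [hleaf w hw hwS z h]; exact hb.symm
        · rw [hleaf b hb hbS z h]; exact hw.symm

lemma di (hc : Cyc G g c) (hg : 9 ≤ g) (hgirth : G.girth = g) (hW : WellIndumatched G)
    (hdel : ∀ s : Set V, Set.range c ⊆ s → ∀ z, z ∉ s → ¬ WellIndumatched (G.induce s))
    (i : ℤ) : T0 G (Set.range c) (c i) ∨ TP G (Set.range c) (c i) := by
  rcases tri hc hg hgirth hW hdel i with h | h | h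
  · exact Or.inl h
  · exact (no_L hW hc hg (tri hc hg hgirth hW hdel) i h).elim
  · exact Or.inr h

/-- a vertex off the cycle lies in a pendant path -/
lemma off (hc : Cyc G g c) (hg : 9 ≤ g) (hgirth : G.girth = g) (hW : WellIndumatched G)
    (hdel : ∀ s : Set V, Set.range c ⊆ s → ∀ z, z ∉ s → ¬ WellIndumatched (G.induce s))
    {w : V} (hw : w ∉ Set.range c) : ∃ i x y, x ∉ Set.range c ∧ y ∉ Set.range c ∧
    G.Adj (c i) x ∧ G.Adj x y ∧ (∀ w, G.Adj x w → w = c i ∨ w = y) ∧ (∀ w, G.Adj y w → w = x) ∧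
    (w = x ∨ w = y) := by
  have key : ∀ u, u ∉ Set.range c → ∀ i, G.Adj u (c i) → ∃ y, y ∉ Set.range c ∧
    G.Adj u y ∧ (∀ w, G.Adj u w → w = c i ∨ w = y) ∧ (∀ w, G.Adj y w → w = u) := by
    intro u hu i hi
    rcases di hc hg hgirth hW hdel i with h | ⟨x, y, hx, hy, hix, hxy, h1, h2, h3⟩
    · exact absurd (h u hi.symm) hu
    · rcases h3 u hi.symm with h | rfl
      · exact absurd h hu
      · exact ⟨y, hy, hxy, h1, h2⟩
  obtain ⟨z, hz⟩ := not_isolated hW hdel hw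
  have main : ∀ i, G.Adj w (c i) → ∃ i x y, x ∉ Set.range c ∧ y ∉ Set.range c ∧
      G.Adj (c i) x ∧ G.Adj x y ∧ (∀ w, G.Adj x w → w = c i ∨ w = y) ∧
      (∀ w, G.Adj y w → w = x) ∧ (w = x ∨ w = y) := by
    intro i hi
    obtain ⟨y, h1, h2, h3, h4⟩ := key w hw i hi
    exact ⟨i, w, y, hw, h1, hi.symm, h2, h3, h4, Or.inl rfl⟩
  obtain ⟨k, hk | hk | hk | hk⟩ := m1 hW hdel hz
  · exact absurd ⟨k, hk⟩ hw
  · exact main k (hk ▸ hz)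
  · exact main k hk
  · by_cases hzS : z ∈ Set.range c
    · obtain ⟨j, rfl⟩ := hzS
      exact main j hz
    · obtain ⟨y, h1, h2, h3, h4⟩ := key z hzS k hk
      refine ⟨k, z, y, hzS, h1, hk.symm, h2, h3, h4, Or.inr ?_⟩
      rcases h3 w hz.symm with h | h
      · exact absurd ⟨k, h.symm⟩ hw
      · exact h

end red

section fin

lemma cycle_two {V : Type*} [Finite V] {G : SimpleGraph V} {w : V} {D : G.Walk w w}
    (hD : D.IsCycle) {u : V} (hu : u ∈ D.support) :
    ∃ a b, a ≠ b ∧ s(u, a) ∈ D.edges ∧ s(u, b) ∈ D.edges := by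
  have h := hD.ncard_neighborSet_toSubgraph_eq_two hu
  obtain ⟨a, b, hab, h⟩ := Set.ncard_eq_two.1 h
  refine ⟨a, b, hab, ?_, ?_⟩
  · rw [← Walk.adj_toSubgraph_iff_mem_edges, ← Subgraph.mem_neighborSet, h]; simp
  · rw [← Walk.adj_toSubgraph_iff_mem_edges, ← Subgraph.mem_neighborSet, h]; simp

lemma supp_subset {V : Type*} {H : SimpleGraph V} {v : V} {A : Set V} (hv : v ∈ A)
    (hA : ∀ a ∈ A, ∀ b, H.Adj a b → b ∈ A) : (H.connectedComponentMk v).supp ⊆ A := by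
  intro w hw
  rw [ConnectedComponent.mem_supp_iff, ConnectedComponent.eq] at hw
  obtain ⟨p⟩ := hw.symm
  have : ∀ {a b : V} (p : H.Walk a b), a ∈ A → b ∈ A := by
    intro a b p
    induction p with
    | nil => exact id
    | cons h p ih => exact fun ha => ih (hA _ ha _ h)
  exact this p hv

lemma final {V : Type*} [Fintype V] (G : SimpleGraph V) (g : ℕ) (hg : 9 ≤ g)
    (hgirth : G.girth = g) (hW : WellIndumatched G)
    (hmin : ∀ H : G.Subgraph, H ≠ ⊤ →
      ¬ (WellIndumatched H.coe ∧ H.coe.girth = g)) :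
    Reduced G ∧ G.Connected ∧
      ∃ (v : V) (C : G.Walk v v), C.IsCycle ∧ C.length = g ∧
        (∀ (w : V) (D : G.Walk w w), D.IsCycle → ∀ e, e ∈ D.edges ↔ e ∈ C.edges) ∧
        ∀ w ∈ C.support,
          TypeI (G.deleteEdges {e | e ∈ C.edges}) w ∨
            TypeII (G.deleteEdges {e | e ∈ C.edges}) w := by
  classical
  have hcyc : ¬ G.IsAcyclic := by
    intro h
    rw [← girth_eq_zero] at h
    omega
  obtain ⟨v, C, hC, hCl⟩ := exists_girth_eq_length.2 hcyc
  rw [hgirth] at hCl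
  obtain ⟨c, hmod, hedge, hsupp⟩ := exists_index C hC hCl.symm hg
  have hadj : ∀ i, G.Adj (c i) (c (i + 1)) := fun i => C.edges_subset_edgeSet (hedge i)
  have hc : Cyc G g c := ⟨hmod, hadj, chord hmod hadj hg hgirth⟩
  have hdel : ∀ s : Set V, Set.range c ⊆ s → ∀ z, z ∉ s → ¬ WellIndumatched (G.induce s) :=
    fun s hs z hz hWs => no_wim G g hgirth hmin C hC hCl.symm s
      (fun w hw => hs ((hsupp w).2 hw)) z hz hWs
  have hoff := fun {w : V} (hw : w ∉ Set.range c) => off hc hg hgirth hW hdel hw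
  have hCadj : ∀ a b, a ∈ Set.range c → b ∈ Set.range c → G.Adj a b → s(a, b) ∈ C.edges := by
    rintro _ _ ⟨i, rfl⟩ ⟨j, rfl⟩ h
    rcases hc.chord i j h with h | h
    · rw [h]; exact hedge i
    · rw [h, Sym2.eq_swap]
      have := hedge (i - 1)
      rwa [show i - 1 + 1 = i by ring] at this
  have hreachC : ∀ w ∈ Set.range c, G.Reachable v w := fun w hw =>
    ⟨C.takeUntil w ((hsupp w).1 hw)⟩
  refine ⟨reduced hc hg hW hdel, ?_, v, C, hC, hCl.symm, ?_, ?_⟩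
  · have hr : ∀ w, G.Reachable v w := by
      intro w
      by_cases hw : w ∈ Set.range c
      · exact hreachC w hw
      · obtain ⟨i, x, y, -, -, h1, h2, -, -, h3⟩ := hoff hw
        have hx := (hreachC (c i) ⟨i, rfl⟩).trans h1.reachable
        rcases h3 with rfl | rfl
        · exact hx
        · exact hx.trans h2.reachable
    exact (connected_iff_exists_forall_reachable G).2 ⟨v, hr⟩
  · intro w D hD
    have hDy : ∀ x y, (∀ w, G.Adj y w → w = x) → y ∉ D.support := by
      intro x y h hy
      obtain ⟨a, b, hab, ha, hb⟩ := cycle_two hD hy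
      exact hab ((h a (D.edges_subset_edgeSet ha)).trans (h b (D.edges_subset_edgeSet hb)).symm)
    have hDS : ∀ u ∈ D.support, u ∈ Set.range c := by
      intro u hu
      by_contra huS
      obtain ⟨i, x, y, -, -, -, -, h1, h2, h3⟩ := hoff huS
      rcases h3 with rfl | rfl
      · obtain ⟨a, b, hab, ha, hb⟩ := cycle_two hD hu
        rcases h1 a (D.edges_subset_edgeSet ha) with h | h
        · rcases h1 b (D.edges_subset_edgeSet hb) with h' | h'
          · exact hab (h.trans h'.symm)
          · exact hDy _ _ h2 (h' ▸ D.snd_mem_support_of_mem_edges hb)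
        · exact hDy _ _ h2 (h ▸ D.snd_mem_support_of_mem_edges ha)
      · exact hDy _ _ h2 hu
    have hsub : D.edges.toFinset ⊆ C.edges.toFinset := by
      intro e he
      rw [List.mem_toFinset] at he ⊢
      induction e with | _ a b
      exact hCadj a b (hDS a (D.fst_mem_support_of_mem_edges he))
        (hDS b (D.snd_mem_support_of_mem_edges he)) (D.edges_subset_edgeSet he)
    have hDl := girth_le_length hD
    have heq := Finset.eq_of_subset_of_card_le hsub (by
      rw [List.toFinset_card_of_nodup hC.edges_nodup, List.toFinset_card_of_nodup hD.edges_nodup,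
        Walk.length_edges, Walk.length_edges]
      omega)
    intro e
    rw [← List.mem_toFinset, heq, List.mem_toFinset]
  · intro w hw
    obtain ⟨i, rfl⟩ := (hsupp w).2 hw
    have hne : ∀ a b, a ∉ Set.range c → s(a, b) ∉ C.edges := fun a b ha h =>
      ha ((hsupp a).2 (C.fst_mem_support_of_mem_edges h))
    rcases di hc hg hgirth hW hdel i with h | ⟨x, y, hx, hy, hix, hxy, h1, h2, h3⟩
    · left
      apply Set.Subset.antisymm
      · apply supp_subset (by simp)
        rintro a rfl b hb
        rw [deleteEdges_adj] at hb
        exact absurd (hCadj _ _ ⟨i, rfl⟩ (h b hb.1) hb.1) hb.2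
      · rintro _ rfl
        simp
    · right
      have a1 : (G.deleteEdges {e | e ∈ C.edges}).Adj (c i) x := by
        rw [deleteEdges_adj]
        exact ⟨hix, fun h => hne x (c i) hx (by rw [Sym2.eq_swap]; exact h)⟩
      have a2 : (G.deleteEdges {e | e ∈ C.edges}).Adj x y := by
        rw [deleteEdges_adj]
        exact ⟨hxy, hne x y hx⟩
      refine ⟨x, y, hxy.ne, hix.ne, fun h => hy ⟨i, h⟩, ?_, a1, a2, ?_⟩
      · apply Set.Subset.antisymm
        · apply supp_subset (by simp)
          rintro a (rfl | rfl | rfl) b hb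
          · rw [deleteEdges_adj] at hb
            rcases h3 b hb.1 with h | rfl
            · exact absurd (hCadj _ _ ⟨i, rfl⟩ h hb.1) hb.2
            · simp
          · rcases h1 b hb.1 with rfl | rfl <;> simp
          · rw [h2 b hb.1]; simp
        · rintro _ (rfl | rfl | rfl)
          · simp
          · rw [ConnectedComponent.mem_supp_iff, ConnectedComponent.eq]
            exact a1.reachable.symm
          · rw [ConnectedComponent.mem_supp_iff, ConnectedComponent.eq]
            exact (a1.reachable.trans a2.reachable).symm
      · intro h
        exact hix.ne (h2 _ h.1.symm)

end fin

end Stmt11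

/-- If `G` is a minimal well-indumatched graph of girth `g ≥ 9` (no proper subgraph is a
well-indumatched graph of girth `g`), then `G` is a reduced unicyclic graph whose unique
cycle `C` has length `g`, and every rooted tree `T_v`, `v ∈ C`, i.e. the component of
`v` in `G − E(C)`, is of Type (i) or Type (ii). -/
theorem stmt_11 {V : Type*} [Fintype V] (G : SimpleGraph V) (g : ℕ) (hg : 9 ≤ g)
    (hgirth : G.girth = g) (hWIM : WellIndumatched G)
    (hmin : ∀ H : G.Subgraph, H ≠ ⊤ →
      ¬ (WellIndumatched H.coe ∧ H.coe.girth = g)) :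
    Reduced G ∧ G.Connected ∧
      ∃ (v : V) (C : G.Walk v v), C.IsCycle ∧ C.length = g ∧
        (∀ (w : V) (D : G.Walk w w), D.IsCycle → ∀ e, e ∈ D.edges ↔ e ∈ C.edges) ∧
        ∀ w ∈ C.support,
          TypeI (G.deleteEdges {e | e ∈ C.edges}) w ∨
            TypeII (G.deleteEdges {e | e ∈ C.edges}) w := by
  exact Stmt11.final G g hg hgirth hWIM hmin
end

section
/- Let G be a reduced well-indumatched unicyclic graph of girth 11 with unique cycle C = v1 v2 ... v11 v1 such that for every i the rooted tree T_{v_i} is of Type (i) or of Type (ii). Then G is the cycle C_11. -/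
open SimpleGraph

namespace Ind11

/-- Model vertices: `(i,0)` is the cycle vertex `v_i`, `(i,1)`, `(i,2)` the pendant path at `v_i`. -/
abbrev P := Fin 11 × Fin 3

/-- Adjacency of model vertices. -/
def adjL (a b : P) : Bool :=
  (a.2 == 0 && b.2 == 0 && (b.1 == a.1 + 1 || a.1 == b.1 + 1)) ||
  (a.1 == b.1 && ((a.2 == 0 && b.2 == 1) || (a.2 == 1 && b.2 == 0) ||
    (a.2 == 1 && b.2 == 2) || (a.2 == 2 && b.2 == 1)))

/-- Two model vertices are equal or adjacent. -/
def near (a b : P) : Bool := a == b || adjL a b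

/-- Two model edges conflict. -/
def conf (e f : P × P) : Bool :=
  near e.1 f.1 || near e.1 f.2 || near e.2 f.1 || near e.2 f.2

/-- A model vertex is present. -/
def Valid (S : Fin 11 → Prop) (a : P) : Prop := a.2 = 0 ∨ S a.1

/-- `g` identifies the graph `G` with the model graph with pendant paths at the set `S`. -/
structure Lab {V : Type*} (G : SimpleGraph V) (S : Fin 11 → Prop) (g : P → V) : Prop where
  inj : ∀ a b, Valid S a → Valid S b → g a = g b → a = b
  surj : ∀ u, ∃ a, Valid S a ∧ g a = u
  adj : ∀ a b, Valid S a → Valid S b → (G.Adj (g a) (g b) ↔ adjL a b = true)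

/-- Rotation of model vertices. -/
def rot (r : Fin 11) (a : P) : P := (a.1 + r, a.2)

lemma rot_valid (S : Fin 11 → Prop) (r : Fin 11) (a : P) :
    Valid (fun i => S (i + r)) a ↔ Valid S (rot r a) := Iff.rfl

lemma rot_adj (r : Fin 11) (a b : P) : adjL (rot r a) (rot r b) = adjL a b := by
  have h : ∀ i j : Fin 11, (j + r = i + r + 1) ↔ (j = i + 1) := by
    intro i j
    rw [add_right_comm, add_left_inj]
  rw [Bool.eq_iff_iff]
  simp only [adjL, rot, Bool.or_eq_true, Bool.and_eq_true, beq_iff_eq, h, add_left_inj]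

lemma rot_inj (r : Fin 11) (a b : P) (h : rot r a = rot r b) : a = b := by
  simp only [rot, Prod.mk.injEq, add_left_inj] at h
  exact Prod.ext h.1 h.2

lemma Lab.rotate {V : Type*} {G : SimpleGraph V} {S : Fin 11 → Prop} {g : P → V}
    (h : Lab G S g) (r : Fin 11) : Lab G (fun i => S (i + r)) (fun a => g (rot r a)) where
  inj a b ha hb hab := rot_inj r a b (h.inj _ _ ha hb hab)
  surj u := by
    obtain ⟨a, ha, hu⟩ := h.surj u
    have e : rot r (a.1 - r, a.2) = a := by simp [rot]
    refine ⟨(a.1 - r, a.2), ?_, ?_⟩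
    · rw [rot_valid, e]; exact ha
    · simp only [e, hu]
  adj a b ha hb := by
    rw [h.adj _ _ ((rot_valid S r a).1 ha) ((rot_valid S r b).1 hb), rot_adj]

/-- A list of model edges is a maximal induced matching, for every `S` containing `R` and
disjoint from `F`. -/
def Good (R F : ℕ) (M : List (P × P)) : Prop :=
  (∀ e ∈ M, adjL e.1 e.2 = true ∧ (e.1.2 = 0 ∨ R.testBit e.1.1.val = true) ∧ (e.2.2 = 0 ∨ R.testBit e.2.1.val = true)) ∧
  M.Pairwise (fun e f => conf e f = false) ∧
  (∀ a b : P, adjL a b = true → (a.2 = 0 ∨ F.testBit a.1.val ≠ true) → (b.2 = 0 ∨ F.testBit b.1.val ≠ true) →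
    ∃ e ∈ M, conf e (a, b) = true)

/-- Boolean version of `Good`. -/
def goodB (R F : ℕ) (M : List (P × P)) : Bool :=
  (M.all fun e => adjL e.1 e.2 && (e.1.2 == 0 || R.testBit e.1.1.val) &&
    (e.2.2 == 0 || R.testBit e.2.1.val)) &&
  decide (M.Pairwise (fun e f => conf e f = false)) &&
  decide (∀ i j : Fin 11, ∀ k l : Fin 3, (!(adjL (i, k) (j, l)) ||
    (!(k == 0) && F.testBit i.val) || (!(l == 0) && F.testBit j.val) ||
    M.any fun e => conf e ((i, k), (j, l))) = true)

lemma good_of_goodB {R F : ℕ} {M : List (P × P)} (h : goodB R F M = true) :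
    Good R F M := by
  simp only [goodB, Bool.and_eq_true, decide_eq_true_eq, List.all_eq_true, Bool.or_eq_true,
    beq_iff_eq, List.any_eq_true, Bool.not_eq_true'] at h
  obtain ⟨⟨h1, h2⟩, h3⟩ := h
  refine ⟨fun e he => ⟨(h1 e he).1.1, (h1 e he).1.2, (h1 e he).2⟩, h2, ?_⟩
  rintro ⟨i, k⟩ ⟨j, l⟩ hadj ha hb
  simp only at ha hb
  rcases h3 i j k l with ((h4 | ⟨h4, h5⟩) | ⟨h4, h5⟩) | h4
  · rw [hadj] at h4; cases h4
  · have : k ≠ 0 := by simpa using h4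
    tauto
  · have : l ≠ 0 := by simpa using h4
    tauto
  · exact h4

lemma near_comm (a b : P) : near a b = near b a := by
  rw [Bool.eq_iff_iff]
  simp only [near, adjL, Bool.or_eq_true, Bool.and_eq_true, beq_iff_eq]
  grind

lemma conf_comm (e f : P × P) : conf e f = conf f e := by
  simp only [conf, near_comm e.1, near_comm e.2]
  rw [Bool.eq_iff_iff]
  simp only [Bool.or_eq_true]
  tauto

lemma conf_self (e : P × P) : conf e e = true := by simp [conf, near]

section
variable {V : Type*} {G : SimpleGraph V} {S : Fin 11 → Prop} {g : P → V}

/-- The edge of `G` named by a model edge. -/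
def im (g : P → V) (e : P × P) : Sym2 V := s(g e.1, g e.2)

lemma Lab.near_iff (h : Lab G S g) {a b : P} (ha : Valid S a) (hb : Valid S b) :
    near a b = true ↔ (g a = g b ∨ G.Adj (g a) (g b)) := by
  simp only [near, Bool.or_eq_true, beq_iff_eq, h.adj a b ha hb]
  constructor
  · rintro (rfl | h') <;> simp_all
  · rintro (h' | h')
    · exact Or.inl (h.inj _ _ ha hb h')
    · exact Or.inr h'

lemma Lab.conf_iff (h : Lab G S g) {e f : P × P} (he1 : Valid S e.1) (he2 : Valid S e.2)
    (hf1 : Valid S f.1) (hf2 : Valid S f.2) :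
    conf e f = false ↔ ∀ u ∈ im g e, ∀ v ∈ im g f, u ≠ v ∧ ¬ G.Adj u v := by
  simp only [conf, im, Sym2.mem_iff, Bool.or_eq_false_iff]
  simp only [← Bool.not_eq_true, h.near_iff he1 hf1, h.near_iff he1 hf2,
    h.near_iff he2 hf1, h.near_iff he2 hf2]
  constructor
  · rintro ⟨⟨⟨h1, h2⟩, h3⟩, h4⟩ u (rfl | rfl) v (rfl | rfl) <;> tauto
  · intro H
    have h1 := H _ (Or.inl rfl) _ (Or.inl rfl)
    have h2 := H _ (Or.inl rfl) _ (Or.inr rfl)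
    have h3 := H _ (Or.inr rfl) _ (Or.inl rfl)
    have h4 := H _ (Or.inr rfl) _ (Or.inr rfl)
    tauto

lemma Lab.maximal (h : Lab G S g) {R F : ℕ} {M : List (P × P)}
    (hM : Good R F M) (hR : ∀ i : Fin 11, R.testBit i.val = true → S i)
    (hF : ∀ i : Fin 11, F.testBit i.val = true → ¬ S i) :
    IsMaximalInducedMatching G (im g '' {e | e ∈ M}) ∧
      (im g '' {e | e ∈ M}).ncard = M.length := by
  obtain ⟨h1, h2, h3⟩ := hM
  have hv : ∀ e ∈ M, Valid S e.1 ∧ Valid S e.2 := fun e he =>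
    ⟨(h1 e he).2.1.imp id (hR _), (h1 e he).2.2.imp id (hR _)⟩
  have hnd : M.Nodup := h2.imp (fun {a b} hab heq => by
    subst heq; rw [conf_self] at hab; cases hab)
  have hpw : ∀ e ∈ M, ∀ f ∈ M, e ≠ f → conf e f = false := by
    intro e he f hf hne
    have : Std.Symm (fun e f : P × P => conf e f = false) :=
      ⟨fun x y hxy => by rw [conf_comm]; exact hxy⟩
    exact h2.forall he hf hne
  have hvF : ∀ a, Valid S a → (a.2 = 0 ∨ F.testBit a.1.val ≠ true) := fun a ha =>
    ha.imp id (fun hs hf => hF _ hf hs)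
  have hind : IsInducedMatching G (im g '' {e | e ∈ M}) := by
    constructor
    · rintro _ ⟨e, he, rfl⟩
      exact (h.adj _ _ (hv e he).1 (hv e he).2).2 (h1 e he).1
    · rintro _ ⟨e, he, rfl⟩ _ ⟨f, hf, rfl⟩ hne
      refine (h.conf_iff (hv e he).1 (hv e he).2 (hv f hf).1 (hv f hf).2).1 (hpw e he f hf ?_)
      rintro rfl; exact hne rfl
  refine ⟨⟨hind, ?_⟩, ?_⟩
  · intro N hN hsub
    refine Set.Subset.antisymm ?_ hsub
    intro x hx
    induction x using Sym2.ind with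
    | _ u w =>
      obtain ⟨a, ha, rfl⟩ := h.surj u
      obtain ⟨b, hb, rfl⟩ := h.surj w
      have hadj := (h.adj a b ha hb).1 (hN.1 hx)
      obtain ⟨e, he, hc⟩ := h3 a b hadj (hvF a ha) (hvF b hb)
      by_contra hnot
      have hne : im g e ≠ s(g a, g b) := fun heq => hnot ⟨e, he, heq⟩
      have := hN.2 _ (hsub ⟨e, he, rfl⟩) _ hx hne
      have h5 := (h.conf_iff (f := (a, b)) (hv e he).1 (hv e he).2 ha hb).2 this
      rw [h5] at hc; cases hc
  · rw [Set.InjOn.ncard_image]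
    · rw [← List.toFinset_card_of_nodup hnd, ← Set.ncard_coe_finset]
      congr 1; ext; simp
    · intro e he f hf hef
      by_contra hne
      have hh := (h.conf_iff (hv e he).1 (hv e he).2 (hv f hf).1 (hv f hf).2).1
        (hpw e he f hf hne)
      rw [← hef] at hh
      exact (hh (g e.1) (by simp [im]) (g e.1) (by simp [im])).1 rfl

end

/-- Cycle edge. -/
def c (i : Fin 11) : P × P := ((i, 0), (i + 1, 0))
/-- First pendant edge. -/
def p (i : Fin 11) : P × P := ((i, 0), (i, 1))
/-- Second pendant edge. -/
def q (i : Fin 11) : P × P := ((i, 1), (i, 2))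

/-- A witness: two maximal induced matchings. -/
structure Wit where
  R : ℕ
  F : ℕ
  M : List (P × P)
  N : List (P × P)

/-- The list of witnesses. -/
def wits : List Wit := [
  ⟨294, 1536, [c 0, q 2, c 3, q 5, c 6, q 8],
    [q 1, q 2, c 3, q 5, c 6, q 8, c 10]⟩,
  ⟨804, 1088, [c 0, q 2, c 3, q 5, c 7, q 9],
    [c 0, q 2, c 3, q 5, c 6, q 8, p 9]⟩,
  ⟨68, 1824, [c 0, q 2, c 3, c 6],
    [c 0, q 2, c 3, q 6, c 7]⟩,
  ⟨64, 1828, [c 0, c 3, c 6],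
    [c 0, c 3, q 6, c 7]⟩,
  ⟨1316, 576, [c 0, q 2, c 3, q 5, c 7, q 10],
    [c 0, q 2, c 3, q 5, c 6, q 8, q 10]⟩,
  ⟨526, 1088, [c 0, q 2, q 3, c 4, c 7, q 9],
    [q 1, p 2, q 3, c 4, c 7, q 9, c 10]⟩,
  ⟨580, 1160, [c 0, q 2, c 4, q 6, c 8],
    [c 0, q 2, c 4, q 6, c 7, q 9]⟩,
  ⟨28, 1216, [c 0, q 2, q 3, c 4, c 8],
    [c 0, q 2, p 3, q 4, c 5, c 8]⟩,
  ⟨38, 1792, [c 0, q 2, c 3, q 5, c 6],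
    [q 1, q 2, c 3, q 5, c 6, c 10]⟩,
  ⟨996, 1024, [c 0, q 2, c 3, q 5, c 6, q 8, p 9],
    [c 0, q 2, c 3, q 5, p 6, q 7, p 8, q 9]⟩,
  ⟨708, 1312, [c 0, q 2, c 3, c 6, p 9],
    [c 0, q 2, c 3, p 6, q 7, c 8]⟩,
  ⟨164, 1856, [c 0, q 2, c 3, q 5, c 6],
    [c 0, q 2, c 3, q 5, q 7, c 8]⟩,
  ⟨2020, 0, [c 0, q 2, c 3, q 5, c 6, q 8, p 9, q 10],
    [c 0, q 2, c 3, q 5, p 6, q 7, p 8, q 9, q 10]⟩]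

lemma wits_goodB : (wits.all fun w => goodB w.R w.F w.M && goodB w.R w.F w.N &&
    !(w.M.length == w.N.length)) = true := by
  decide +kernel

lemma wits_good : ∀ w ∈ wits,
    Good w.R w.F w.M ∧ Good w.R w.F w.N ∧ w.M.length ≠ w.N.length := by
  intro w hw
  have h := List.all_eq_true.1 wits_goodB w hw
  simp only [Bool.and_eq_true] at h
  exact ⟨good_of_goodB h.1.1, good_of_goodB h.1.2, by simpa using h.2⟩

/-- Rotation of a bit pattern. -/
def rotN (s r : ℕ) : ℕ := (s >>> r) ||| (s <<< (11 - r))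

lemma testBit_rotN (s r i : ℕ) (hs : s < 2048) (hr : r < 11) (hi : i < 11) :
    (rotN s r).testBit i = s.testBit ((i + r) % 11) := by
  rw [rotN, Nat.testBit_or, Nat.testBit_shiftRight, Nat.testBit_shiftLeft]
  by_cases h : i + r < 11
  · rw [Nat.mod_eq_of_lt h, add_comm r i]
    have : ¬ (11 - r ≤ i) := by omega
    simp [this]
  · have h1 : (i + r) % 11 = i - (11 - r) := by omega
    have h2 : s.testBit (r + i) = false := by
      apply Nat.testBit_lt_two_pow
      calc s < 2 ^ 11 := hs
        _ ≤ 2 ^ (r + i) := Nat.pow_le_pow_right (by norm_num) (by omega)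
    have h3 : 11 - r ≤ i := by omega
    rw [h1, h2]
    simp [h3]

/-- The pattern `t` is handled by one of the witnesses. -/
def matchB (t : ℕ) : Bool := wits.any fun w => Nat.beq (t &&& w.R) w.R && Nat.beq (t &&& w.F) 0

/-- Some rotation of the pattern `s` is handled by one of the witnesses. -/
def covB (s : ℕ) : Bool := (List.range 11).any fun r => matchB (rotN s r)

lemma wits_covB : ((List.range 2048).all fun s => Nat.beq s 0 || covB s) = true := by
  decide +kernel

lemma wits_cover (s : ℕ) (hs : s < 2048) (h0 : s ≠ 0) : ∃ r < 11, ∃ w ∈ wits,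
    (∀ i < 11, w.R.testBit i = true → s.testBit ((i + r) % 11) = true) ∧
    (∀ i < 11, w.F.testBit i = true → s.testBit ((i + r) % 11) = false) := by
  have h := List.all_eq_true.1 wits_covB s (List.mem_range.2 hs)
  simp only [covB, matchB, Bool.or_eq_true, Nat.beq_eq, h0, false_or, List.any_eq_true,
    List.mem_range, Bool.and_eq_true] at h
  obtain ⟨r, hr, w, hw, h1, h2⟩ := h
  refine ⟨r, hr, w, hw, fun i hi hb => ?_, fun i hi hb => ?_⟩
  · rw [← testBit_rotN s r i hs hr hi]
    have h3 := congrArg (fun x => Nat.testBit x i) h1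
    simpa [hb] using h3
  · rw [← testBit_rotN s r i hs hr hi]
    have h3 := congrArg (fun x => Nat.testBit x i) h2
    simpa [hb] using h3

lemma cover (S : Fin 11 → Prop) (hS : ∃ i, S i) : ∃ r : Fin 11, ∃ w ∈ wits,
    (∀ i : Fin 11, w.R.testBit i.val = true → S (i + r)) ∧ (∀ i : Fin 11, w.F.testBit i.val = true → ¬ S (i + r)) := by
  classical
  let f : Fin 11 → Bool := fun i => decide (S i)
  have hf : ∀ i : Fin 11, (Nat.ofBits f).testBit i.val = f i := fun i =>
    Nat.testBit_ofBits_lt f i.val i.isLt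
  have hlt : Nat.ofBits f < 2048 := Nat.ofBits_lt_two_pow f
  have hne : Nat.ofBits f ≠ 0 := by
    intro h0'
    obtain ⟨i, hi⟩ := hS
    have := hf i
    rw [h0'] at this
    simp [f, hi] at this
  obtain ⟨r, hr, w, hw, h1, h2⟩ := wits_cover _ hlt hne
  refine ⟨⟨r, hr⟩, w, hw, fun i hi => ?_, fun i hi => ?_⟩
  · have h3 := h1 i.val i.isLt hi
    have this := hf (i + ⟨r, hr⟩)
    rw [Fin.val_add, h3] at this
    simpa [f] using this.symm
  · have h3 := h2 i.val i.isLt hi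
    have this := hf (i + ⟨r, hr⟩)
    rw [Fin.val_add, h3] at this
    simpa [f] using this.symm

lemma Lab.empty {V : Type*} {G : SimpleGraph V} {S : Fin 11 → Prop} {g : P → V}
    (h : Lab G S g) (hW : WellIndumatched G) : ∀ i, ¬ S i := by
  by_contra hS
  push Not at hS
  obtain ⟨r, w, hw, hR, hF⟩ := cover S hS
  obtain ⟨g1, g2, g3⟩ := wits_good w hw
  have m1 := (h.rotate r).maximal g1 hR hF
  have m2 := (h.rotate r).maximal g2 hR hF
  exact g3 (by rw [← m1.2, ← m2.2]; exact hW _ _ m1.1 m2.1)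

lemma cyc_adj : ∀ i j : Fin 11, (SimpleGraph.cycleGraph 11).Adj i j ↔ 
    adjL (i, 0) (j, 0) = true := by
  decide +kernel

lemma Lab.iso {V : Type*} {G : SimpleGraph V} {S : Fin 11 → Prop} {g : P → V}
    (h : Lab G S g) (hS : ∀ i, ¬ S i) : Nonempty (G ≃g SimpleGraph.cycleGraph 11) := by
  have hv : ∀ i : Fin 11, Valid S (i, 0) := fun i => Or.inl rfl
  let f : Fin 11 → V := fun i => g (i, 0)
  have hb : Function.Bijective f := by
    constructor
    · intro i j hij
      exact congrArg Prod.fst (h.inj _ _ (hv i) (hv j) hij)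
    · intro u
      obtain ⟨⟨i, k⟩, ha, rfl⟩ := h.surj u
      rcases ha with ha | ha
      · simp only at ha; subst ha; exact ⟨i, rfl⟩
      · exact absurd ha (hS _)
  refine ⟨(RelIso.mk (Equiv.ofBijective f hb) ?_).symm⟩
  intro i j
  rw [cyc_adj]
  exact h.adj _ _ (hv i) (hv j)

end Ind11
namespace Ind11

/-- Adjacency in the rooted path. -/
def treeL (k l : Fin 3) : Bool :=
  (k == 0 && l == 1) || (k == 1 && l == 0) || (k == 1 && l == 2) || (k == 2 && l == 1)

section
variable {V : Type*} {G : SimpleGraph V} {v : V}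

lemma edges_iff (C : G.Walk v v) (hlen : C.length = 11) (e : Sym2 V) :
    e ∈ C.edges ↔ ∃ i : Fin 11, e = s(C.getVert i.val, C.getVert (i + 1).val) := by
  have hsucc : ∀ i : Fin 11, C.getVert (i + 1).val = C.getVert (i.val + 1) := by
    intro i
    by_cases hi : i.val = 10
    · have h1 : (i + 1).val = 0 := by
        have : i = 10 := Fin.ext hi
        subst this; rfl
      rw [h1, hi, C.getVert_zero]
      have := C.getVert_length
      rw [hlen] at this
      exact this.symm
    · congr 1
      have := i.isLt
      rw [Fin.val_add_one_of_lt']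
      omega
  induction e using Sym2.ind with
  | _ a b =>
    rw [← SimpleGraph.Walk.adj_toSubgraph_iff_mem_edges, SimpleGraph.Walk.toSubgraph_adj_iff]
    constructor
    · rintro ⟨i, hi, hl⟩
      rw [hlen] at hl
      exact ⟨⟨i, hl⟩, by rw [hsucc, hi]⟩
    · rintro ⟨i, hi⟩
      exact ⟨i.val, by rw [← hsucc, hi], by rw [hlen]; exact i.isLt⟩

lemma separated (C : G.Walk v v)
    (huniq : ∀ (w : V) (D : G.Walk w w), D.IsCycle → ∀ e, e ∈ D.edges ↔ e ∈ C.edges)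
    {a b : V} (ha : a ∈ C.support) (hb : b ∈ C.support)
    (hr : (G.deleteEdges {e | e ∈ C.edges}).Reachable a b) : a = b := by
  classical
  by_contra hab
  obtain ⟨p, hp⟩ := hr.exists_isPath
  cases p with
  | nil => exact hab rfl
  | @cons _ x _ hax p =>
    rw [SimpleGraph.Walk.cons_isPath_iff] at hp
    have hadj := hax
    rw [SimpleGraph.deleteEdges_adj] at hadj
    -- the first edge is not a bridge
    have h1 : (G.deleteEdges {s(a, x)}).Reachable x b := by
      rw [SimpleGraph.reachable_deleteEdges_iff_exists_walk]
      refine ⟨p.mapLe (SimpleGraph.deleteEdges_le _), ?_⟩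
      intro hmem
      rw [SimpleGraph.Walk.edges_mapLe_eq_edges] at hmem
      exact hp.2 (p.fst_mem_support_of_mem_edges hmem)
    have h2 : ∀ y ∈ C.support, (G.deleteEdges {s(a, x)}).Reachable v y := by
      intro y hy
      rw [SimpleGraph.reachable_deleteEdges_iff_exists_walk]
      exact ⟨C.takeUntil y hy, fun hmem => hadj.2 (C.edges_takeUntil_subset_edges hy hmem)⟩
    have h3 : (G.deleteEdges {s(a, x)}).Reachable a x :=
      ((h2 a ha).symm.trans (h2 b hb)).trans h1.symm
    have h4 : ¬ G.IsBridge s(a, x) := by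
      rw [SimpleGraph.isBridge_iff]; exact fun h => h h3
    rw [SimpleGraph.isBridge_iff_forall_cycle_notMem hadj.1] at h4
    push Not at h4
    obtain ⟨u, D, hD, hmem⟩ := h4
    exact hadj.2 ((huniq u D hD _).1 hmem)

lemma covered (C : G.Walk v v) (hconn : G.Connected) (u : V) :
    ∃ a ∈ C.support, (G.deleteEdges {e | e ∈ C.edges}).Reachable a u := by
  obtain ⟨p⟩ := hconn.preconnected v u
  suffices H : ∀ (a b : V) (p : G.Walk a b),
      (∃ c ∈ C.support, (G.deleteEdges {e | e ∈ C.edges}).Reachable c a) →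
      (∃ c ∈ C.support, (G.deleteEdges {e | e ∈ C.edges}).Reachable c b) from
    H v u p ⟨v, C.start_mem_support, SimpleGraph.Reachable.refl v⟩
  intro a b p
  induction p with
  | nil => exact id
  | @cons a x b hax p ih =>
    rintro ⟨c, hc, hr⟩
    apply ih
    by_cases hm : s(a, x) ∈ C.edges
    · exact ⟨x, C.snd_mem_support_of_mem_edges hm, SimpleGraph.Reachable.refl x⟩
    · refine ⟨c, hc, hr.trans (SimpleGraph.Adj.reachable ?_)⟩
      rw [SimpleGraph.deleteEdges_adj]
      exact ⟨hax, hm⟩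

lemma tree_of_type (H : SimpleGraph V) (w : V) (h : TypeI H w ∨ TypeII H w) :
    ∃ (s : Prop) (t : Fin 3 → V), t 0 = w ∧
      (∀ u, H.Reachable w u ↔ ∃ k, (k = 0 ∨ s) ∧ t k = u) ∧
      (∀ k l, (k = 0 ∨ s) → (l = 0 ∨ s) →
        (t k = t l → k = l) ∧ (H.Adj (t k) (t l) ↔ treeL k l = true)) := by
  have hsupp : ∀ u, u ∈ (H.connectedComponentMk w).supp ↔ H.Reachable w u := by
    intro u
    rw [SimpleGraph.ConnectedComponent.mem_supp_iff, SimpleGraph.ConnectedComponent.eq,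
      SimpleGraph.reachable_comm]
  rcases h with h | ⟨x, y, hxy, hvx, hvy, hs, a1, a2, a3⟩
  · refine ⟨False, fun _ => w, rfl, ?_, ?_⟩
    · intro u
      rw [← hsupp, h]
      simp [eq_comm]
    · rintro k l (rfl | h) (rfl | h') <;> simp_all [treeL]
  · refine ⟨True, ![w, x, y], rfl, ?_, ?_⟩
    · intro u
      rw [← hsupp, hs]
      simp [Fin.exists_fin_succ, eq_comm]
    · have b1 := a1.symm
      have b2 := a2.symm
      have b3 : ¬ H.Adj y w := fun h => a3 h.symm
      intro k l _ _
      fin_cases k <;> fin_cases l <;> 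
        simp [treeL, a1, a2, a3, b1, b2, b3, hxy, hvx, hvy, hxy.symm, hvx.symm, hvy.symm]

lemma exists_lab (hconn : G.Connected)
    (C : G.Walk v v) (hC : C.IsCycle) (hlen : C.length = 11)
    (huniq : ∀ (w : V) (D : G.Walk w w), D.IsCycle → ∀ e, e ∈ D.edges ↔ e ∈ C.edges)
    (htypes : ∀ w ∈ C.support,
      TypeI (G.deleteEdges {e | e ∈ C.edges}) w ∨
        TypeII (G.deleteEdges {e | e ∈ C.edges}) w) :
    ∃ (S : Fin 11 → Prop) (g : P → V), Lab G S g := by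
  have hedge := edges_iff C hlen
  have hsep := fun a b => separated C huniq (a := a) (b := b)
  have hcov := covered C hconn
  have hmem : ∀ i : Fin 11, C.getVert i.val ∈ C.support := fun i => C.getVert_mem_support _
  have hinj : ∀ i j : Fin 11, C.getVert i.val = C.getVert j.val → i = j := by
    intro i j hij
    refine Fin.ext (hC.getVert_injOn' ?_ ?_ hij)
    · have := i.isLt
      simp only [Set.mem_ofPred_eq]; omega
    · have := j.isLt
      simp only [Set.mem_ofPred_eq]; omega
  have hsurj : ∀ a ∈ C.support, ∃ i : Fin 11, C.getVert i.val = a := by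
    intro a ha
    obtain ⟨n, hn, hl⟩ := SimpleGraph.Walk.mem_support_iff_exists_getVert.1 ha
    rw [hlen] at hl
    by_cases h11 : n = 11
    · refine ⟨0, ?_⟩
      have h := C.getVert_length
      rw [hlen, ← h11, hn] at h
      rw [h]
      exact C.getVert_zero
    · exact ⟨⟨n, by omega⟩, hn⟩
  have hadjG : ∀ a b, G.Adj a b ↔
      s(a, b) ∈ C.edges ∨ (G.deleteEdges {e | e ∈ C.edges}).Adj a b := by
    intro a b
    rw [SimpleGraph.deleteEdges_adj]
    constructor
    · intro h
      by_cases hm : s(a, b) ∈ C.edges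
      · exact Or.inl hm
      · exact Or.inr ⟨h, hm⟩
    · rintro (h | h)
      · exact C.adj_of_mem_edges h
      · exact h.1
  generalize G.deleteEdges {e | e ∈ C.edges} = H at *
  choose S t ht0 htr htt using fun i : Fin 11 => tree_of_type H _ (htypes _ (hmem i))
  have key : ∀ i j k l, (k = 0 ∨ S i) → (l = 0 ∨ S j) → H.Reachable (t i k) (t j l) → i = j := by
    intro i j k l hk hl hr
    have h1 := (htr i (t i k)).2 ⟨k, hk, rfl⟩
    have h2 := (htr j (t j l)).2 ⟨l, hl, rfl⟩
    exact hinj _ _ (hsep _ _ (hmem i) (hmem j) ((h1.trans hr).trans h2.symm))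
  have key0 : ∀ i j k, (k = 0 ∨ S i) → t i k = C.getVert j.val → i = j ∧ k = 0 := by
    intro i j k hk hr
    rw [← ht0] at hr
    have hij := key i j k 0 hk (Or.inl rfl) (by rw [hr])
    subst hij
    exact ⟨rfl, (htt i k 0 hk (Or.inl rfl)).1 hr⟩
  refine ⟨S, fun a => t a.1 a.2, ?_, ?_, ?_⟩
  · rintro ⟨i, k⟩ ⟨j, l⟩ ha hb hab
    simp only [Valid] at ha hb hab
    have hij := key i j k l ha hb (by rw [hab])
    subst hij
    rw [(htt i k l ha hb).1 hab]
  · intro u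
    obtain ⟨a, ha, hr⟩ := hcov u
    obtain ⟨i, rfl⟩ := hsurj a ha
    obtain ⟨k, hk, rfl⟩ := (htr i u).1 hr
    exact ⟨(i, k), hk, rfl⟩
  · rintro ⟨i, k⟩ ⟨j, l⟩ ha hb
    simp only [Valid] at ha hb ⊢
    rw [hadjG, hedge]
    have e1 : (∃ m : Fin 11, s(t i k, t j l) = s(C.getVert m.val, C.getVert (m + 1).val)) ↔
        (k = 0 ∧ l = 0 ∧ (j = i + 1 ∨ i = j + 1)) := by
      constructor
      · rintro ⟨m, hm⟩
        rw [Sym2.eq_iff] at hm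
        rcases hm with ⟨h1, h2⟩ | ⟨h1, h2⟩
        · obtain ⟨rfl, rfl⟩ := key0 _ _ _ ha h1
          obtain ⟨rfl, rfl⟩ := key0 _ _ _ hb h2
          exact ⟨rfl, rfl, Or.inl rfl⟩
        · obtain ⟨rfl, rfl⟩ := key0 _ _ _ ha h1
          obtain ⟨rfl, rfl⟩ := key0 _ _ _ hb h2
          exact ⟨rfl, rfl, Or.inr rfl⟩
      · rintro ⟨rfl, rfl, rfl | rfl⟩
        · exact ⟨i, by rw [ht0, ht0]⟩
        · exact ⟨j, by rw [ht0, ht0, Sym2.eq_swap]⟩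
    have e2 : H.Adj (t i k) (t j l) ↔ (i = j ∧ treeL k l = true) := by
      constructor
      · intro h
        have hij := key i j k l ha hb h.reachable
        subst hij
        exact ⟨rfl, (htt i k l ha hb).2.1 h⟩
      · rintro ⟨rfl, h⟩
        exact (htt i k l ha hb).2.2 h
    rw [e1, e2]
    simp only [adjL, treeL, Bool.or_eq_true, Bool.and_eq_true, beq_iff_eq, and_assoc]

end

end Ind11

/-- A reduced well-indumatched unicyclic graph of girth `11`, all of whose rooted trees
`T_{v_i}` (components of `G − E(C)` rooted at the cycle vertices) are of Type (i) or
Type (ii), is the cycle `C₁₁`. -/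
theorem stmt_12 {V : Type*} [Fintype V] (G : SimpleGraph V)
    (hred : Reduced G) (hWIM : WellIndumatched G) (hconn : G.Connected)
    (hgirth : G.girth = 11)
    (v : V) (C : G.Walk v v) (hC : C.IsCycle) (hlen : C.length = 11)
    (huniq : ∀ (w : V) (D : G.Walk w w), D.IsCycle → ∀ e, e ∈ D.edges ↔ e ∈ C.edges)
    (htypes : ∀ w ∈ C.support,
      TypeI (G.deleteEdges {e | e ∈ C.edges}) w ∨
        TypeII (G.deleteEdges {e | e ∈ C.edges}) w) :
    Nonempty (G ≃g SimpleGraph.cycleGraph 11) := by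
  obtain ⟨S, g, h⟩ := Ind11.exists_lab hconn C hC hlen huniq htypes
  exact h.iso (h.empty hWIM)
end

section
/- There is no well-indumatched graph of girth 9, i.e., no well-indumatched graph whose shortest cycle has length 9. -/
open SimpleGraph

namespace Wim

variable {V : Type*} {G : SimpleGraph V}

/-- Two paths with the same ends and total length less than the girth coincide. -/
theorem path_eq (hg : G.girth = 9) {u v : V} (p q : G.Walk u v) (hp : p.IsPath) (hq : q.IsPath)
    (hl : p.length + q.length ≤ 8) : p = q := by
  classical
  by_contra hne
  let S : Finset (Sym2 V) := p.edges.toFinset ∪ q.edges.toFinset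
  let H : SimpleGraph V := SimpleGraph.fromEdgeSet (S : Set (Sym2 V))
  have hSG : ∀ e ∈ S, e ∈ G.edgeSet := by
    intro e he
    simp only [S, Finset.mem_union, List.mem_toFinset] at he
    rcases he with he | he
    · exact p.edges_subset_edgeSet he
    · exact q.edges_subset_edgeSet he
  have hHS : ∀ e, e ∈ S → e ∈ H.edgeSet := by
    intro e he
    simp only [H, SimpleGraph.edgeSet_fromEdgeSet]
    exact ⟨he, G.not_isDiag_of_mem_edgeSet (hSG e he)⟩
  have hSH : ∀ e, e ∈ H.edgeSet → e ∈ S := by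
    intro e he
    simp only [H, SimpleGraph.edgeSet_fromEdgeSet] at he
    exact he.1
  have hpH : ∀ e ∈ p.edges, e ∈ H.edgeSet := fun e he => hHS e (by simp [S, he])
  have hqH : ∀ e ∈ q.edges, e ∈ H.edgeSet := fun e he => hHS e (by simp [S, he])
  have hna : ¬ H.IsAcyclic := by
    intro ha
    have := (ha.subsingleton_path u v).elim ⟨p.transfer H hpH, hp.transfer hpH⟩
      ⟨q.transfer H hqH, hq.transfer hqH⟩
    have h2 : p.transfer H hpH = q.transfer H hqH := congrArg Subtype.val this
    apply hne
    have h3 := congrArg SimpleGraph.Walk.support h2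
    rw [SimpleGraph.Walk.support_transfer, SimpleGraph.Walk.support_transfer] at h3
    exact SimpleGraph.Walk.ext_support h3
  unfold SimpleGraph.IsAcyclic at hna
  push Not at hna
  obtain ⟨a, w, hw⟩ := hna
  have hwG : ∀ e ∈ w.edges, e ∈ G.edgeSet :=
    fun e he => hSG e (hSH e (w.edges_subset_edgeSet he))
  have h9 := SimpleGraph.girth_le_length (hw.transfer hwG)
  rw [SimpleGraph.Walk.length_transfer, hg] at h9
  have hc : w.edges.toFinset ⊆ S := by
    intro e he
    exact hSH e (w.edges_subset_edgeSet (List.mem_toFinset.mp he))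
  have h1 := Finset.card_le_card hc
  rw [List.toFinset_card_of_nodup hw.edges_nodup, SimpleGraph.Walk.length_edges] at h1
  have h2 : S.card ≤ p.length + q.length := by
    refine (Finset.card_union_le _ _).trans ?_
    refine Nat.add_le_add ?_ ?_
    · exact (List.toFinset_card_le _).trans (by simp)
    · exact (List.toFinset_card_le _).trans (by simp)
  omega

theorem exists_cyc (hg : G.girth = 9) : ∃ c : ZMod 9 → V, Function.Injective c ∧
    ∀ i, G.Adj (c i) (c (i + 1)) := by
  have hna : ¬ G.IsAcyclic := by
    intro h
    rw [← SimpleGraph.girth_eq_zero] at h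
    omega
  obtain ⟨a, w, hw, hl⟩ := SimpleGraph.exists_girth_eq_length.mpr hna
  have hl9 : w.length = 9 := by omega
  refine ⟨fun i => w.getVert i.val, ?_, ?_⟩
  · intro i j hij
    have hi := ZMod.val_lt i
    have hj := ZMod.val_lt j
    exact ZMod.val_injective 9 (hw.getVert_injOn' (by simp; omega) (by simp; omega) hij)
  · intro i
    have hi := ZMod.val_lt i
    have h := w.adj_getVert_succ (i := i.val) (by omega)
    by_cases h8 : i.val = 8
    · have : (i + 1).val = 0 := by
        clear h; revert h8; clear hi; revert i; decide
      simp only [this]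
      rw [h8] at h ⊢
      rw [SimpleGraph.Walk.getVert_zero]
      have h9 : w.getVert (8 + 1) = a := by
        have := w.getVert_length
        rwa [hl9] at this
      rwa [h9] at h
    · have : (i + 1).val = i.val + 1 := by
        clear h; revert h8; clear hi; revert i; decide
      simpa only [this] using h

section cyc
variable {c : ZMod 9 → V}

theorem arc_aux (hinj : Function.Injective c) (hadj : ∀ i, G.Adj (c i) (c (i + 1))) (i : ZMod 9)
    (n : ℕ) (hn : n ≤ 4) : ∃ p : G.Walk (c i) (c (i + n)), p.IsPath ∧ p.length = n ∧
      ∀ v ∈ p.support, ∃ m : ℕ, m ≤ n ∧ v = c (i + m) := by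
  induction n with
  | zero =>
    refine ⟨SimpleGraph.Walk.nil.copy rfl (by simp), by simp, by simp, ?_⟩
    intro v hv
    simp at hv
    exact ⟨0, le_rfl, by simpa using hv⟩
  | succ n ih =>
    obtain ⟨p, hp, hl, hs⟩ := ih (by omega)
    have h : G.Adj (c (i + n)) (c (i + (n + 1 : ℕ))) := by
      have := hadj (i + n)
      push_cast
      rwa [← add_assoc]
    refine ⟨p.concat h, ?_, by simp [hl], ?_⟩
    · refine hp.concat ?_ h
      intro hm
      obtain ⟨m, hm, he⟩ := hs _ hm
      have := add_left_cancel (hinj he)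
      rw [ZMod.natCast_eq_natCast_iff'] at this
      omega
    · intro v hv
      rw [SimpleGraph.Walk.support_concat, List.mem_append, List.mem_singleton] at hv
      rcases hv with hv | hv
      · obtain ⟨m, hm, he⟩ := hs _ hv
        exact ⟨m, by omega, he⟩
      · exact ⟨n + 1, le_rfl, hv⟩

theorem arc (hinj : Function.Injective c) (hadj : ∀ i, G.Adj (c i) (c (i + 1))) (i j : ZMod 9) :
    ∃ p : G.Walk (c i) (c j), p.IsPath ∧ p.length ≤ 4 ∧ (p.length = 1 → j = i + 1 ∨ i = j + 1) ∧
      ∀ v ∈ p.support, ∃ m, v = c m := by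
  have : ∃ n : ℕ, n ≤ 4 ∧ (j = i + n ∨ i = j + n) := by
    have : ∀ i j : ZMod 9, ∃ n : Fin 5, (j = i + (n.val : ℕ) ∨ i = j + (n.val : ℕ)) := by decide
    obtain ⟨n, hn⟩ := this i j
    exact ⟨n.val, by omega, hn⟩
  obtain ⟨n, hn, h | h⟩ := this
  · obtain ⟨p, hp, hl, hs⟩ := arc_aux hinj hadj i n hn
    subst h
    refine ⟨p, hp, by omega, ?_, fun v hv => ?_⟩
    · intro h1
      have : n = 1 := by omega
      subst this
      simp
    · obtain ⟨m, -, hm⟩ := hs v hv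
      exact ⟨_, hm⟩
  · obtain ⟨p, hp, hl, hs⟩ := arc_aux hinj hadj j n hn
    subst h
    refine ⟨p.reverse, hp.reverse, by simp; omega, ?_, fun v hv => ?_⟩
    · intro h1
      simp at h1
      have : n = 1 := by omega
      subst this
      simp
    · obtain ⟨m, -, hm⟩ := hs v (by simpa using hv)
      exact ⟨_, hm⟩

theorem no_ear (hg : G.girth = 9) (hinj : Function.Injective c)
    (hadj : ∀ i, G.Adj (c i) (c (i + 1))) {i j : ZMod 9} (q : G.Walk (c i) (c j)) (hq : q.IsPath)
    (hl : q.length ≤ 4) (x : V) (hx : x ∈ q.support) : ∃ m, x = c m := by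
  obtain ⟨p, hp, hpl, -, hs⟩ := arc hinj hadj i j
  have := path_eq hg p q hp hq (by omega)
  subst this
  exact hs x hx

theorem adj00 (hg : G.girth = 9) (hinj : Function.Injective c)
    (hadj : ∀ i, G.Adj (c i) (c (i + 1))) {i j : ZMod 9} (h : G.Adj (c i) (c j)) :
    j = i + 1 ∨ i = j + 1 := by
  obtain ⟨p, hp, hpl, h1, hs⟩ := arc hinj hadj i j
  have := path_eq hg p h.toWalk hp (by simp [h.ne]) (by simp; omega)
  subst this
  exact h1 (by simp)

theorem adj01 (hg : G.girth = 9) (hinj : Function.Injective c)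
    (hadj : ∀ i, G.Adj (c i) (c (i + 1))) {i j : ZMod 9} {x : V} (hx : ∀ m, x ≠ c m)
    (h1 : G.Adj (c i) x) (h2 : G.Adj (c j) x) : i = j := by
  by_contra hij
  have hc : c i ≠ c j := fun h => hij (hinj h)
  obtain ⟨m, hm⟩ := no_ear hg hinj hadj (.cons h1 (.cons h2.symm .nil))
    (by simp [hc, h1.ne, h2.ne', hx]) (by simp) x (by simp)
  exact hx m hm

theorem adj11 (hg : G.girth = 9) (hinj : Function.Injective c)
    (hadj : ∀ i, G.Adj (c i) (c (i + 1))) {i j : ZMod 9} {x y : V} (hx : ∀ m, x ≠ c m)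
    (hy : ∀ m, y ≠ c m) (h1 : G.Adj (c i) x) (h2 : G.Adj (c j) y) : ¬ G.Adj x y := by
  intro h
  by_cases hij : i = j
  · subst hij
    have := path_eq hg (.cons h1.symm (.cons h2 .nil)) (.cons h .nil)
      (by simp [h1.ne', h2.ne, h.ne]) (by simp [h.ne]) (by simp)
    have := congrArg SimpleGraph.Walk.length this
    simp at this
  have hc : c i ≠ c j := fun h => hij (hinj h)
  obtain ⟨m, hm⟩ := no_ear hg hinj hadj (.cons h1 (.cons h (.cons h2.symm .nil)))
    (by simp [hc, h1.ne, h2.ne', hx, hy, h.ne, fun m => (hy m).symm]) (by simp) x (by simp)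
  exact hx m hm

theorem uniq12 (hg : G.girth = 9) (hinj : Function.Injective c)
    (hadj : ∀ i, G.Adj (c i) (c (i + 1))) {i j : ZMod 9} {x x' y : V} (hx : ∀ m, x ≠ c m)
    (hx' : ∀ m, x' ≠ c m) (hy : ∀ m, y ≠ c m)
    (h1 : G.Adj (c i) x) (h2 : G.Adj (c j) x') (hxy : G.Adj x y) (hxy' : G.Adj x' y) : x = x' := by
  by_contra hne
  by_cases hij : i = j
  · subst hij
    have := path_eq hg (.cons h1.symm (.cons h2 .nil)) (.cons hxy (.cons hxy'.symm .nil))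
      (by simp [h1.ne', h2.ne, hne]) (by simp [hxy.ne, hxy'.ne', hne]) (by simp)
    have := congrArg SimpleGraph.Walk.support this
    simp at this
    exact hy i this.symm
  have hc : c i ≠ c j := fun h => hij (hinj h)
  obtain ⟨m, hm⟩ := no_ear hg hinj hadj
    (.cons h1 (.cons hxy (.cons hxy'.symm (.cons h2.symm .nil))))
    (by simp [hc, h1.ne, h2.ne', hx, hxy.ne, hxy'.ne', hne, hy, hx', fun m => (hy m).symm, fun m => (hx' m).symm])
    (by simp) x (by simp)
  exact hx m hm

end cyc
end Wim
namespace Wim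
variable {V : Type*} {G : SimpleGraph V}

/-- Two edges share an endpoint or have adjacent endpoints. -/
def Near (G : SimpleGraph V) (e f : Sym2 V) : Prop := ∃ u ∈ e, ∃ v ∈ f, u = v ∨ G.Adj u v

theorem Near.symm {e f : Sym2 V} (h : Near G e f) : Near G f e := by
  obtain ⟨u, hu, v, hv, h⟩ := h
  exact ⟨v, hv, u, hu, h.imp Eq.symm SimpleGraph.Adj.symm⟩

theorem Near.refl (e : Sym2 V) : Near G e e := by
  induction e with
  | _ a b => exact ⟨a, by simp, a, by simp, Or.inl rfl⟩

theorem im_iff {M : Set (Sym2 V)} : IsInducedMatching G M ↔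
    M ⊆ G.edgeSet ∧ ∀ e ∈ M, ∀ f ∈ M, e ≠ f → ¬ Near G e f := by
  unfold IsInducedMatching Near
  refine and_congr_right fun _ => forall₄_congr fun e he f hf => ?_
  push Not
  rfl

theorem exists_max [Finite V] {P : Set (Sym2 V)} (hP : IsInducedMatching G P) :
    ∃ M, P ⊆ M ∧ IsMaximalInducedMatching G M := by
  have hfin : {M : Set (Sym2 V) | IsInducedMatching G M}.Finite := Set.toFinite _
  obtain ⟨M, hPM, hM⟩ := hfin.exists_le_maximal hP
  refine ⟨M, hPM, hM.prop, fun N hN hMN => ?_⟩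
  exact (hM.le_of_ge hN hMN).antisymm hMN

theorem no_swap [Finite V] (hW : WellIndumatched G) {P Q : Set (Sym2 V)}
    (hP : IsInducedMatching G P) (hQ : IsInducedMatching G Q)
    (hN : ∀ f ∈ G.edgeSet, ∀ q ∈ Q, Near G f q → ∃ p ∈ P, Near G f p) :
    Q.ncard ≤ P.ncard := by
  obtain ⟨M, hPM, hM⟩ := exists_max hP
  have hMi := im_iff.mp hM.1
  have hQi := im_iff.mp hQ
  have key : ∀ f ∈ M \ P, ∀ q ∈ Q, ¬ Near G f q := by
    intro f hf q hq h
    obtain ⟨p, hp, hn⟩ := hN f (hMi.1 hf.1) q hq h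
    exact hMi.2 f hf.1 p (hPM hp) (fun h => hf.2 (h ▸ hp)) hn
  have hX : IsInducedMatching G (Q ∪ (M \ P)) := by
    rw [im_iff]
    refine ⟨Set.union_subset hQi.1 (Set.sdiff_subset.trans hMi.1), ?_⟩
    rintro e (he | he) f (hf | hf) hne
    · exact hQi.2 e he f hf hne
    · exact fun h => key f hf e he h.symm
    · exact key e he f hf
    · exact hMi.2 e he.1 f hf.1 hne
  obtain ⟨M', hXM, hM'⟩ := exists_max hX
  have h1 := hW M M' hM hM'
  have h2 := Set.ncard_le_ncard hXM (Set.toFinite _)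
  have hd : Disjoint Q (M \ P) := by
    rw [Set.disjoint_left]
    intro q hq hf
    exact key q hf q hq (Near.refl q)
  rw [Set.ncard_union_eq hd (Set.toFinite _) (Set.toFinite _)] at h2
  have h3 := Set.ncard_sdiff_add_ncard_of_subset hPM (Set.toFinite _)
  omega

/-- A reduced configuration: a `9`-cycle `c` inside a set `R` of vertices. -/
structure Cfg (G : SimpleGraph V) (R : Set V) (c : ZMod 9 → V) : Prop where
  hg : G.girth = 9
  inj : Function.Injective c
  adj : ∀ i, G.Adj (c i) (c (i + 1))
  mem : ∀ i, c i ∈ R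
  close : ∀ u ∈ R, ∀ v ∈ R, G.Adj u v →
    (∃ i, u = c i ∨ G.Adj (c i) u) ∨ (∃ i, v = c i ∨ G.Adj (c i) v)
  swap : ∀ P Q : Set (Sym2 V), IsInducedMatching G P → IsInducedMatching G Q →
    (∀ e ∈ P ∪ Q, ∀ u ∈ e, u ∈ R) →
    (∀ f ∈ G.edgeSet, (∀ u ∈ f, u ∈ R) → ∀ q ∈ Q, Near G f q → ∃ p ∈ P, Near G f p) →
    Q.ncard ≤ P.ncard

theorem Cfg.rot {R : Set V} {c : ZMod 9 → V} (h : Cfg G R c) (s : ZMod 9) :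
    Cfg G R (fun i => c (i + s)) where
  hg := h.hg
  inj := fun i j hij => add_right_cancel (h.inj hij)
  adj := fun i => by
    have := h.adj (i + s)
    rwa [add_right_comm] at this
  mem := fun i => h.mem _
  close := by
    intro u hu v hv huv
    rcases h.close u hu v hv huv with ⟨i, hi⟩ | ⟨i, hi⟩
    · exact Or.inl ⟨i - s, by simpa using hi⟩
    · exact Or.inr ⟨i - s, by simpa using hi⟩
  swap := h.swap

theorem exists_cfg [Finite V] (hg : G.girth = 9) (hW : WellIndumatched G) :
    ∃ R c, Cfg G R c := by
  obtain ⟨c, hinj, hadj⟩ := exists_cyc hg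
  let F : Set V := {v | ∀ i, v ≠ c i ∧ ¬ G.Adj (c i) v}
  have hfin : {M : Set (Sym2 V) | IsInducedMatching G M ∧ ∀ e ∈ M, ∀ u ∈ e, u ∈ F}.Finite :=
    Set.toFinite _
  obtain ⟨T, -, hT⟩ := hfin.exists_le_maximal (a := ∅) (by simp [IsInducedMatching])
  obtain ⟨hTi, hTF⟩ := hT.prop
  have hTn := im_iff.mp hTi
  let R : Set V := {v | ∀ t ∈ T, ∀ u ∈ t, v ≠ u ∧ ¬ G.Adj v u}
  have hRn : ∀ f : Sym2 V, (∀ u ∈ f, u ∈ R) ↔ ∀ t ∈ T, ¬ Near G f t := by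
    intro f
    constructor
    · rintro h t ht ⟨u, hu, v, hv, h'⟩
      have := h u hu t ht v hv
      tauto
    · intro h u hu t ht v hv
      have := h t ht
      unfold Near at this
      push Not at this
      exact this u hu v hv
  have hun : ∀ P : Set (Sym2 V), IsInducedMatching G P → (∀ e ∈ P, ∀ u ∈ e, u ∈ R) →
      IsInducedMatching G (P ∪ T) ∧ (P ∪ T).ncard = P.ncard + T.ncard := by
    intro P hP hPR
    have hPi := im_iff.mp hP
    constructor
    · rw [im_iff]
      refine ⟨Set.union_subset hPi.1 hTn.1, ?_⟩
      rintro e (he | he) f (hf | hf) hne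
      · exact hPi.2 e he f hf hne
      · exact (hRn e).mp (hPR e he) f hf
      · exact fun h => (hRn f).mp (hPR f hf) e he h.symm
      · exact hTn.2 e he f hf hne
    · apply Set.ncard_union_eq _ (Set.toFinite _) (Set.toFinite _)
      rw [Set.disjoint_left]
      intro e he ht
      exact (hRn e).mp (hPR e he) e ht (Near.refl e)
  refine ⟨R, c, hg, hinj, hadj, ?_, ?_, ?_⟩
  · intro i t ht u hu
    have := hTF t ht u hu i
    exact ⟨this.1.symm, this.2⟩
  · intro u hu v hv huv
    by_contra hcon
    push Not at hcon
    have hfR : ∀ w ∈ s(u, v), w ∈ R := by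
      intro w hw
      rcases Sym2.mem_iff.mp hw with rfl | rfl <;> assumption
    have hs : IsInducedMatching G {s(u, v)} := by
      rw [im_iff]
      refine ⟨by simpa using huv, ?_⟩
      rintro e rfl f rfl h
      exact absurd rfl h
    have hle := hT.le_of_ge (y := {s(u, v)} ∪ T) ⟨(hun _ hs (by rintro e rfl; exact hfR)).1, by
      rintro e (rfl | he)
      · intro w hw
        rcases Sym2.mem_iff.mp hw with rfl | rfl
        · exact hcon.1
        · exact hcon.2
      · exact hTF e he⟩ Set.subset_union_right
    have hmem : s(u, v) ∈ T := hle (Or.inl rfl)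
    exact (hRn _).mp hfR _ hmem (Near.refl _)
  · intro P Q hP hQ hR hN
    have h1 := hun P hP (fun e he => hR e (Or.inl he))
    have h2 := hun Q hQ (fun e he => hR e (Or.inr he))
    have := no_swap hW h1.1 h2.1 (by
      intro f hf q hq hn
      by_cases hfR : ∀ u ∈ f, u ∈ R
      · rcases hq with hq | hq
        · obtain ⟨p, hp, h⟩ := hN f hf hfR q hq hn
          exact ⟨p, Or.inl hp, h⟩
        · exact ⟨q, Or.inr hq, hn⟩
      · rw [hRn] at hfR
        push Not at hfR
        obtain ⟨t, ht, h⟩ := hfR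
        exact ⟨t, Or.inr ht, h⟩)
    omega

end Wim
namespace Wim
variable {V : Type*} {G : SimpleGraph V}

/-- `x` is a neighbour of `c i` outside the cycle. -/
def L1 (G : SimpleGraph V) (R : Set V) (c : ZMod 9 → V) (x : V) (i : ZMod 9) : Prop :=
  x ∈ R ∧ (∀ m, x ≠ c m) ∧ G.Adj (c i) x

/-- `y` is a neighbour of `x` other than `c i`, where `x` is a neighbour of `c i`
outside the cycle. -/
def L2 (G : SimpleGraph V) (R : Set V) (c : ZMod 9 → V) (x y : V) (i : ZMod 9) : Prop :=
  L1 G R c x i ∧ y ∈ R ∧ G.Adj x y ∧ y ≠ c i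

/-- The vertex `v` is at distance `a` from the cycle, closest to `c i`. -/
inductive Lev (G : SimpleGraph V) (R : Set V) (c : ZMod 9 → V) : V → ℕ → ZMod 9 → Prop
  | zero (i : ZMod 9) : Lev G R c (c i) 0 i
  | one (x : V) (i : ZMod 9) : L1 G R c x i → Lev G R c x 1 i
  | two (x y : V) (i : ZMod 9) : L2 G R c x y i → Lev G R c y 2 i

/-- Labels of equal or adjacent vertices. -/
def lnear (l m : ℕ × ZMod 9) : Prop :=
  (l.1 = m.1 ∧ l.2 = m.2) ∨ (l.1 = 0 ∧ m.1 = 0 ∧ (m.2 = l.2 + 1 ∨ l.2 = m.2 + 1)) ∨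
    (l.2 = m.2 ∧ (l.1 + 1 = m.1 ∨ m.1 + 1 = l.1))

instance (l m : ℕ × ZMod 9) : Decidable (lnear l m) := by unfold lnear; infer_instance

/-- First end of the symbolic edge. -/
def l1 (σ : ℕ × ZMod 9) : ℕ × ZMod 9 := (σ.1 - 1, σ.2)

/-- Second end of the symbolic edge. -/
def l2 (σ : ℕ × ZMod 9) : ℕ × ZMod 9 := (σ.1, if σ.1 = 0 then σ.2 + 1 else σ.2)

/-- Conflict of symbolic edges. -/
def snear (σ τ : ℕ × ZMod 9) : Prop :=
  lnear (l1 σ) (l1 τ) ∨ lnear (l1 σ) (l2 τ) ∨ lnear (l2 σ) (l1 τ) ∨ lnear (l2 σ) (l2 τ)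

instance (l m : ℕ × ZMod 9) : Decidable (snear l m) := by unfold snear; infer_instance

/-- All edges at `c j` are in conflict with `P`. -/
def dead (P : Finset (ℕ × ZMod 9)) (j : ZMod 9) : Prop :=
  ∃ τ ∈ P, lnear (l1 τ) (0, j) ∨ lnear (l2 τ) (0, j)

instance (P : Finset (ℕ × ZMod 9)) (j : ZMod 9) : Decidable (dead P j) := by
  unfold dead; infer_instance

/-- The combinatorial certificate. -/
def Chk (P Q : Finset (ℕ × ZMod 9)) (Dp Dn Sp Sn : Finset (ZMod 9)) : Prop :=
  (∀ σ ∈ P, σ.1 ≤ 2 ∧ (σ.1 = 1 → σ.2 ∈ Dp) ∧ (σ.1 = 2 → σ.2 ∈ Sp)) ∧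
  (∀ σ ∈ Q, σ.1 ≤ 2 ∧ (σ.1 = 1 → σ.2 ∈ Dp) ∧ (σ.1 = 2 → σ.2 ∈ Sp)) ∧
  (∀ σ ∈ P, ∀ τ ∈ P, σ ≠ τ → ¬ snear σ τ) ∧
  (∀ σ ∈ Q, ∀ τ ∈ Q, σ ≠ τ → ¬ snear σ τ) ∧
  (∀ σ ∈ Q, ∀ j, l1 σ = (0, j) ∨ l2 σ = (0, j) → j ∈ Sn) ∧
  (∀ j, (∃ σ ∈ Q, snear (0, j) σ) → dead P j ∨ dead P (j + 1)) ∧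
  (∀ j, (∃ σ ∈ Q, snear (1, j) σ) → dead P j ∨ j ∈ Dn) ∧
  (∀ j, (2, j) ∈ Q → ∃ τ ∈ P, l1 τ = (0, j) ∨ l2 τ = (0, j) ∨ τ = (2, j)) ∧
  P.card < Q.card

instance (P Q : Finset (ℕ × ZMod 9)) (Dp Dn Sp Sn : Finset (ZMod 9)) :
    Decidable (Chk P Q Dp Dn Sp Sn) := by
  unfold Chk
  repeat' first | infer_instance | apply instDecidableAnd

/-- `c i` has a neighbour outside the cycle. -/
def HasD (G : SimpleGraph V) (R : Set V) (c : ZMod 9 → V) (i : ZMod 9) : Prop :=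
  ∃ x, L1 G R c x i

/-- `c i` has a non-leaf neighbour outside the cycle. -/
def HasS (G : SimpleGraph V) (R : Set V) (c : ZMod 9 → V) (i : ZMod 9) : Prop :=
  ∃ x y, L2 G R c x y i

theorem snear_two (σ : ℕ × ZMod 9) (j : ZMod 9) (h : σ.1 ≤ 2) (hn : snear (2, j) σ) :
    l1 σ = (0, j) ∨ l2 σ = (0, j) ∨ σ = (2, j) := by
  obtain ⟨k, i⟩ := σ
  simp only at h
  revert hn
  have h' : k = 0 ∨ k = 1 ∨ k = 2 := by omega
  rcases h' with rfl | rfl | rfl <;> revert i j <;> decide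

section
variable {R : Set V} {c : ZMod 9 → V}

theorem L2.not_cyc (h : Cfg G R c) {x y : V} {i : ZMod 9} (hy : L2 G R c x y i) (m : ZMod 9) :
    y ≠ c m := by
  rintro rfl
  have := adj01 h.hg h.inj h.adj hy.1.2.1 hy.1.2.2 hy.2.2.1.symm
  subst this
  exact hy.2.2.2 rfl

theorem L2.not_adj (h : Cfg G R c) {x y : V} {i : ZMod 9} (hy : L2 G R c x y i) (m : ZMod 9) :
    ¬ G.Adj (c m) y := fun ha =>
  adj11 h.hg h.inj h.adj hy.1.2.1 (hy.not_cyc h) hy.1.2.2 ha hy.2.2.1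

theorem L2.uniq (h : Cfg G R c) {x x' y : V} {i j : ZMod 9} (hy : L2 G R c x y i)
    (hx' : L1 G R c x' j) (ha : G.Adj x' y) : x = x' :=
  uniq12 h.hg h.inj h.adj hy.1.2.1 hx'.2.1 (hy.not_cyc h) hy.1.2.2 hx'.2.2 hy.2.2.1 ha

theorem L1.uniq (h : Cfg G R c) {x : V} {i j : ZMod 9} (hx : L1 G R c x i)
    (hx' : L1 G R c x j) : i = j :=
  adj01 h.hg h.inj h.adj hx.2.1 hx.2.2 hx'.2.2

theorem lev_eq (h : Cfg G R c) {u : V} {a b : ℕ} {i j : ZMod 9} (hu : Lev G R c u a i)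
    (hv : Lev G R c u b j) : a = b ∧ i = j := by
  cases hu with
  | zero =>
    generalize hw : c i = w at hv
    cases hv with
    | zero => exact ⟨rfl, h.inj hw⟩
    | one _ _ h1 => exact absurd hw.symm (h1.2.1 i)
    | two x _ _ h2 => exact absurd hw.symm (h2.not_cyc h i)
  | one _ _ h1 =>
    cases hv with
    | zero => exact absurd rfl (h1.2.1 j)
    | one _ _ h1' => exact ⟨rfl, h1.uniq h h1'⟩
    | two x _ _ h2 => exact absurd h1.2.2 (h2.not_adj h i)
  | two x _ _ h2 =>
    cases hv with
    | zero => exact absurd rfl (h2.not_cyc h j)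
    | one _ _ h1' => exact absurd h1'.2.2 (h2.not_adj h j)
    | two x' _ _ h2' =>
      have := h2.uniq h h2'.1 h2'.2.2.1
      subst this
      exact ⟨rfl, h2.1.uniq h h2'.1⟩

theorem lev_adj (h : Cfg G R c) {u v : V} {a b : ℕ} {i j : ZMod 9} (hu : Lev G R c u a i)
    (hv : Lev G R c v b j) (ha : G.Adj u v) : (a = 0 ∧ b = 0 ∧ (j = i + 1 ∨ i = j + 1)) ∨
    (i = j ∧ (a + 1 = b ∨ b + 1 = a)) := by
  cases hu with
  | zero =>
    cases hv with
    | zero => exact Or.inl ⟨rfl, rfl, adj00 h.hg h.inj h.adj ha⟩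
    | one _ _ h1 => exact Or.inr ⟨h1.uniq (j := i) h ⟨h1.1, h1.2.1, ha⟩ |>.symm, by simp⟩
    | two x _ _ h2 => exact absurd ha (h2.not_adj h i)
  | one _ _ h1 =>
    cases hv with
    | zero => exact Or.inr ⟨h1.uniq (j := j) h ⟨h1.1, h1.2.1, ha.symm⟩, by simp⟩
    | one _ _ h1' => exact absurd ha (adj11 h.hg h.inj h.adj h1.2.1 h1'.2.1 h1.2.2 h1'.2.2)
    | two x _ _ h2 =>
      have := h2.uniq h h1 ha
      subst this
      exact Or.inr ⟨h1.uniq h h2.1, by simp⟩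
  | two x _ _ h2 =>
    cases hv with
    | zero => exact absurd ha.symm (h2.not_adj h j)
    | one _ _ h1' =>
      have := h2.uniq h h1' ha.symm
      subst this
      exact Or.inr ⟨h2.1.uniq h h1', by simp⟩
    | two x' _ _ h2' =>
      rcases h.close u h2.2.1 v h2'.2.1 ha with ⟨m, hm | hm⟩ | ⟨m, hm | hm⟩
      · exact absurd hm (h2.not_cyc h m)
      · exact absurd hm (h2.not_adj h m)
      · exact absurd hm (h2'.not_cyc h m)
      · exact absurd hm (h2'.not_adj h m)

theorem lev_near (h : Cfg G R c) {u v : V} {l m : ℕ × ZMod 9} (hu : Lev G R c u l.1 l.2)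
    (hv : Lev G R c v m.1 m.2) (ha : u = v ∨ G.Adj u v) : lnear l m := by
  rcases ha with rfl | ha
  · exact Or.inl (lev_eq h hu hv)
  · exact Or.inr (lev_adj h hu hv ha)

theorem near_snear (h : Cfg G R c) {u v u' v' : V} {σ τ : ℕ × ZMod 9}
    (hu : Lev G R c u (l1 σ).1 (l1 σ).2) (hv : Lev G R c v (l2 σ).1 (l2 σ).2)
    (hu' : Lev G R c u' (l1 τ).1 (l1 τ).2) (hv' : Lev G R c v' (l2 τ).1 (l2 τ).2)
    (hn : Near G s(u, v) s(u', v')) : snear σ τ := by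
  obtain ⟨a, ha, b, hb, hab⟩ := hn
  unfold snear
  rcases Sym2.mem_iff.mp ha with rfl | rfl <;> rcases Sym2.mem_iff.mp hb with rfl | rfl
  · exact Or.inl (lev_near h hu hu' hab)
  · exact Or.inr (Or.inl (lev_near h hu hv' hab))
  · exact Or.inr (Or.inr (Or.inl (lev_near h hv hu' hab)))
  · exact Or.inr (Or.inr (Or.inr (lev_near h hv hv' hab)))

theorem classify_aux (h : Cfg G R c) {u v : V} (hu : u ∈ R) (hv : v ∈ R) (ha : G.Adj u v)
    {i : ZMod 9} (hi : u = c i ∨ G.Adj (c i) u) : ∃ j, s(u, v) = s(c j, c (j + 1)) ∨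
      (∃ x, L1 G R c x j ∧ s(u, v) = s(c j, x)) ∨
      (∃ x y, L2 G R c x y j ∧ s(u, v) = s(x, y)) := by
  by_cases hC : ∃ k, u = c k
  · obtain ⟨k, rfl⟩ := hC
    by_cases hC' : ∃ m, v = c m
    · obtain ⟨m, rfl⟩ := hC'
      rcases adj00 h.hg h.inj h.adj ha with rfl | rfl
      · exact ⟨k, Or.inl rfl⟩
      · exact ⟨m, Or.inl Sym2.eq_swap⟩
    · push Not at hC'
      exact ⟨k, Or.inr (Or.inl ⟨v, ⟨hv, hC', ha⟩, rfl⟩)⟩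
  · push Not at hC
    have hi : G.Adj (c i) u := hi.resolve_left (hC i)
    by_cases hvi : v = c i
    · subst hvi
      exact ⟨i, Or.inr (Or.inl ⟨u, ⟨hu, hC, hi⟩, Sym2.eq_swap⟩)⟩
    · exact ⟨i, Or.inr (Or.inr ⟨u, v, ⟨⟨hu, hC, hi⟩, hv, ha, hvi⟩, rfl⟩)⟩

theorem classify (h : Cfg G R c) {f : Sym2 V} (hf : f ∈ G.edgeSet) (hR : ∀ u ∈ f, u ∈ R) :
    ∃ j, f = s(c j, c (j + 1)) ∨ (∃ x, L1 G R c x j ∧ f = s(c j, x)) ∨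
      (∃ x y, L2 G R c x y j ∧ f = s(x, y)) := by
  induction f with
  | _ u v =>
    have hu := hR u (by simp)
    have hv := hR v (by simp)
    have ha : G.Adj u v := hf
    rcases h.close u hu v hv ha with ⟨i, hi⟩ | ⟨i, hi⟩
    · exact classify_aux h hu hv ha hi
    · rw [Sym2.eq_swap]
      exact classify_aux h hv hu ha.symm hi

theorem cert (h : Cfg G R c) (P Q : Finset (ℕ × ZMod 9)) (Dp Dn Sp Sn : Finset (ZMod 9))
    (hc : Chk P Q Dp Dn Sp Sn) (hDp : ∀ i ∈ Dp, HasD G R c i) (hDn : ∀ i ∈ Dn, ¬ HasD G R c i)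
    (hSp : ∀ i ∈ Sp, HasS G R c i) (hSn : ∀ i ∈ Sn, ¬ HasS G R c i) : False := by
  classical
  have hex : ∀ i, ∃ x y, (HasD G R c i → L1 G R c x i) ∧ (HasS G R c i → L2 G R c x y i) := by
    intro i
    by_cases hS : HasS G R c i
    · obtain ⟨x, y, hxy⟩ := hS
      exact ⟨x, y, fun _ => hxy.1, fun _ => hxy⟩
    · by_cases hD : HasD G R c i
      · obtain ⟨x, hx⟩ := hD
        exact ⟨x, x, fun _ => hx, fun h => absurd h hS⟩
      · exact ⟨c i, c i, fun h => absurd h hD, fun h => absurd h hS⟩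
  choose p y hp hy using hex
  let g : ℕ × ZMod 9 → V := fun l => if l.1 = 0 then c l.2 else if l.1 = 1 then p l.2 else y l.2
  let E : ℕ × ZMod 9 → Sym2 V := fun σ => s(g (l1 σ), g (l2 σ))
  obtain ⟨c1, c2, c3, c4, c5, c6, c7, c8, c9⟩ := hc
  have hval : ∀ σ : ℕ × ZMod 9, (σ.1 ≤ 2 ∧ (σ.1 = 1 → σ.2 ∈ Dp) ∧ (σ.1 = 2 → σ.2 ∈ Sp)) →
      G.Adj (g (l1 σ)) (g (l2 σ)) ∧ Lev G R c (g (l1 σ)) (l1 σ).1 (l1 σ).2 ∧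
      Lev G R c (g (l2 σ)) (l2 σ).1 (l2 σ).2 ∧ g (l1 σ) ∈ R ∧ g (l2 σ) ∈ R := by
    rintro ⟨k, i⟩ ⟨hk, h1, h2⟩
    simp only at hk h1 h2
    have h' : k = 0 ∨ k = 1 ∨ k = 2 := by omega
    rcases h' with rfl | rfl | rfl
    · exact ⟨h.adj i, Lev.zero i, Lev.zero (i + 1), h.mem _, h.mem _⟩
    · have := hp i (hDp i (h1 rfl))
      exact ⟨this.2.2, Lev.zero i, Lev.one _ _ this, h.mem _, this.1⟩
    · have := hy i (hSp i (h2 rfl))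
      exact ⟨this.2.2.1, Lev.one _ _ this.1, Lev.two _ _ _ this, this.1.1, this.2.1⟩
  have hEn : ∀ A : Finset (ℕ × ZMod 9),
      (∀ σ ∈ A, σ.1 ≤ 2 ∧ (σ.1 = 1 → σ.2 ∈ Dp) ∧ (σ.1 = 2 → σ.2 ∈ Sp)) →
      (∀ σ ∈ A, ∀ τ ∈ A, σ ≠ τ → ¬ snear σ τ) →
      IsInducedMatching G (Set.image E (A : Set (ℕ × ZMod 9))) ∧
      (Set.image E (A : Set (ℕ × ZMod 9))).ncard = A.card := by
    intro A hA hn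
    have hnn : ∀ σ ∈ A, ∀ τ ∈ A, σ ≠ τ → ¬ Near G (E σ) (E τ) := by
      intro σ hσ τ hτ hne hN
      have v1 := hval σ (hA σ hσ)
      have v2 := hval τ (hA τ hτ)
      exact hn σ hσ τ hτ hne (near_snear h v1.2.1 v1.2.2.1 v2.2.1 v2.2.2.1 hN)
    constructor
    · rw [im_iff]
      constructor
      · rintro _ ⟨σ, hσ, rfl⟩
        exact (hval σ (hA σ hσ)).1
      · rintro _ ⟨σ, hσ, rfl⟩ _ ⟨τ, hτ, rfl⟩ hne
        exact hnn σ hσ τ hτ (fun h => hne (h ▸ rfl))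
    · rw [Set.InjOn.ncard_image, Set.ncard_coe_finset]
      intro σ hσ τ hτ he
      by_contra hne
      refine hnn σ hσ τ hτ hne ?_
      rw [he]
      exact Near.refl _
  obtain ⟨iP, nP⟩ := hEn P c1 c3
  obtain ⟨iQ, nQ⟩ := hEn Q c2 c4
  have hdead : ∀ j, dead P j → ∀ f : Sym2 V, c j ∈ f →
      ∃ e ∈ Set.image E (P : Set (ℕ × ZMod 9)), Near G f e := by
    rintro j ⟨τ, hτ, hn⟩ f hf
    have v := hval τ (c1 τ hτ)
    have aux : ∀ l : ℕ × ZMod 9, Lev G R c (g l) l.1 l.2 → lnear l (0, j) →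
        c j = g l ∨ G.Adj (c j) (g l) := by
      rintro ⟨a, i⟩ hl hn
      simp only at hl
      generalize g (a, i) = w at hl
      rcases hn with ⟨ha, hi⟩ | ⟨ha, -, hi⟩ | ⟨hi, ha⟩
      · simp only at ha hi
        subst ha hi
        cases hl
        exact Or.inl rfl
      · simp only at ha hi
        subst ha
        cases hl
        rcases hi with rfl | rfl
        · exact Or.inr (h.adj _).symm
        · exact Or.inr (h.adj _)
      · simp only at ha hi
        subst hi
        have ha : a = 1 := by omega
        subst ha
        cases hl with
        | one _ _ h1 => exact Or.inr h1.2.2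
    refine ⟨E τ, ⟨τ, hτ, rfl⟩, c j, hf, ?_⟩
    rcases hn with hn | hn
    · exact ⟨_, by simp [E], aux _ v.2.1 hn⟩
    · exact ⟨_, by simp [E], aux _ v.2.2.1 hn⟩
  have := h.swap _ _ iP iQ (by
    rintro e (⟨σ, hσ, rfl⟩ | ⟨σ, hσ, rfl⟩) u hu
    · have v := hval σ (c1 σ hσ)
      rcases Sym2.mem_iff.mp hu with rfl | rfl
      · exact v.2.2.2.1
      · exact v.2.2.2.2
    · have v := hval σ (c2 σ hσ)
      rcases Sym2.mem_iff.mp hu with rfl | rfl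
      · exact v.2.2.2.1
      · exact v.2.2.2.2) (by
    rintro f hf hfR _ ⟨σ, hσ, rfl⟩ hn
    have v := hval σ (c2 σ hσ)
    obtain ⟨j, rfl | ⟨x, hx, rfl⟩ | ⟨x, z, hx, rfl⟩⟩ := classify h hf hfR
    · have hs : snear (0, j) σ :=
        near_snear h (Lev.zero j) (Lev.zero (j + 1)) v.2.1 v.2.2.1 hn
      rcases c6 j ⟨σ, hσ, hs⟩ with hd | hd
      · exact hdead _ hd _ (by simp)
      · exact hdead _ hd _ (by simp)
    · have hs : snear (1, j) σ :=
        near_snear h (Lev.zero j) (Lev.one x j hx) v.2.1 v.2.2.1 hn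
      rcases c7 j ⟨σ, hσ, hs⟩ with hd | hd
      · exact hdead _ hd _ (by simp)
      · exact absurd ⟨x, hx⟩ (hDn j hd)
    · have hs : snear (2, j) σ :=
        near_snear h (Lev.one x j hx.1) (Lev.two x z j hx) v.2.1 v.2.2.1 hn
      have hSj : HasS G R c j := ⟨x, z, hx⟩
      rcases snear_two σ j (c2 σ hσ).1 hs with hl | hl | rfl
      · exact absurd hSj (hSn j (c5 σ hσ j (Or.inl hl)))
      · exact absurd hSj (hSn j (c5 σ hσ j (Or.inr hl)))
      have hL : L2 G R c (p j) (y j) j := hy j hSj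
      have hxp : x = p j := by
        obtain ⟨a, ha, b, hb, hab⟩ := hn
        have hb : b ∈ s(p j, y j) := hb
        rcases Sym2.mem_iff.mp ha with rfl | rfl <;> rcases Sym2.mem_iff.mp hb with rfl | rfl <;>
          rcases hab with hab | hab
        · exact hab
        · exact absurd hab
            (adj11 h.hg h.inj h.adj hx.1.2.1 hL.1.2.1 hx.1.2.2 hL.1.2.2)
        · exact absurd hx.1.2.2 (hab ▸ hL.not_adj h j)
        · exact (hL.uniq h hx.1 hab).symm
        · exact absurd hL.1.2.2 (hab ▸ hx.not_adj h j)
        · exact hx.uniq h hL.1 hab.symm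
        · exact hx.uniq h hL.1 (hab ▸ hL.2.2.1)
        · have := lev_adj h (Lev.two _ _ _ hx) (Lev.two _ _ _ hL) hab
          omega
      obtain ⟨τ, hτ, ht⟩ := c8 j hσ
      refine ⟨E τ, ⟨τ, hτ, rfl⟩, x, by simp, ?_⟩
      rcases ht with ht | ht | rfl
      · exact ⟨g (l1 τ), by simp [E], Or.inr (by rw [ht]; exact hx.1.2.2.symm)⟩
      · exact ⟨g (l2 τ), by simp [E], Or.inr (by rw [ht]; exact hx.1.2.2.symm)⟩
      · exact ⟨p j, Sym2.mem_mk_left _ _, Or.inl hxp⟩)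
  omega

theorem HasS.hasD {i : ZMod 9} (h : HasS G R c i) : HasD G R c i := by
  obtain ⟨x, y, hx⟩ := h
  exact ⟨x, hx.1⟩

theorem hasS_rot (s i : ZMod 9) :
    HasS G R (fun k => c (k + s)) i ↔ HasS G R c (i + s) := by
  have : ∀ x : V, (∀ m, x ≠ c (m + s)) ↔ ∀ m, x ≠ c m := fun x =>
    ⟨fun h m => by simpa using h (m - s), fun h m => h _⟩
  simp only [HasS, L2, L1, this]

theorem hasD_rot (s i : ZMod 9) :
    HasD G R (fun k => c (k + s)) i ↔ HasD G R c (i + s) := by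
  have : ∀ x : V, (∀ m, x ≠ c (m + s)) ↔ ∀ m, x ≠ c m := fun x =>
    ⟨fun h m => by simpa using h (m - s), fun h m => h _⟩
  simp only [HasD, L1, this]

/-- Adjacent branching vertices. -/
theorem no_adj (h : Cfg G R c) (i : ZMod 9) (h0 : HasS G R c i) (h1 : HasS G R c (i + 1)) :
    False := by
  have h0' := (hasS_rot (G := G) (R := R) (c := c) i 0).mpr (by simpa using h0)
  have h1' := (hasS_rot (G := G) (R := R) (c := c) i 1).mpr (by rwa [add_comm])
  refine cert (h.rot i) {(0, 0)} {(2, 0), (2, 1)} ∅ ∅ {0, 1} ∅ (by decide +kernel) ?_ ?_ ?_ ?_ <;>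
    simp [*]

/-- No branching vertex. -/
theorem no_empty (h : Cfg G R c) (hS : ∀ i, ¬ HasS G R c i) : False := by
  by_cases h7 : ∀ i, HasD G R c i
  · refine cert h {(0, 0), (0, 3), (0, 6)} {(1, 0), (1, 2), (1, 4), (1, 6)} {0, 2, 4, 6} ∅ ∅
      Finset.univ (by decide +kernel) ?_ ?_ ?_ ?_ <;> simp [*]
  · push Not at h7
    obtain ⟨i, hi⟩ := h7
    have hi' := (hasD_rot (G := G) (R := R) (c := c) (i - 7) 7).not.mpr (by simpa using hi)
    have hS' := fun j => (hasS_rot (G := G) (R := R) (c := c) (i - 7) j).not.mpr (hS _)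
    refine cert (h.rot (i - 7)) {(0, 0), (0, 4)} {(0, 0), (0, 3), (0, 6)} ∅ {7} ∅
      Finset.univ (by decide +kernel) ?_ ?_ ?_ ?_ <;> simp [*]

/-- A branching vertex followed by at least two non-branching ones. -/
theorem no_gap (h : Cfg G R c) (h0 : HasS G R c 0) (h1 : ¬ HasS G R c 1) (h2 : ¬ HasS G R c 2) :
    False := by
  by_cases h3 : HasS G R c 3
  · refine cert h {(0, 0), (2, 3)} {(2, 0), (0, 1), (2, 3)} ∅ ∅ {0, 3} {1, 2}
      (by decide +kernel) ?_ ?_ ?_ ?_ <;> simp [*]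
  by_cases h4 : HasS G R c 4
  · by_cases d3 : HasD G R c 3
    · by_cases d1 : HasD G R c 1
      · refine cert h {(2, 0), (0, 1), (2, 4)} {(2, 0), (1, 1), (1, 3), (2, 4)} {1, 3} ∅ {0, 4}
          {1, 3} (by decide +kernel) ?_ ?_ ?_ ?_ <;> simp [*]
      · refine cert h {(0, 3), (2, 0)} {(2, 4), (0, 1), (2, 0)} ∅ {1} {0, 4} {1, 2}
          (by decide +kernel) ?_ ?_ ?_ ?_ <;> simp [*]
    · refine cert h {(0, 0), (2, 4)} {(2, 0), (0, 2), (2, 4)} ∅ {3} {0, 4} {2, 3}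
        (by decide +kernel) ?_ ?_ ?_ ?_ <;> simp [*]
  by_cases h5 : HasS G R c 5
  · refine cert h {(0, 0), (0, 4)} {(2, 0), (2, 5), (0, 2)} ∅ ∅ {0, 5} {2, 3}
      (by decide +kernel) ?_ ?_ ?_ ?_ <;> simp [*]
  by_cases h6 : HasS G R c 6
  · by_cases d3 : HasD G R c 3
    · refine cert h {(0, 0), (0, 5), (1, 3)} {(2, 0), (2, 6), (0, 1), (0, 4)} {3} ∅ {0, 6}
        {1, 2, 4, 5} (by decide +kernel) ?_ ?_ ?_ ?_ <;> simp [*]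
    · refine cert h {(0, 0), (0, 5)} {(2, 0), (2, 6), (0, 1), (0, 4)} ∅ {3} {0, 6}
        {1, 2, 4, 5} (by decide +kernel) ?_ ?_ ?_ ?_ <;> simp [*]
  by_cases h7 : HasS G R c 7
  · refine cert h {(0, 0), (0, 6), (0, 3)} {(2, 0), (2, 7), (0, 1), (0, 4)} ∅ ∅ {0, 7}
      {1, 2, 4, 5} (by decide +kernel) ?_ ?_ ?_ ?_ <;> simp [*]
  by_cases h8 : HasS G R c 8
  · exact no_adj h 8 h8 h0
  by_cases d7 : HasD G R c 7
  · refine cert h {(0, 0), (0, 4), (1, 7)} {(2, 0), (0, 1), (0, 4), (0, 7)} {7} ∅ {0}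
      {1, 2, 4, 5, 7, 8} (by decide +kernel) ?_ ?_ ?_ ?_ <;> simp [*]
  · refine cert h {(0, 0), (0, 4)} {(2, 0), (0, 1), (0, 4), (0, 7)} ∅ {7} {0}
      {1, 2, 4, 5, 7, 8} (by decide +kernel) ?_ ?_ ?_ ?_ <;> simp [*]

theorem no_cfg (h : Cfg G R c) : False := by
  have step : ∀ i, HasS G R c i → HasS G R c (i + 2) := by
    intro i hi
    by_contra h2
    have h1 : ¬ HasS G R c (i + 1) := fun h1 => no_adj h i hi h1
    refine no_gap (h.rot i) ?_ ?_ ?_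
    · rw [hasS_rot]; simpa using hi
    · rw [hasS_rot, add_comm]; exact h1
    · rw [hasS_rot, add_comm]; exact h2
  refine no_empty h fun i hi => no_adj h i hi ?_
  have := step _ (step _ (step _ (step _ (step _ hi))))
  have e : i + 2 + 2 + 2 + 2 + 2 = i + 1 := by clear this hi; revert i; decide
  rwa [e] at this

end
end Wim

/-- There is no well-indumatched graph of girth `9`. -/
theorem stmt_13 {V : Type*} [Fintype V] (G : SimpleGraph V) (hgirth : G.girth = 9) :
    ¬ WellIndumatched G := by
  intro hW
  obtain ⟨R, c, h⟩ := Wim.exists_cfg hgirth hW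
  exact Wim.no_cfg h
end
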